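/- Let n ≥ 1 be an integer such that O_{n²+4} is a maximal order (i.e., n² + 4 is a fundamental discriminant, meaning O_{n²+4} equals the full ring of integers of the real quadratic field ℚ(√(n²+4))). Then the class number h_{n²+4} equals 1 if and only if n ∈ {1, 2, 3, 5, 7, 13, 17}, i.e., if and only if n² + 4 ∈ {5, 8, 13, 29, 53, 173, 293}. -/

import Mathlib

noncomputable section

/-- A complex square root of an integer `d`. -/
def sqrtD (d : ℤ) : ℂ :=
  if 0 ≤ d then ((Real.sqrt d : ℝ) : ℂ) else Complex.I * ((Real.sqrt (-d) : ℝ) : ℂ)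

/-- The element `(Δ + √Δ)/2` generating the quadratic order of discriminant `Δ`. -/
def omegaD (d : ℤ) : ℂ := ((d : ℂ) + sqrtD d) / 2

/-- The quadratic order `O_Δ = ℤ[(Δ + √Δ)/2]` of discriminant `Δ`, as a subring of `ℂ`. -/
def QOrder (d : ℤ) : Subring ℂ := Subring.closure {omegaD d}

/-- The class number `h_Δ`: the order of the (wide) class group of `O_Δ`,
the group of invertible fractional ideals modulo principal fractional ideals. -/
def classNumber (d : ℤ) : ℕ := Nat.card (ClassGroup (QOrder d))

/-- `O_Δ` is a maximal order: every element of `ℚ(√Δ)` (the subfield of `ℂ` generated by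
`(Δ+√Δ)/2`) that is integral over `ℤ` already lies in `O_Δ`. -/
def IsMaximalOrder (d : ℤ) : Prop :=
  ∀ x ∈ Subfield.closure {omegaD d}, IsIntegral ℤ x → x ∈ QOrder d

section

open MeasureTheory Set Filter Topology

noncomputable section

/-- The integral `∫ exp(-s(e^v+e^{-v}))`. -/
def besselW (s : ℝ) : ℝ := ∫ v : ℝ, Real.exp (-(s * Real.exp v + s * Real.exp (-v)))

lemma integrable_tsum_aux {ι : Type*} [Countable ι] {F : ι → ℝ → ℝ}
    (h1 : ∀ i, Integrable (F i)) (h2 : Summable fun i => ∫ a, ‖F i a‖) :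
    Integrable (fun a => ∑' i, F i a) := by
  refine ⟨?_, ?_⟩
  · exact (AEMeasurable.tsum (fun i => (h1 i).1.aemeasurable)).aestronglyMeasurable
  · unfold HasFiniteIntegral
    calc ∫⁻ a, ‖∑' i, F i a‖ₑ ≤ ∫⁻ a, ∑' i, ‖F i a‖ₑ :=
          lintegral_mono fun a => enorm_tsum_le_tsum_enorm
      _ = ∑' i, ∫⁻ a, ‖F i a‖ₑ := lintegral_tsum fun i => (h1 i).1.enorm
      _ = ∑' i, ENNReal.ofReal (∫ a, ‖F i a‖) := by
          congr 1; ext i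
          rw [ofReal_integral_norm_eq_lintegral_enorm (h1 i)]
      _ < ⊤ := by
          rw [← ENNReal.ofReal_tsum_of_nonneg (fun i => integral_nonneg fun a => norm_nonneg _) h2]
          exact ENNReal.ofReal_lt_top

lemma exp_add_exp_neg_ge (v : ℝ) : 2 + v ^ 2 ≤ Real.exp v + Real.exp (-v) := by
  have key : ∀ u : ℝ, 0 ≤ u → 2 + u ^ 2 ≤ Real.exp u + Real.exp (-u) := by
    intro u hu
    have h := Real.self_le_sinh_iff.2 (show 0 ≤ u / 2 by positivity)
    have e1 : Real.exp u = Real.exp (u/2) ^ 2 := by rw [← Real.exp_nat_mul]; congr 1; push_cast; ring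
    have e2 : Real.exp (-u) = Real.exp (-(u/2)) ^ 2 := by
      rw [← Real.exp_nat_mul]; congr 1; push_cast; ring
    have e3 : Real.exp (u/2) * Real.exp (-(u/2)) = 1 := by rw [← Real.exp_add]; simp
    rw [Real.sinh_eq] at h
    rw [e1, e2]
    nlinarith
  rcases le_total 0 v with h | h
  · exact key v h
  · have := key (-v) (by linarith)
    simp only [neg_neg] at this
    nlinarith

lemma besselW_bound_ptwise {s : ℝ} (hs : 0 < s) (v : ℝ) :
    Real.exp (-(s * Real.exp v + s * Real.exp (-v))) ≤ Real.exp (-2*s) * Real.exp (-s * v ^ 2) := by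
  rw [← Real.exp_add]
  apply Real.exp_le_exp.2
  nlinarith [exp_add_exp_neg_ge v]

lemma besselW_integrable {s : ℝ} (hs : 0 < s) :
    Integrable fun v : ℝ => Real.exp (-(s * Real.exp v + s * Real.exp (-v))) := by
  refine Integrable.mono' ((integrable_exp_neg_mul_sq hs).const_mul (Real.exp (-2*s))) ?_ ?_
  · exact (by fun_prop : Continuous _).aestronglyMeasurable
  · refine Eventually.of_forall fun v => ?_
    rw [Real.norm_of_nonneg (Real.exp_pos _).le]
    exact besselW_bound_ptwise hs v

lemma besselW_nonneg (s : ℝ) : 0 ≤ besselW s := integral_nonneg fun _ => (Real.exp_pos _).le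

lemma besselW_le {s : ℝ} (hs : 0 < s) : besselW s ≤ Real.exp (-2*s) * √(Real.pi / s) := by
  unfold besselW
  rw [← integral_gaussian s, ← integral_const_mul]
  exact integral_mono (besselW_integrable hs)
    ((integrable_exp_neg_mul_sq hs).const_mul (Real.exp (-2*s))) (besselW_bound_ptwise hs)

lemma besselW_le' {t : ℝ} (ht : 0 < t) {N : ℕ} (hN : 1 ≤ N) :
    besselW (t * √N) ≤ (√(Real.pi / t) * 24 / t ^ 4) / (N:ℝ) ^ 2 := by
  have hN' : (1:ℝ) ≤ N := by exact_mod_cast hN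
  have h1 : (1:ℝ) ≤ √N := by rw [Real.one_le_sqrt]; exact hN'
  set s := t * √N with hs
  have hst : t ≤ s := by rw [hs]; nlinarith
  have hs0 : 0 < s := by linarith
  refine (besselW_le hs0).trans ?_
  have e1 : √(Real.pi / s) ≤ √(Real.pi / t) := by
    apply Real.sqrt_le_sqrt
    apply div_le_div_of_nonneg_left Real.pi_pos.le ht hst
  have e2 : Real.exp (-2*s) ≤ 24 / s ^ 4 := by
    have h := Real.pow_div_factorial_le_exp (x := 2*s) (by positivity) 4
    have h2 : s ^ 4 / 24 ≤ Real.exp (2 * s) := by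
      refine le_trans ?_ h
      simp [Nat.factorial]
      nlinarith [pow_pos hs0 4]
    rw [show -2 * s = -(2*s) by ring, Real.exp_neg]
    rw [inv_le_comm₀ (Real.exp_pos _) (by positivity)]
    rw [inv_div]; exact h2
  have e3 : s ^ 4 = t ^ 4 * (N:ℝ)^2 := by
    rw [hs, mul_pow]
    rw [show (√(N:ℝ)) ^ 4 = ((√(N:ℝ))^2)^2 by ring, Real.sq_sqrt (by positivity)]
  calc Real.exp (-2*s) * √(Real.pi / s) ≤ (24 / s ^ 4) * √(Real.pi / t) := by gcongr
    _ = _ := by rw [e3]; field_simp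

lemma shift_aux {t α β : ℝ} {N : ℕ} (hα : 0 < α) (hβ : 0 < β) (hN : α * β = N) (u : ℝ) :
    α * (t * Real.exp (u + Real.log (β/α) / 2)) + β * (t * Real.exp (-(u + Real.log (β/α) / 2))) =
      (t * √N) * Real.exp u + (t * √N) * Real.exp (-u) := by
  have hr : 0 < β / α := by positivity
  have e1 : Real.exp (Real.log (β/α)/2) = √(β/α) := by
    rw [Real.sqrt_eq_rpow, Real.rpow_def_of_pos hr]; congr 1; ring
  have h1 : α * √(β/α) = √N := by
    rw [← hN]
    symm
    rw [Real.sqrt_eq_iff_mul_self_eq (by positivity) (by positivity)]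
    symm
    calc (α * √(β/α)) * (α * √(β/α)) = α^2 * (√(β/α) * √(β/α)) := by ring
      _ = α * β := by rw [Real.mul_self_sqrt hr.le]; field_simp
  have h2 : β * (√(β/α))⁻¹ = √N := by
    rw [← h1]
    have : √(β/α) * √(β/α) = β/α := Real.mul_self_sqrt hr.le
    have h0 : 0 < √(β/α) := Real.sqrt_pos.2 hr
    rw [mul_inv_eq_iff_eq_mul₀ h0.ne', mul_assoc, this]
    field_simp
  rw [neg_add, Real.exp_add, Real.exp_add, Real.exp_neg (Real.log (β/α)/2), e1]
  linear_combination (t * Real.exp u) * h1 + (t * Real.exp (-u)) * h2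

lemma term_integral {t α β : ℝ} {N : ℕ} (ht : 0 < t) (hα : 0 < α) (hβ : 0 < β) (hN : α * β = N) :
    Integrable (fun v => Real.exp (-(α * (t * Real.exp v) + β * (t * Real.exp (-v))))) ∧
    ∫ v, Real.exp (-(α * (t * Real.exp v) + β * (t * Real.exp (-v)))) = besselW (t * √N) := by
  set F := fun v => Real.exp (-(α * (t * Real.exp v) + β * (t * Real.exp (-v)))) with hF
  have hN0 : (0:ℝ) < N := by rw [← hN]; positivity
  have hs : 0 < t * √N := by positivity
  have e : (fun u => F (u + Real.log (β/α) / 2)) =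
      fun u => Real.exp (-((t * √N) * Real.exp u + (t * √N) * Real.exp (-u))) := by
    ext u; simp only [hF]; rw [shift_aux hα hβ hN]
  constructor
  · have := (besselW_integrable hs)
    rw [← e] at this
    have h2 := this.comp_add_right (-(Real.log (β/α) / 2))
    simpa using h2
  · unfold besselW
    rw [← e, integral_add_right_eq_self F]

theorem swap_sum {ι : Type*} [Countable ι] (c α β : ι → ℝ) (N : ι → ℕ) {t : ℝ} (ht : 0 < t)
    (hp : ∀ i, c i ≠ 0 → 0 < α i ∧ 0 < β i ∧ α i * β i = N i)
    (hs : Summable fun i => |c i| * besselW (t * √(N i))) :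
    Integrable (fun v => ∑' i, c i * Real.exp (-(α i * (t * Real.exp v) + β i * (t * Real.exp (-v)))))
    ∧ ∫ v, (∑' i, c i * Real.exp (-(α i * (t * Real.exp v) + β i * (t * Real.exp (-v))))) =
      ∑' i, c i * besselW (t * √(N i)) := by
  have h1 : ∀ i, Integrable fun v =>
      c i * Real.exp (-(α i * (t * Real.exp v) + β i * (t * Real.exp (-v)))) := by
    intro i
    by_cases hc : c i = 0
    · simp [hc]
    · obtain ⟨a, b, h⟩ := hp i hc
      exact (term_integral ht a b h).1.const_mul _
  have h3 : ∀ i, ∫ v, c i * Real.exp (-(α i * (t * Real.exp v) + β i * (t * Real.exp (-v)))) =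
      c i * besselW (t * √(N i)) := by
    intro i
    by_cases hc : c i = 0
    · simp [hc]
    · obtain ⟨a, b, h⟩ := hp i hc
      rw [integral_const_mul, (term_integral ht a b h).2]
  have h2 : Summable fun i => ∫ v,
      ‖c i * Real.exp (-(α i * (t * Real.exp v) + β i * (t * Real.exp (-v))))‖ := by
    refine hs.congr fun i => ?_
    by_cases hc : c i = 0
    · simp [hc]
    · obtain ⟨a, b, h⟩ := hp i hc
      simp_rw [norm_mul, Real.norm_eq_abs, Real.abs_exp]
      rw [integral_const_mul, (term_integral ht a b h).2]
  refine ⟨integrable_tsum_aux h1 h2, ?_⟩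
  rw [← (hasSum_integral_of_summable_integral_norm h1 h2).tsum_eq]
  exact tsum_congr h3

end

end

section

open MeasureTheory Set Filter Topology

noncomputable section

/-- The fundamental unit `(n+√(n²+4))/2`. -/
def epsU (n : ℕ) : ℝ := ((n:ℝ) + √((n:ℝ)^2+4)) / 2

lemma epsU_pos (n : ℕ) : 0 < epsU n := by unfold epsU; positivity

lemma epsU_sq (n : ℕ) : epsU n ^ 2 = n * epsU n + 1 := by
  have h := Real.sq_sqrt (show (0:ℝ) ≤ (n:ℝ)^2+4 by positivity)
  unfold epsU
  nlinarith

lemma epsU_inv (n : ℕ) : (epsU n)⁻¹ = epsU n - n := by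
  have h := epsU_sq n
  have h0 := epsU_pos n
  field_simp
  nlinarith

lemma n_lt_epsU (n : ℕ) : (n:ℝ) < epsU n := by
  have := epsU_inv n
  have h : 0 < (epsU n)⁻¹ := inv_pos.2 (epsU_pos n)
  linarith

/-- The norm form as an integer. -/
def Qf (n : ℕ) (x y : ℤ) : ℤ := x ^ 2 + n * x * y - y ^ 2

/-- The sum over pairs `(m,k)`. -/
def Gfun (f : ℤ → ℝ) (χ : ℕ → ℝ) (x y : ℝ) : ℝ :=
  ∑' p : ℕ × ℕ, (f (p.1 * p.2) * χ p.2) * Real.exp (-(p.1 * x + p.2 * y))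

/-- The sum over the cone. -/
def Ffun (n : ℕ) (f : ℤ → ℝ) (x y : ℝ) : ℝ :=
  ∑' p : ℕ × ℕ, (if p.2 < n * p.1 then f (Qf n p.1 p.2) else 0) *
    Real.exp (-((p.1 * (epsU n)⁻¹ + p.2) * x + (p.1 * epsU n - p.2) * y))

lemma summ_two : Summable fun p : ℕ × ℕ => (1 / (p.1:ℝ)^2) * (1 / (p.2:ℝ)^2) := by
  have h : Summable fun m : ℕ => (1 / (m:ℝ)^2) := Real.summable_one_div_nat_pow.2 (by norm_num)
  exact h.mul_of_nonneg h (fun _ => by positivity) (fun _ => by positivity)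

lemma summ_two' : Summable fun p : ℕ × ℕ => (1 / (p.1:ℝ)^2) * (1 / ((p.2:ℝ)+1)^2) := by
  have h : Summable fun m : ℕ => (1 / (m:ℝ)^2) := Real.summable_one_div_nat_pow.2 (by norm_num)
  have h' : Summable fun m : ℕ => (1 / ((m:ℝ)+1)^2) := by
    have := (summable_nat_add_iff 1).2 h
    simpa using this
  exact h.mul_of_nonneg h' (fun _ => by positivity) (fun _ => by positivity)

lemma G_summ {f : ℤ → ℝ} {χ : ℕ → ℝ} {H : ℝ} (hf : ∀ z, |f z| ≤ H) (hχ : ∀ k, |χ k| ≤ 1)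
    (hf0 : f 0 = 0) {t : ℝ} (ht : 0 < t) :
    Summable fun p : ℕ × ℕ => |f (p.1 * p.2) * χ p.2| * besselW (t * √((p.1 * p.2 : ℕ))) := by
  have hH : 0 ≤ H := (abs_nonneg _).trans (hf 0)
  refine Summable.of_nonneg_of_le (fun p => mul_nonneg (abs_nonneg _) (besselW_nonneg _)) ?_
    (summ_two.mul_left (H * (√(Real.pi / t) * 24 / t ^ 4)))
  rintro ⟨m, k⟩
  simp only
  rcases Nat.eq_zero_or_pos (m * k) with h | h
  · have : (m:ℤ) * k = 0 := by exact_mod_cast h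
    rw [this, hf0]; simp; positivity
  · have h1 := besselW_le' ht h
    have h2 : |f (m * k) * χ k| ≤ H := by
      rw [abs_mul]
      calc _ ≤ H * 1 := mul_le_mul (hf _) (hχ _) (abs_nonneg _) hH
        _ = H := mul_one H
    refine (mul_le_mul h2 h1 (besselW_nonneg _) hH).trans (le_of_eq ?_)
    push_cast
    field_simp

lemma F_summ {n : ℕ} {f : ℤ → ℝ} {H : ℝ} (hf : ∀ z, |f z| ≤ H) {t : ℝ} (ht : 0 < t) :
    Summable fun p : ℕ × ℕ => |if p.2 < n * p.1 then f (Qf n p.1 p.2) else 0| *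
      besselW (t * √((p.1 ^ 2 + p.2 * (n * p.1 - p.2) : ℕ))) := by
  have hH : 0 ≤ H := (abs_nonneg _).trans (hf 0)
  refine Summable.of_nonneg_of_le (fun p => mul_nonneg (abs_nonneg _) (besselW_nonneg _)) ?_
    (summ_two'.mul_left (H * (√(Real.pi / t) * 24 / t ^ 4) * n ^ 2))
  rintro ⟨X, Y⟩
  simp only
  split_ifs with h
  · have hX : 1 ≤ X := by
      rcases Nat.eq_zero_or_pos X with h0 | h0
      · simp [h0] at h
      · exact h0
    have hle : X ^ 2 ≤ X ^ 2 + Y * (n * X - Y) := Nat.le_add_right _ _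
    have h1 := besselW_le' ht (N := X ^ 2 + Y * (n * X - Y)) (le_trans (Nat.one_le_pow _ _ hX) hle)
    refine (mul_le_mul (hf _) h1 (besselW_nonneg _) hH).trans ?_
    set N := X ^ 2 + Y * (n * X - Y) with hN
    have hle' : (X:ℝ)^2 ≤ N := by exact_mod_cast hle
    have hXr : (1:ℝ) ≤ X := by exact_mod_cast hX
    have hYr : (Y:ℝ) + 1 ≤ n * X := by exact_mod_cast h
    have hn : (0:ℝ) ≤ n := by positivity
    have key : 1 / (N:ℝ)^2 ≤ n ^ 2 * ((1 / (X:ℝ)^2) * (1 / ((Y:ℝ)+1)^2)) := by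
      have a1 : 1 / (N:ℝ)^2 ≤ 1 / ((X:ℝ)^2)^2 := by
        apply one_div_le_one_div_of_le (by positivity); gcongr
      refine a1.trans ?_
      have a2 : ((Y:ℝ)+1)^2 ≤ (n * X)^2 := by gcongr
      rw [div_mul_div_comm, one_mul, mul_one_div, div_le_div_iff₀ (by positivity) (by positivity)]
      calc 1 * ((X:ℝ)^2 * ((Y:ℝ)+1)^2) ≤ 1 * ((X:ℝ)^2 * (n * X)^2) := by gcongr
        _ = _ := by ring
    calc H * ((√(Real.pi / t) * 24 / t ^ 4) / (N:ℝ)^2)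
        = (H * (√(Real.pi / t) * 24 / t ^ 4)) * (1 / (N:ℝ)^2) := by ring
      _ ≤ (H * (√(Real.pi / t) * 24 / t ^ 4)) * (n ^ 2 * ((1 / (X:ℝ)^2) * (1 / ((Y:ℝ)+1)^2))) := by
          gcongr
      _ = _ := by ring
  · simp; positivity

lemma Qf_nat {n X Y : ℕ} (h : Y < n * X) : Qf n X Y = ((X ^ 2 + Y * (n * X - Y) : ℕ) : ℤ) := by
  unfold Qf
  push_cast [Nat.cast_sub h.le]
  ring

lemma tsum_eq_FG {n : ℕ} {f : ℤ → ℝ} {χ : ℕ → ℝ} {w : ℕ → ℝ}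
    (hf0 : f 0 = 0)
    (h1 : Summable fun p : ℕ × ℕ => (f (p.1 * p.2) * χ p.2) * w (p.1 * p.2))
    (h2 : Summable fun p : ℕ × ℕ => (if p.2 < n * p.1 then f (Qf n p.1 p.2) else 0) *
      w (p.1 ^ 2 + p.2 * (n * p.1 - p.2)))
    (hcount : ∀ N : ℕ, 1 ≤ N →
      (Nat.card {p : ℕ × ℕ // p.2 < n * p.1 ∧ Qf n p.1 p.2 = N} : ℝ) = ∑ d ∈ N.divisors, χ d) :
    ∑' p : ℕ × ℕ, (f (p.1 * p.2) * χ p.2) * w (p.1 * p.2) =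
    ∑' p : ℕ × ℕ, (if p.2 < n * p.1 then f (Qf n p.1 p.2) else 0) *
      w (p.1 ^ 2 + p.2 * (n * p.1 - p.2)) := by
  have e1 := (h1.hasSum.tsum_fiberwise (fun p : ℕ × ℕ => p.1 * p.2)).tsum_eq
  have e2 := (h2.hasSum.tsum_fiberwise
    (fun p : ℕ × ℕ => p.1 ^ 2 + p.2 * (n * p.1 - p.2))).tsum_eq
  rw [← e1, ← e2]
  refine tsum_congr fun N => ?_
  rcases Nat.eq_zero_or_pos N with hN | hN
  · subst hN
    trans (0:ℝ)
    · rw [← tsum_zero (α := ℝ) (β := ((fun p : ℕ × ℕ => p.1 * p.2) ⁻¹' {0}))]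
      refine tsum_congr fun b => ?_
      have hb : b.1.1 * b.1.2 = 0 := b.2
      have : ((b.1.1:ℤ) * b.1.2) = 0 := by exact_mod_cast hb
      rw [this, hf0]; simp
    · symm
      rw [← tsum_zero (α := ℝ)
        (β := ((fun p : ℕ × ℕ => p.1 ^ 2 + p.2 * (n * p.1 - p.2)) ⁻¹' {0}))]
      refine tsum_congr fun b => ?_
      have hb : b.1.1 ^ 2 + b.1.2 * (n * b.1.1 - b.1.2) = 0 := b.2
      split_ifs with hlt
      · rw [Qf_nat hlt, hb]; simp [hf0]
      · simp
  · trans f N * w N * ∑ d ∈ N.divisors, χ d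
    · have hset : ((fun p : ℕ × ℕ => p.1 * p.2) ⁻¹' {N}) = ↑(N.divisorsAntidiagonal) := by
        ext p; simp [hN.ne']
      rw [hset, Finset.tsum_subtype' N.divisorsAntidiagonal
        (fun b : ℕ × ℕ => f (b.1 * b.2) * χ b.2 * w (b.1 * b.2)), Finset.mul_sum,
        ← Nat.map_div_left_divisors, Finset.sum_map]
      refine Finset.sum_congr rfl fun d hd => ?_
      have hdd := Nat.div_mul_cancel (Nat.dvd_of_mem_divisors hd)
      change f (((N / d : ℕ) : ℤ) * (d:ℤ)) * χ d * w (N / d * d) = _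
      have : (((N / d : ℕ) : ℤ) * (d:ℤ)) = N := by exact_mod_cast hdd
      rw [this, hdd]; ring
    · rw [← hcount N hN]
      set A := {p : ℕ × ℕ | p.2 < n * p.1 ∧ Qf n p.1 p.2 = N} with hA
      have hsub : A ⊆ ((fun p : ℕ × ℕ => p.1 ^ 2 + p.2 * (n * p.1 - p.2)) ⁻¹' {N}) := by
        rintro ⟨X, Y⟩ ⟨ha, hb⟩
        rw [Qf_nat ha] at hb
        exact_mod_cast hb
      have hcongr : ∀ (S : Set (ℕ × ℕ)) (g : ℕ × ℕ → ℝ), ∑' b : S, g b = ∑' b, S.indicator g b :=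
        fun S g => tsum_subtype S g
      rw [hcongr _ (fun p : ℕ × ℕ => (if p.2 < n * p.1 then f (Qf n p.1 p.2) else 0) *
        w (p.1 ^ 2 + p.2 * (n * p.1 - p.2)))]
      have : ∀ b : ℕ × ℕ, ((fun p : ℕ × ℕ => p.1 ^ 2 + p.2 * (n * p.1 - p.2)) ⁻¹' {N}).indicator
          (fun p : ℕ × ℕ => (if p.2 < n * p.1 then f (Qf n p.1 p.2) else 0) *
            w (p.1 ^ 2 + p.2 * (n * p.1 - p.2))) b = A.indicator (fun _ => f N * w N) b := by
        rintro ⟨X, Y⟩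
        by_cases hb : X ^ 2 + Y * (n * X - Y) = N
        · by_cases hlt : Y < n * X
          · have hq := Qf_nat hlt
            rw [hb] at hq
            rw [Set.indicator_of_mem (show (X, Y) ∈ _ from hb),
              Set.indicator_of_mem (show (X, Y) ∈ A from ⟨hlt, hq⟩)]
            simp only [hlt, if_true, hq, hb]
          · rw [Set.indicator_of_mem (show (X, Y) ∈ _ from hb),
              Set.indicator_of_notMem (show (X, Y) ∉ A from fun h => hlt h.1)]
            simp [hlt]
        · rw [Set.indicator_of_notMem (show (X, Y) ∉ _ from hb),
              Set.indicator_of_notMem (show (X, Y) ∉ A from fun h => hb (hsub h))]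
      rw [tsum_congr this, ← hcongr, tsum_const]
      rw [nsmul_eq_mul]
      rw [mul_comm]
      rfl

theorem integral_FG {n : ℕ} {f : ℤ → ℝ} {χ : ℕ → ℝ} {H : ℝ} (hf : ∀ z, |f z| ≤ H)
    (hχ : ∀ k, |χ k| ≤ 1) (hf0 : f 0 = 0)
    (hcount : ∀ N : ℕ, 1 ≤ N →
      (Nat.card {p : ℕ × ℕ // p.2 < n * p.1 ∧ Qf n p.1 p.2 = N} : ℝ) = ∑ d ∈ N.divisors, χ d)
    {t : ℝ} (ht : 0 < t) :
    Integrable (fun v => Gfun f χ (t * Real.exp v) (t * Real.exp (-v))) ∧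
    Integrable (fun v => Ffun n f (t * Real.exp v) (t * Real.exp (-v))) ∧
    ∫ v, Gfun f χ (t * Real.exp v) (t * Real.exp (-v)) =
      ∫ v, Ffun n f (t * Real.exp v) (t * Real.exp (-v)) := by
  have s1 := G_summ hf hχ hf0 ht
  have s2 := F_summ (n := n) hf ht
  obtain ⟨i1, e1⟩ := swap_sum (fun p : ℕ × ℕ => f (p.1 * p.2) * χ p.2) (fun p => p.1) (fun p => p.2)
    (fun p => p.1 * p.2) ht (by
      rintro ⟨m, k⟩ hc
      simp only at hc ⊢
      have hm : m ≠ 0 := by rintro rfl; simp [hf0] at hc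
      have hk : k ≠ 0 := by rintro rfl; simp [hf0] at hc
      refine ⟨?_, ?_, ?_⟩
      · exact_mod_cast Nat.pos_of_ne_zero hm
      · exact_mod_cast Nat.pos_of_ne_zero hk
      · push_cast; rfl) s1
  obtain ⟨i2, e2⟩ := swap_sum
    (fun p : ℕ × ℕ => if p.2 < n * p.1 then f (Qf n p.1 p.2) else 0)
    (fun p => p.1 * (epsU n)⁻¹ + p.2) (fun p => p.1 * epsU n - p.2)
    (fun p => p.1 ^ 2 + p.2 * (n * p.1 - p.2)) ht (by
      rintro ⟨X, Y⟩ hc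
      simp only at hc ⊢
      have hlt : Y < n * X := by by_contra h; simp [h] at hc
      have hX : 1 ≤ X := by
        rcases Nat.eq_zero_or_pos X with h0 | h0
        · simp [h0] at hlt
        · exact h0
      have hXr : (0:ℝ) < X := by exact_mod_cast hX
      have he := epsU_pos n
      have hlt' : (Y:ℝ) < n * X := by exact_mod_cast hlt
      refine ⟨by positivity, ?_, ?_⟩
      · have := n_lt_epsU n
        nlinarith
      · push_cast [Nat.cast_sub hlt.le]
        have h2 := epsU_inv n
        have h3 := epsU_sq n
        rw [h2]
        linear_combination (X:ℝ)^2 * h3) s2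
  refine ⟨i1, i2, ?_⟩
  unfold Gfun Ffun
  rw [e1, e2]
  refine tsum_eq_FG (w := fun N => besselW (t * √N)) hf0 ?_ ?_ hcount
  · refine Summable.of_norm ?_
    refine s1.congr fun p => ?_
    rw [norm_mul, Real.norm_eq_abs, Real.norm_of_nonneg (besselW_nonneg _)]
  · refine Summable.of_norm ?_
    refine s2.congr fun p => ?_
    rw [norm_mul, Real.norm_eq_abs, Real.norm_of_nonneg (besselW_nonneg _)]

end

end

section

open MeasureTheory Set Filter Topology

noncomputable section

/-- smooth part of the periodic geometric series -/
def rhoF (q b : ℕ) (z : ℝ) : ℝ :=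
  (∑ k ∈ Finset.Ico b q, Real.exp (-(k * z))) / ∑ k ∈ Finset.range q, Real.exp (-(k * z))

/-- singular part -/
def etaF (q : ℕ) (z : ℝ) : ℝ := 1 / (Real.exp (q * z) - 1)

/-- the periodic geometric series -/
def geoF (q b : ℕ) (z : ℝ) : ℝ := Real.exp (-z) ^ b / (1 - Real.exp (-z) ^ q)

lemma exp_neg_lt_one {z : ℝ} (hz : 0 < z) : Real.exp (-z) < 1 := by
  rw [Real.exp_lt_one_iff]; linarith

lemma geoF_eq {q b : ℕ} (hb : b < q) {z : ℝ} (hz : 0 < z) :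
    geoF q b z = rhoF q b z + etaF q z := by
  have hT := exp_neg_lt_one hz
  have hT0 := Real.exp_pos (-z)
  have e : ∀ k : ℕ, Real.exp (-(k * z)) = Real.exp (-z) ^ k := by
    intro k; rw [← Real.exp_nat_mul]; congr 1; ring
  have e2 : Real.exp (q * z) = (Real.exp (-z) ^ q)⁻¹ := by
    rw [← e q, ← Real.exp_neg]; congr 1; ring
  unfold geoF rhoF etaF
  simp_rw [e, e2]
  set T := Real.exp (-z)
  have hq : q ≠ 0 := by omega
  have hTq : T ^ q < 1 := pow_lt_one₀ hT0.le hT hq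
  have h1 : (1 - T) ≠ 0 := by linarith
  have h2 : (1 - T ^ q) ≠ 0 := by linarith
  have g1 : ∑ k ∈ Finset.Ico b q, T ^ k = (T ^ b - T ^ q) / (1 - T) := by
    rw [geom_sum_Ico hT.ne hb.le, ← neg_div_neg_eq]; ring_nf
  have g2 : ∑ k ∈ Finset.range q, T ^ k = (1 - T ^ q) / (1 - T) := by
    rw [geom_sum_eq hT.ne, ← neg_div_neg_eq]; ring_nf
  have hp : T ^ q ≠ 0 := (pow_pos hT0 q).ne'
  have h3 : (T ^ q)⁻¹ - 1 = (1 - T ^ q) / T ^ q := by field_simp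
  rw [g1, g2, h3]
  field_simp
  ring

lemma per_summable {p : ℕ → ℝ} {H : ℝ} (hp : ∀ k, |p k| ≤ H) {z : ℝ} (hz : 0 < z) :
    Summable fun k => p k * Real.exp (-z) ^ k := by
  refine Summable.of_norm_bounded (g := fun k => H * Real.exp (-z) ^ k) ?_ ?_
  · exact (summable_geometric_of_lt_one (Real.exp_pos _).le (exp_neg_lt_one hz)).mul_left H
  · intro k
    rw [norm_mul, Real.norm_eq_abs, Real.norm_of_nonneg (by positivity)]
    gcongr
    exact hp k

lemma per_tsum {q : ℕ} (hq : 0 < q) {p : ℕ → ℝ} {H : ℝ} (hp : ∀ k, |p k| ≤ H)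
    (hper : ∀ k, p (k + q) = p k) {z : ℝ} (hz : 0 < z) :
    ∑' k, p k * Real.exp (-z) ^ k = ∑ b ∈ Finset.range q, p b * geoF q b z := by
  have hs := per_summable hp hz
  have h := hs.sum_add_tsum_nat_add q
  simp_rw [hper, pow_add] at h
  set T := Real.exp (-z)
  have hTq : T ^ q < 1 := pow_lt_one₀ (Real.exp_pos _).le (exp_neg_lt_one hz) hq.ne'
  have h2 : (1 - T ^ q) ≠ 0 := by linarith
  simp_rw [← mul_assoc] at h
  rw [tsum_mul_right] at h
  unfold geoF
  simp_rw [← mul_div_assoc]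
  rw [← Finset.sum_div, eq_div_iff h2]
  linarith

lemma bdd_of_per {q : ℕ} (hq : 0 < q) {p : ℕ → ℝ} (hper : ∀ k, p (k + q) = p k) :
    ∃ H, ∀ k, |p k| ≤ H := by
  refine ⟨∑ b ∈ Finset.range q, |p b|, fun k => ?_⟩
  have : p k = p (k % q) := by
    conv_lhs => rw [← Nat.mod_add_div k q]
    induction (k / q) with
    | zero => simp
    | succ m ih => rw [Nat.mul_succ, ← add_assoc, hper, ih]
  rw [this]
  exact Finset.single_le_sum (f := fun b => |p b|) (fun _ _ => abs_nonneg _)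
    (Finset.mem_range.2 (Nat.mod_lt _ hq))

lemma exp_split (a b : ℕ) (x y : ℝ) :
    Real.exp (-(a * x + b * y)) = Real.exp (-x) ^ a * Real.exp (-y) ^ b := by
  rw [← Real.exp_nat_mul, ← Real.exp_nat_mul, ← Real.exp_add]; congr 1; ring

lemma geo_summable_prod {x y : ℝ} (hx : 0 < x) (hy : 0 < y) :
    Summable fun p : ℕ × ℕ => Real.exp (-x) ^ p.1 * Real.exp (-y) ^ p.2 := by
  refine (summable_geometric_of_lt_one (Real.exp_pos _).le (exp_neg_lt_one hx)).mul_of_nonneg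
    (summable_geometric_of_lt_one (Real.exp_pos _).le (exp_neg_lt_one hy)) ?_ ?_
  · intro k; positivity
  · intro k; positivity

lemma G_closed {q r : ℕ} (hq : 0 < q) (hr : 0 < r) {c : ℕ → ℕ → ℝ} {H : ℝ}
    (hH : ∀ a b, |c a b| ≤ H)
    (h1 : ∀ a b, c (a + q) b = c a b) (h2 : ∀ a b, c a (b + r) = c a b)
    {x y : ℝ} (hx : 0 < x) (hy : 0 < y) :
    ∑' p : ℕ × ℕ, c p.1 p.2 * Real.exp (-(p.1 * x + p.2 * y)) =
      ∑ a ∈ Finset.range q, ∑ b ∈ Finset.range r, c a b * geoF q a x * geoF r b y := by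
  have hs : Summable fun p : ℕ × ℕ => c p.1 p.2 * Real.exp (-(p.1 * x + p.2 * y)) := by
    refine Summable.of_norm_bounded ((geo_summable_prod hx hy).mul_left H) ?_
    intro p
    rw [norm_mul, Real.norm_eq_abs, Real.norm_of_nonneg (Real.exp_pos _).le, exp_split]
    gcongr
    exact hH _ _
  rw [hs.tsum_prod]
  simp_rw [exp_split]
  have e1 : ∀ a : ℕ, ∑' b : ℕ, c a b * (Real.exp (-x) ^ a * Real.exp (-y) ^ b) =
      (∑ b ∈ Finset.range r, c a b * geoF r b y) * Real.exp (-x) ^ a := by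
    intro a
    rw [← per_tsum hr (hH a) (h2 a) hy, ← tsum_mul_right]
    refine tsum_congr fun b => by ring
  simp_rw [e1]
  have hper : ∀ a, (∑ b ∈ Finset.range r, c (a + q) b * geoF r b y) =
    ∑ b ∈ Finset.range r, c a b * geoF r b y := by intro a; simp_rw [h1]
  obtain ⟨H', hH'⟩ := bdd_of_per hq (p := fun a => ∑ b ∈ Finset.range r, c a b * geoF r b y) hper
  rw [per_tsum hq (p := fun a => ∑ b ∈ Finset.range r, c a b * geoF r b y) hH' hper hx]
  refine Finset.sum_congr rfl fun a _ => ?_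
  rw [Finset.sum_mul]
  refine Finset.sum_congr rfl fun b _ => by ring

/-- the half-weighted geometric series -/
def kapF (q b : ℕ) (w : ℝ) : ℝ := geoF q b w - if b = 0 then 1 / 2 else 0

/-- Cone sum in closed form -/
def EF (q : ℕ) (g : ℕ → ℕ → ℝ) (z w : ℝ) : ℝ :=
  ∑ a ∈ Finset.range q, (∑ b ∈ Finset.range q, g a b * kapF q b w) * geoF q a z

lemma kap_tsum {q : ℕ} (hq : 0 < q) {p : ℕ → ℝ} {H : ℝ} (hp : ∀ k, |p k| ≤ H)
    (hper : ∀ k, p (k + q) = p k) {z : ℝ} (hz : 0 < z) :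
    ∑ b ∈ Finset.range q, p b * kapF q b z = ∑' k, p k * Real.exp (-z) ^ k - p 0 / 2 := by
  rw [per_tsum hq hp hper hz]
  unfold kapF
  simp_rw [mul_sub]
  rw [Finset.sum_sub_distrib]
  congr 1
  rw [Finset.sum_eq_single_of_mem 0 (Finset.mem_range.2 hq)]
  · simp; ring
  · intro b _ hb; simp [hb]

lemma cone_X {q : ℕ} (hq : 0 < q) {p p' : ℕ → ℝ} {H : ℝ} (hp : ∀ k, |p k| ≤ H)
    (hp' : ∀ k, |p' k| ≤ H)
    (hper : ∀ k, p (k + q) = p k) (hper' : ∀ k, p' (k + q) = p' k) {M : ℕ}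
    (hrefl : ∀ Y ≤ M, p (M - Y) = p Y) (hsh : ∀ Y, p (M + Y) = p' Y) {w : ℝ} (hw : 0 < w) :
    ∑ Y ∈ Finset.range M, p Y * Real.exp (-w) ^ Y
      + ∑ Y ∈ Finset.range M, p Y * Real.exp (-w) ^ (M - Y)
      = 2 * (∑ b ∈ Finset.range q, p b * kapF q b w
        - Real.exp (-w) ^ M * ∑ b ∈ Finset.range q, p' b * kapF q b w) := by
  rw [kap_tsum hq hp hper hw, kap_tsum hq hp' hper' hw]
  have hs := per_summable hp hw
  have h := hs.sum_add_tsum_nat_add M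
  have h0 : p' 0 = p 0 := by rw [← hsh 0, add_zero, ← hrefl 0 (Nat.zero_le _), Nat.sub_zero]
  set T := Real.exp (-w)
  have e1 : ∑' k, p (k + M) * T ^ (k + M) = T ^ M * ∑' k, p' k * T ^ k := by
    rw [← tsum_mul_left]
    refine tsum_congr fun k => ?_
    rw [add_comm k M, hsh, pow_add]; ring
  have e2 : ∑ Y ∈ Finset.range M, p Y * T ^ (M - Y) =
      ∑ Y ∈ Finset.range M, p (Y + 1) * T ^ (Y + 1) := by
    rw [← Finset.sum_range_reflect]
    refine Finset.sum_congr rfl fun Y hY => ?_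
    rw [Finset.mem_range] at hY
    have a1 : M - (M - 1 - Y) = Y + 1 := by omega
    have a2 : M - 1 - Y = M - (Y + 1) := by omega
    rw [a1, a2, hrefl _ (by omega)]
  have e3 : ∑ Y ∈ Finset.range M, p (Y + 1) * T ^ (Y + 1) =
      ∑ Y ∈ Finset.range M, p Y * T ^ Y + p M * T ^ M - p 0 := by
    have := Finset.sum_range_succ (fun Y => p Y * T ^ Y) M
    rw [Finset.sum_range_succ'] at this
    simp only [pow_zero, mul_one] at this
    linarith
  have h4 : p M = p' 0 := by rw [← hsh 0, add_zero]
  rw [e1] at h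
  rw [e2, e3, h4, h0, ← h]
  ring

lemma F_term {n : ℕ} {f : ℤ → ℝ} {H : ℝ} (hn : 0 < n) (hf : ∀ z, |f z| ≤ H)
    {z w : ℝ} (hz : 0 < z) (hzw : 0 < z + n * w) :
    ∑' p : ℕ × ℕ, (if p.2 < n * p.1 then f (Qf n p.1 p.2) else 0) * Real.exp (-(p.1 * z + p.2 * w))
    = ∑' X : ℕ, ∑ Y ∈ Finset.range (n * X), f (Qf n X Y) * Real.exp (-(X * z + Y * w)) := by
  have hH : 0 ≤ H := (abs_nonneg _).trans (hf 0)
  have hn' : (0:ℝ) < n := by exact_mod_cast hn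
  obtain ⟨m, hm, hmz, hmz'⟩ : ∃ m, 0 < m ∧ m ≤ z ∧ m ≤ z + n * w :=
    ⟨min z (z + n * w), lt_min hz hzw, min_le_left _ _, min_le_right _ _⟩
  have hs : Summable fun p : ℕ × ℕ => (if p.2 < n * p.1 then f (Qf n p.1 p.2) else 0) *
      Real.exp (-(p.1 * z + p.2 * w)) := by
    refine Summable.of_norm_bounded ((geo_summable_prod (x := m / 2) (y := m / (2 * n))
      (by positivity) (by positivity)).mul_left H) ?_
    rintro ⟨X, Y⟩
    rw [norm_mul, Real.norm_eq_abs, Real.norm_of_nonneg (Real.exp_pos _).le, ← exp_split]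
    simp only
    split_ifs with h
    · refine mul_le_mul (hf _) ?_ (Real.exp_pos _).le hH
      apply Real.exp_le_exp.2
      have hY : (Y:ℝ) ≤ n * X := by exact_mod_cast h.le
      have h1 : (Y:ℝ) * (m / (2 * n)) ≤ X * (m / 2) := by
        calc (Y:ℝ) * (m / (2 * n)) ≤ (n * X) * (m / (2 * n)) := by gcongr
          _ = _ := by field_simp
      have h2 : X * m ≤ X * z + Y * w := by
        -- convex combination
        have hX : (0:ℝ) ≤ X := by positivity
        have hY0 : (0:ℝ) ≤ Y := by positivity
        have : n * (X * m) ≤ n * (X * z + Y * w) := by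
          have a := mul_le_mul_of_nonneg_left hmz (sub_nonneg.2 hY)
          have b := mul_le_mul_of_nonneg_left hmz' hY0
          nlinarith
        exact le_of_mul_le_mul_left this hn'
      linarith
    · simp; positivity
  rw [hs.tsum_prod]
  refine tsum_congr fun X => ?_
  rw [tsum_eq_sum (s := Finset.range (n * X))]
  · refine Finset.sum_congr rfl fun Y hY => ?_
    rw [if_pos (Finset.mem_range.1 hY)]
  · intro Y hY
    rw [if_neg (by simpa using hY), zero_mul]

lemma F_closed {n q : ℕ} (hn : 0 < n) (hq : 0 < q) {f : ℤ → ℝ} {H : ℝ} (hf : ∀ z, |f z| ≤ H)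
    (hper : ∀ a b : ℤ, a ≡ b [ZMOD q] → f a = f b)
    {x y : ℝ} (hxy : y < x) (hy : 0 < y) :
    Ffun n f x y + Ffun n f y x = 2 *
      (EF q (fun a b => f (Qf n a b)) (x * (epsU n)⁻¹ + epsU n * y) (x - y)
      - EF q (fun a b => f (Qf n a (-b))) (epsU n * x + y * (epsU n)⁻¹) (x - y)) := by
  have he := epsU_pos n
  have hx : 0 < x := hy.trans hxy
  have hn' : (0:ℝ) < n := by exact_mod_cast hn
  set z := x * (epsU n)⁻¹ + epsU n * y with hzdef
  set z' := epsU n * x + y * (epsU n)⁻¹ with hzdef'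
  set w := x - y with hwdef
  have hz : 0 < z := by positivity
  have hz' : 0 < z' := by positivity
  have hw : 0 < w := by rw [hwdef]; linarith
  have hzz : z' = z + n * w := by
    rw [hzdef, hzdef', hwdef, epsU_inv]; ring
  have e1 : Ffun n f x y = ∑' X : ℕ, ∑ Y ∈ Finset.range (n * X),
      f (Qf n X Y) * Real.exp (-(X * z + Y * w)) := by
    rw [← F_term hn hf hz (by rw [← hzz]; exact hz')]
    unfold Ffun
    refine tsum_congr fun p => ?_
    congr 3
    rw [hzdef, hwdef]; ring
  have e2 : Ffun n f y x = ∑' X : ℕ, ∑ Y ∈ Finset.range (n * X),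
      f (Qf n X Y) * Real.exp (-(X * z' + Y * (-w))) := by
    rw [← F_term hn hf hz' (by rw [hzz]; linarith)]
    unfold Ffun
    refine tsum_congr fun p => ?_
    congr 3
    rw [hzdef', hwdef]; ring
  have hmod : ∀ {a b : ℤ}, (∃ k : ℤ, a - b = q * k) → f a = f b := by
    rintro a b ⟨k, hk⟩
    exact hper a b (Int.modEq_iff_dvd.2 ⟨-k, by linarith⟩)
  have hXterm : ∀ X : ℕ, ∑ Y ∈ Finset.range (n * X), f (Qf n X Y) * Real.exp (-(X * z + Y * w))
      + ∑ Y ∈ Finset.range (n * X), f (Qf n X Y) * Real.exp (-(X * z' + Y * (-w)))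
      = 2 * ((∑ b ∈ Finset.range q, f (Qf n X b) * kapF q b w) * Real.exp (-z) ^ X
        - (∑ b ∈ Finset.range q, f (Qf n X (-b)) * kapF q b w) * Real.exp (-z') ^ X) := by
    intro X
    have hc := cone_X (M := n * X) hq (p := fun Y => f (Qf n X Y)) (p' := fun Y => f (Qf n X (-Y)))
      (fun k => hf _) (fun k => hf _)
      (fun k => hmod ⟨n * X - 2 * k - q, by unfold Qf; push_cast; ring⟩)
      (fun k => hmod ⟨-(n * X) - 2 * k - q, by unfold Qf; push_cast; ring⟩)
      (fun Y hY => by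
        congr 1; unfold Qf; push_cast [Nat.cast_sub hY]; ring)
      (fun Y => by congr 1; unfold Qf; push_cast; ring) hw
    have g1 : ∑ Y ∈ Finset.range (n * X), f (Qf n X Y) * Real.exp (-(X * z + Y * w)) =
        Real.exp (-z) ^ X * ∑ Y ∈ Finset.range (n * X), f (Qf n X Y) * Real.exp (-w) ^ Y := by
      rw [Finset.mul_sum]
      refine Finset.sum_congr rfl fun Y _ => ?_
      rw [exp_split]; ring
    have g2 : ∑ Y ∈ Finset.range (n * X), f (Qf n X Y) * Real.exp (-(X * z' + Y * (-w))) =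
        Real.exp (-z) ^ X * ∑ Y ∈ Finset.range (n * X),
          f (Qf n X Y) * Real.exp (-w) ^ (n * X - Y) := by
      rw [Finset.mul_sum]
      refine Finset.sum_congr rfl fun Y hY => ?_
      have hY' := (Finset.mem_range.1 hY).le
      have : Real.exp (-(X * z' + Y * (-w))) = Real.exp (-(X * z + (n * X - Y : ℕ) * w)) := by
        congr 1; push_cast [Nat.cast_sub hY']; rw [hzz]; ring
      rw [this, exp_split]; ring
    have g3 : Real.exp (-z') ^ X = Real.exp (-z) ^ X * Real.exp (-w) ^ (n * X) := by
      rw [← exp_split, ← Real.exp_nat_mul]; congr 1; push_cast; rw [hzz]; ring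
    rw [g1, g2, ← mul_add, hc, g3]
    ring
  have per1 : ∀ X : ℕ, (∑ b ∈ Finset.range q, f (Qf n (X + q : ℕ) b) * kapF q b w) =
      ∑ b ∈ Finset.range q, f (Qf n X b) * kapF q b w := by
    intro X
    refine Finset.sum_congr rfl fun b _ => ?_
    congr 1
    exact hmod ⟨2 * X + q + n * b, by unfold Qf; push_cast; ring⟩
  have per2 : ∀ X : ℕ, (∑ b ∈ Finset.range q, f (Qf n (X + q : ℕ) (-b)) * kapF q b w) =
      ∑ b ∈ Finset.range q, f (Qf n X (-b)) * kapF q b w := by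
    intro X
    refine Finset.sum_congr rfl fun b _ => ?_
    congr 1
    exact hmod ⟨2 * X + q - n * b, by unfold Qf; push_cast; ring⟩
  obtain ⟨H1, hH1⟩ := bdd_of_per hq (p := fun X : ℕ => ∑ b ∈ Finset.range q, f (Qf n X b) * kapF q b w) per1
  obtain ⟨H2, hH2⟩ := bdd_of_per hq (p := fun X : ℕ => ∑ b ∈ Finset.range q, f (Qf n X (-b)) * kapF q b w) per2
  have c1 := per_tsum hq (p := fun X : ℕ => ∑ b ∈ Finset.range q, f (Qf n X b) * kapF q b w) hH1 per1 hz
  have c2 := per_tsum hq (p := fun X : ℕ => ∑ b ∈ Finset.range q, f (Qf n X (-b)) * kapF q b w) hH2 per2 hz'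
  have sum1 : Summable fun X : ℕ => ∑ Y ∈ Finset.range (n * X),
      f (Qf n X Y) * Real.exp (-(X * z + Y * w)) := by
    refine Summable.of_norm_bounded
      ((per_summable (p := fun _ => H / (1 - Real.exp (-w)))
        (H := |H / (1 - Real.exp (-w))|) (fun _ => le_rfl) hz)) ?_
    intro X
    have hT1 : 0 < 1 - Real.exp (-w) := by linarith [exp_neg_lt_one hw]
    calc ‖∑ Y ∈ Finset.range (n * X), f (Qf n X Y) * Real.exp (-(X * z + Y * w))‖
        ≤ ∑ Y ∈ Finset.range (n * X), ‖f (Qf n X Y) * Real.exp (-(X * z + Y * w))‖ :=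
          norm_sum_le _ _
      _ ≤ ∑ Y ∈ Finset.range (n * X), H * (Real.exp (-z) ^ X * Real.exp (-w) ^ Y) := by
          refine Finset.sum_le_sum fun Y _ => ?_
          rw [norm_mul, Real.norm_eq_abs, Real.norm_of_nonneg (Real.exp_pos _).le, exp_split]
          gcongr
          exact hf _
      _ = H * Real.exp (-z) ^ X * ∑ Y ∈ Finset.range (n * X), Real.exp (-w) ^ Y := by
          rw [Finset.mul_sum]; refine Finset.sum_congr rfl fun Y _ => by ring
      _ ≤ H * Real.exp (-z) ^ X * (1 - Real.exp (-w))⁻¹ := by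
          have hH : 0 ≤ H := (abs_nonneg _).trans (hf 0)
          gcongr
          rw [← tsum_geometric_of_lt_one (Real.exp_pos _).le (exp_neg_lt_one hw)]
          exact (summable_geometric_of_lt_one (Real.exp_pos _).le
            (exp_neg_lt_one hw)).sum_le_tsum _ (fun _ _ => by positivity)
      _ = _ := by field_simp
  have sA := per_summable hH1 hz
  have sB := per_summable hH2 hz'
  have sum2 : Summable fun X : ℕ => ∑ Y ∈ Finset.range (n * X),
      f (Qf n X Y) * Real.exp (-(X * z' + Y * (-w))) := by
    have := ((sA.sub sB).mul_left 2).sub sum1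
    refine this.congr fun X => ?_
    rw [← hXterm X]; ring
  rw [e1, e2, ← sum1.tsum_add sum2, tsum_congr hXterm, tsum_mul_left, sA.tsum_sub sB, c1, c2]
  rfl

end

end

section

open MeasureTheory Set Filter Topology

noncomputable section

lemma log_lemma {Φ : ℝ → ℝ → ℝ} {R K : ℝ}
    (h_integ : ∀ t, 0 < t → t ≤ 1/2 → IntegrableOn (Φ t) (Ioi 0))
    (hzero : ∀ t, 0 < t → t ≤ 1/2 → ∫ v in Ioi 0, Φ t v = 0)
    (h1 : ∀ t, 0 < t → t ≤ 1/2 → ∀ v, 0 < v → t * Real.exp v ≤ 1 →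
      |Φ t v - R| ≤ K * (t * Real.exp v + Real.exp (-v)))
    (h2 : ∀ t, 0 < t → t ≤ 1/2 → ∀ v, 0 < v → 1 ≤ t * Real.exp v →
      |Φ t v| ≤ K / (t * Real.exp v)) : R = 0 := by
  have key : ∀ L : ℝ, Real.log 2 ≤ L → |R| * L ≤ 3 * K := by
    intro L hL
    have hL0 : 0 < L := lt_of_lt_of_le (Real.log_pos (by norm_num)) hL
    set t := Real.exp (-L) with ht
    have ht0 : 0 < t := Real.exp_pos _
    have ht2 : t ≤ 1/2 := by
      rw [ht, Real.exp_neg, one_div]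
      apply inv_anti₀ (by norm_num)
      rw [← Real.log_le_iff_le_exp (by norm_num)]; exact hL
    have hte : t * Real.exp L = 1 := by rw [ht, ← Real.exp_add]; simp
    have hI := h_integ t ht0 ht2
    have hI1 : IntegrableOn (Φ t) (Ioc 0 L) := hI.mono_set Ioc_subset_Ioi_self
    have hI2 : IntegrableOn (Φ t) (Ioi L) := hI.mono_set (Ioi_subset_Ioi hL0.le)
    have hsplit : ∫ v in Ioi 0, Φ t v = (∫ v in Ioc 0 L, Φ t v) + ∫ v in Ioi L, Φ t v := by
      rw [← Ioc_union_Ioi_eq_Ioi hL0.le, setIntegral_union Ioc_disjoint_Ioi_same measurableSet_Ioi hI1 hI2]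
    rw [hzero t ht0 ht2] at hsplit
    have hc : ∫ v in Ioc 0 L, (Φ t v - R) = (∫ v in Ioc 0 L, Φ t v) - R * L := by
      rw [integral_sub hI1 (by simp)]
      simp [hL0.le, mul_comm]
    have b1 : |∫ v in Ioc 0 L, (Φ t v - R)| ≤ 2 * K := by
      have hb : ∫ v in Ioc 0 L, K * (t * Real.exp v + Real.exp (-v)) =
          K * (t * (Real.exp L - 1) + (1 - Real.exp (-L))) := by
        rw [← intervalIntegral.integral_of_le hL0.le]
        rw [intervalIntegral.integral_eq_sub_of_hasDerivAt
          (f := fun v => K * (t * Real.exp v - Real.exp (-v)))]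
        · simp; ring
        · intro v _
          have := (((Real.hasDerivAt_exp v).const_mul t).sub
            ((hasDerivAt_neg v).exp)).const_mul K
          convert! this using 1
          ring
        · exact Continuous.intervalIntegrable (by fun_prop) _ _
      have hK : 0 ≤ K := by
        have := h2 t ht0 ht2 L hL0 hte.ge
        rw [hte, div_one] at this
        exact (abs_nonneg _).trans this
      calc |∫ v in Ioc 0 L, (Φ t v - R)| ≤ ∫ v in Ioc 0 L, K * (t * Real.exp v + Real.exp (-v)) := by
            rw [← Real.norm_eq_abs]
            refine norm_integral_le_of_norm_le
              ((Continuous.integrableOn_Icc (by fun_prop)).mono_set Ioc_subset_Icc_self) ?_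
            rw [ae_restrict_iff' measurableSet_Ioc]
            refine Eventually.of_forall fun v hv => ?_
            refine h1 t ht0 ht2 v hv.1 ?_
            rw [← hte]; gcongr; exact hv.2
        _ = K * (t * (Real.exp L - 1) + (1 - Real.exp (-L))) := hb
        _ ≤ K * 2 := by
            gcongr
            have := Real.exp_pos (-L)
            nlinarith
        _ = 2 * K := by ring
    have b2 : |∫ v in Ioi L, Φ t v| ≤ K := by
      calc |∫ v in Ioi L, Φ t v| ≤ ∫ v in Ioi L, K / t * Real.exp (-v) := by
            rw [← Real.norm_eq_abs]
            refine norm_integral_le_of_norm_le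
              ((integrableOn_exp_neg_Ioi L).const_mul _) ?_
            rw [ae_restrict_iff' measurableSet_Ioi]
            refine Eventually.of_forall fun v hv => ?_
            have hv' : L < v := hv
            refine (h2 t ht0 ht2 v (hL0.trans hv') ?_).trans (le_of_eq ?_)
            · rw [← hte]; gcongr
            · rw [Real.exp_neg]; field_simp
        _ = K := by
            rw [integral_const_mul, integral_exp_neg_Ioi, ht]; field_simp
    have : R * L = -(∫ v in Ioc 0 L, (Φ t v - R)) - ∫ v in Ioi L, Φ t v := by linarith
    rw [← abs_of_pos hL0, ← abs_mul, this]
    rw [abs_le] at b1 b2 ⊢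
    constructor <;> linarith [b1.1, b1.2, b2.1, b2.2]
  by_contra hR
  have hR' : 0 < |R| := abs_pos.2 hR
  have a := key (max (Real.log 2) ((3 * K + 1) / |R|)) (le_max_left _ _)
  have b : |R| * ((3 * K + 1) / |R|) ≤ 3 * K :=
    (mul_le_mul_of_nonneg_left (le_max_right _ _) hR'.le).trans a
  rw [mul_div_cancel₀ _ hR'.ne'] at b
  linarith

lemma nice_lemma {r : ℝ → ℝ} (hr : ContDiff ℝ 2 r) (M : ℝ) :
    ∃ K, 0 ≤ K ∧ ∀ z ∈ Icc 0 M, ∀ z' ∈ Icc 0 M,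
      |r z - r z' - deriv r 0 * (z - z')| ≤ K * (z + z') * |z - z'| := by
  have hd : Differentiable ℝ r := hr.differentiable (by norm_num)
  have hr1 : ContDiff ℝ 1 (deriv r) := by
    have := (contDiff_succ_iff_deriv (n := 1) (f := r)).1 (by rw [one_add_one_eq_two]; exact hr)
    exact this.2.2
  have hd1 : Differentiable ℝ (deriv r) := hr1.differentiable (by norm_num)
  have hc2 : Continuous (deriv (deriv r)) := hr1.continuous_deriv (by norm_num)
  obtain ⟨K, hK⟩ := (isCompact_Icc (a := (0:ℝ)) (b := M)).exists_bound_of_continuousOn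
    hc2.continuousOn
  have hlip : ∀ u ∈ Icc 0 M, |deriv r u - deriv r 0| ≤ |K| * u := by
    intro u hu
    have := (convex_Icc (0:ℝ) M).norm_image_sub_le_of_norm_deriv_le (f := deriv r)
      (fun x _ => hd1 x) (fun x hx => (hK x hx).trans (le_abs_self K))
      (⟨le_rfl, hu.1.trans hu.2⟩ : (0:ℝ) ∈ Icc 0 M) hu
    simpa [Real.norm_eq_abs, abs_of_nonneg hu.1] using this
  refine ⟨|K|, abs_nonneg _, fun z hz z' hz' => ?_⟩
  have hm : max z z' ≤ M := max_le hz.2 hz'.2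
  have := (convex_Icc (0:ℝ) (max z z')).norm_image_sub_le_of_norm_deriv_le
    (f := fun u => r u - deriv r 0 * u) (C := |K| * max z z')
    (fun x _ => (hd x).sub ((differentiableAt_id).const_mul _))
    (fun x hx => by
      have e : deriv (fun u => r u - deriv r 0 * u) x = deriv r x - deriv r 0 := by
        have h1 : HasDerivAt (fun u => r u - deriv r 0 * u) (deriv r x - deriv r 0 * 1) x :=
          (hd x).hasDerivAt.sub ((hasDerivAt_id x).const_mul (deriv r 0))
        rw [h1.deriv, mul_one]
      rw [e, Real.norm_eq_abs]
      refine (hlip x ⟨hx.1, hx.2.trans hm⟩).trans ?_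
      gcongr; exact hx.2)
    (⟨hz'.1, le_max_right _ _⟩ : z' ∈ Icc 0 (max z z'))
    (⟨hz.1, le_max_left _ _⟩ : z ∈ Icc 0 (max z z'))
  simp only [Real.norm_eq_abs] at this
  calc |r z - r z' - deriv r 0 * (z - z')|
      = |r z - deriv r 0 * z - (r z' - deriv r 0 * z')| := by congr 1; ring
    _ ≤ |K| * max z z' * |z - z'| := this
    _ ≤ |K| * (z + z') * |z - z'| := by
        gcongr
        exact max_le (by linarith [hz'.1]) (by linarith [hz.1])

lemma lip2_lemma {φ : ℝ × ℝ → ℝ} (hφ : ContDiff ℝ 1 φ) (M : ℝ) :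
    ∃ K, 0 ≤ K ∧ ∀ z ∈ Icc 0 M, ∀ w ∈ Icc 0 M, |φ (z, w) - φ (0, 0)| ≤ K * (z + w) := by
  have hc : Continuous (fderiv ℝ φ) := hφ.continuous_fderiv (by norm_num)
  obtain ⟨K, hK⟩ := (isCompact_Icc (a := ((0:ℝ), (0:ℝ))) (b := (M, M))).exists_bound_of_continuousOn
    hc.continuousOn
  refine ⟨|K|, abs_nonneg _, fun z hz w hw => ?_⟩
  have := (convex_Icc ((0:ℝ),(0:ℝ)) (M,M)).norm_image_sub_le_of_norm_fderiv_le (f := φ) (𝕜 := ℝ)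
      (fun x _ => hφ.differentiable (by norm_num) x)
      (fun x hx => (hK x hx).trans (le_abs_self K))
      (⟨le_rfl, ⟨hz.1.trans hz.2, hz.1.trans hz.2⟩⟩ : ((0:ℝ), (0:ℝ)) ∈ Icc (0,0) (M,M))
      (⟨⟨hz.1, hw.1⟩, ⟨hz.2, hw.2⟩⟩ : (z, w) ∈ Icc (0,0) (M,M))
  rw [Real.norm_eq_abs] at this
  refine this.trans ?_
  gcongr
  simp only [Prod.mk_sub_mk, sub_zero, Prod.norm_mk, Real.norm_eq_abs, abs_of_nonneg hz.1,
    abs_of_nonneg hw.1]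
  exact max_le (by linarith [hw.1]) (by linarith [hz.1])

lemma rho_den_pos {q : ℕ} (hq : 0 < q) (z : ℝ) : 0 < ∑ k ∈ Finset.range q, Real.exp (-(k * z)) :=
  Finset.sum_pos (fun _ _ => Real.exp_pos _) ⟨0, Finset.mem_range.2 hq⟩

lemma rho_contDiff {q : ℕ} (hq : 0 < q) (b : ℕ) {n : WithTop ℕ∞} : ContDiff ℝ n (rhoF q b) := by
  unfold rhoF
  refine ContDiff.div ?_ ?_ fun z => (rho_den_pos hq z).ne'
  · exact ContDiff.sum fun k _ => by fun_prop
  · exact ContDiff.sum fun k _ => by fun_prop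

lemma rho_zero {q : ℕ} {b : ℕ} (hb : b ≤ q) : rhoF q b 0 = ((q:ℝ) - b) / q := by
  unfold rhoF
  simp [Nat.cast_sub hb]

lemma sum_Ico_id {q b : ℕ} (hb : b ≤ q) :
    ∑ k ∈ Finset.Ico b q, (k:ℝ) = ((q:ℝ) * (q - 1) - b * (b - 1)) / 2 := by
  induction q, hb using Nat.le_induction with
  | base => simp
  | succ m hm ih => rw [Finset.sum_Ico_succ_top hm, ih]; push_cast; ring

lemma rho_deriv_zero {q : ℕ} (hq : 0 < q) {b : ℕ} (hb : b ≤ q) :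
    HasDerivAt (rhoF q b) (((b:ℝ) ^ 2 - q * b) / (2 * q)) 0 := by
  have hq' : (q:ℝ) ≠ 0 := by exact_mod_cast hq.ne'
  have hS : ∀ s : Finset ℕ, HasDerivAt (fun z : ℝ => ∑ k ∈ s, Real.exp (-(k * z)))
      (- ∑ k ∈ s, (k:ℝ)) 0 := by
    intro s
    rw [← Finset.sum_neg_distrib]
    refine HasDerivAt.fun_sum fun k _ => ?_
    have := (((hasDerivAt_id (0:ℝ)).const_mul (k:ℝ)).neg).exp
    simpa using this
  have h := (hS (Finset.Ico b q)).div (hS (Finset.range q)) (rho_den_pos hq 0).ne'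
  unfold rhoF
  have h' := sum_Ico_id hb
  have h'' := sum_Ico_id (Nat.zero_le q)
  rw [← Finset.range_eq_Ico] at h''
  rw [h', h''] at h
  convert! h using 1
  simp [Nat.cast_sub hb]
  field_simp
  ring

lemma rho_nonneg {q : ℕ} (hq : 0 < q) (b : ℕ) (z : ℝ) : 0 ≤ rhoF q b z :=
  div_nonneg (Finset.sum_nonneg fun _ _ => (Real.exp_pos _).le) (rho_den_pos hq z).le

lemma rho_le_one {q : ℕ} (hq : 0 < q) (b : ℕ) (z : ℝ) : rhoF q b z ≤ 1 := by
  unfold rhoF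
  rw [div_le_one (rho_den_pos hq z)]
  refine Finset.sum_le_sum_of_subset_of_nonneg ?_ fun _ _ _ => (Real.exp_pos _).le
  intro k hk
  simp at hk ⊢; exact hk.2

lemma rho_decay {q : ℕ} (hq : 0 < q) {b : ℕ} (hb : 1 ≤ b) {z : ℝ} (hz : 0 < z) :
    rhoF q b z ≤ q / z := by
  unfold rhoF
  have h1 : 1 ≤ ∑ k ∈ Finset.range q, Real.exp (-(k * z)) := by
    have := Finset.single_le_sum (f := fun k : ℕ => Real.exp (-(k * z)))
      (fun _ _ => (Real.exp_pos _).le) (Finset.mem_range.2 hq)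
    simpa using this
  have h2 : ∑ k ∈ Finset.Ico b q, Real.exp (-(k * z)) ≤ q / z := by
    calc ∑ k ∈ Finset.Ico b q, Real.exp (-(k * z)) ≤ ∑ k ∈ Finset.Ico b q, 1 / z := by
          refine Finset.sum_le_sum fun k hk => ?_
          have hk1 : (1:ℝ) ≤ k := by exact_mod_cast hb.trans (Finset.mem_Ico.1 hk).1
          rw [Real.exp_neg, ← one_div]
          apply one_div_le_one_div_of_le hz
          have := Real.add_one_le_exp (k * z)
          nlinarith
      _ = ((q - b : ℕ) : ℝ) * (1 / z) := by simp
      _ ≤ q * (1 / z) := by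
          gcongr; exact Nat.sub_le _ _
      _ = q / z := by ring
  refine (div_le_self (Finset.sum_nonneg fun _ _ => (Real.exp_pos _).le) h1).trans h2

lemma eta_pos {q : ℕ} (hq : 0 < q) {z : ℝ} (hz : 0 < z) : 0 < etaF q z := by
  unfold etaF
  have hq' : (0:ℝ) < q := by exact_mod_cast hq
  have := Real.add_one_lt_exp (x := q * z) (by positivity)
  have : 0 < Real.exp (q * z) - 1 := by nlinarith [mul_pos hq' hz]
  positivity

lemma eta_le {q : ℕ} (hq : 0 < q) {z : ℝ} (hz : 0 < z) : etaF q z ≤ 1 / (q * z) := by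
  unfold etaF
  have hq' : (0:ℝ) < q := by exact_mod_cast hq
  apply one_div_le_one_div_of_le (by positivity)
  linarith [Real.add_one_le_exp (q * z)]

lemma eta_ge {q : ℕ} (hq : 0 < q) {z : ℝ} (hz : 0 < z) : 1 / (q * z) - 1 ≤ etaF q z := by
  unfold etaF
  have hq' : (0:ℝ) < q := by exact_mod_cast hq
  set u := (q:ℝ) * z with hu
  have hu0 : 0 < u := by positivity
  have h1 := Real.add_one_lt_exp hu0.ne'
  have h2 : 0 < Real.exp u - 1 := by linarith
  have h3 := Real.add_one_le_exp (-u)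
  have h4 : Real.exp u * Real.exp (-u) = 1 := by rw [← Real.exp_add]; simp
  have h5 : Real.exp u * (1 - u) ≤ 1 := by nlinarith [Real.exp_pos u]
  rw [sub_le_iff_le_add, div_le_iff₀ hu0, add_mul, div_mul_eq_mul_div, one_mul]
  rw [← sub_le_iff_le_add, le_div_iff₀ h2]
  nlinarith

lemma geo_decay {q : ℕ} (hq : 0 < q) {b : ℕ} (hb : b < q) {z : ℝ} (hz : 0 < z) :
    |geoF q b z - if b = 0 then 1 else 0| ≤ (q + 1) / z := by
  rw [geoF_eq hb hz]
  have hq' : (1:ℝ) ≤ q := by exact_mod_cast hq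
  have h1 := eta_pos hq hz
  have h2 : etaF q z ≤ 1 / z := (eta_le hq hz).trans (by
    apply one_div_le_one_div_of_le hz; nlinarith)
  have h3 : (0:ℝ) < 1 / z := by positivity
  have h4 : ((q:ℝ) + 1) / z = q / z + 1 / z := by ring
  have h5 : (0:ℝ) < q / z := by positivity
  split_ifs with h
  · subst h
    have : rhoF q 0 z = 1 := by
      unfold rhoF; rw [← Finset.range_eq_Ico, div_self (rho_den_pos hq z).ne']
    rw [this, h4, abs_le]
    constructor <;> linarith
  · have h6 := rho_decay hq (Nat.one_le_iff_ne_zero.2 h) hz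
    have h7 := rho_nonneg hq b z
    rw [h4, abs_le]
    constructor <;> linarith

end

end

section

open MeasureTheory Set Filter Topology

noncomputable section

/-- regular part of `kapF` -/
def rkF (q b : ℕ) (w : ℝ) : ℝ := rhoF q b w - if b = 0 then 1 / 2 else 0

/-- double regular part -/
def Lcal (q : ℕ) (g : ℕ → ℕ → ℝ) (p : ℝ × ℝ) : ℝ :=
  ∑ a ∈ Finset.range q, ∑ b ∈ Finset.range q, g a b * rkF q b p.2 * rhoF q a p.1

/-- regular part in the second variable -/
def Acal (q : ℕ) (g : ℕ → ℕ → ℝ) (w : ℝ) : ℝ :=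
  ∑ a ∈ Finset.range q, ∑ b ∈ Finset.range q, g a b * rkF q b w

/-- regular part in the first variable -/
def Ccal (q : ℕ) (g : ℕ → ℕ → ℝ) (z : ℝ) : ℝ :=
  ∑ a ∈ Finset.range q, ∑ b ∈ Finset.range q, g a b * rhoF q a z

lemma EF_decomp {q : ℕ} {g : ℕ → ℕ → ℝ}
    (hg : ∑ a ∈ Finset.range q, ∑ b ∈ Finset.range q, g a b = 0) {z w : ℝ} (hz : 0 < z)
    (hw : 0 < w) :
    EF q g z w = Lcal q g (z, w) + etaF q z * Acal q g w + etaF q w * Ccal q g z := by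
  have h0 : etaF q z * etaF q w * ∑ a ∈ Finset.range q, ∑ b ∈ Finset.range q, g a b = 0 := by
    rw [hg, mul_zero]
  rw [← add_zero (_ + _), ← h0]
  unfold EF Lcal Acal Ccal
  simp_rw [Finset.mul_sum, Finset.sum_mul]
  simp_rw [← Finset.sum_add_distrib]
  refine Finset.sum_congr rfl fun a ha => Finset.sum_congr rfl fun b hb => ?_
  unfold kapF rkF
  rw [geoF_eq (Finset.mem_range.1 ha) hz, geoF_eq (Finset.mem_range.1 hb) hw]
  ring

lemma rk_contDiff {q : ℕ} (hq : 0 < q) (b : ℕ) {n : WithTop ℕ∞} : ContDiff ℝ n (rkF q b) := by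
  unfold rkF
  exact (rho_contDiff hq b).sub contDiff_const

lemma Lcal_contDiff {q : ℕ} (hq : 0 < q) (g) : ContDiff ℝ 1 (Lcal q g) := by
  unfold Lcal
  refine ContDiff.sum fun a _ => ContDiff.sum fun b _ => ?_
  exact (contDiff_const.mul ((rk_contDiff hq b).comp contDiff_snd)).mul
    ((rho_contDiff hq a).comp contDiff_fst)

lemma Acal_contDiff {q : ℕ} (hq : 0 < q) (g) : ContDiff ℝ 2 (Acal q g) := by
  unfold Acal
  refine ContDiff.sum fun a _ => ContDiff.sum fun b _ => ?_
  exact contDiff_const.mul (rk_contDiff hq b)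

lemma Ccal_contDiff {q : ℕ} (hq : 0 < q) (g) : ContDiff ℝ 2 (Ccal q g) := by
  unfold Ccal
  refine ContDiff.sum fun a _ => ContDiff.sum fun b _ => ?_
  exact contDiff_const.mul (rho_contDiff hq a)

lemma Acal_deriv {q : ℕ} (hq : 0 < q) (g : ℕ → ℕ → ℝ) : deriv (Acal q g) 0 =
    ∑ a ∈ Finset.range q, ∑ b ∈ Finset.range q, g a b * (((b:ℝ) ^ 2 - q * b) / (2 * q)) := by
  apply HasDerivAt.deriv
  unfold Acal
  refine HasDerivAt.fun_sum fun a _ => HasDerivAt.fun_sum fun b hb => ?_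
  unfold rkF
  exact ((rho_deriv_zero hq (Finset.mem_range.1 hb).le).sub_const _).const_mul _

lemma Ccal_deriv {q : ℕ} (hq : 0 < q) (g : ℕ → ℕ → ℝ) : deriv (Ccal q g) 0 =
    ∑ a ∈ Finset.range q, ∑ b ∈ Finset.range q, g a b * (((a:ℝ) ^ 2 - q * a) / (2 * q)) := by
  apply HasDerivAt.deriv
  unfold Ccal
  refine HasDerivAt.fun_sum fun a ha => HasDerivAt.fun_sum fun b _ => ?_
  exact ((rho_deriv_zero hq (Finset.mem_range.1 ha).le)).const_mul _

lemma eta_A {q : ℕ} (hq : 0 < q) {a a1 K c z w : ℝ} (hK : 0 ≤ K) (hw : 0 < w) (hz : 0 < z)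
    (hc : w ≤ c * z) (hA : |a - a1 * w| ≤ K * w ^ 2) :
    |etaF q z * a - a1 * (w / z) / q| ≤ (K * c + |a1|) * w := by
  have hq' : (1:ℝ) ≤ q := by exact_mod_cast hq
  have e1 := eta_pos hq hz
  have e2 := eta_le hq hz
  have e3 := eta_ge hq hz
  have e4 : |etaF q z - 1 / (q * z)| ≤ 1 := by rw [abs_le]; constructor <;> linarith
  have e5 : 1 / (q * z) ≤ 1 / z := by
    apply one_div_le_one_div_of_le hz; nlinarith
  have e6 : w / z ≤ c := by rwa [div_le_iff₀ hz]
  have dec : etaF q z * a - a1 * (w / z) / q =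
      etaF q z * (a - a1 * w) + a1 * w * (etaF q z - 1 / (q * z)) := by field_simp; ring
  rw [dec]
  refine (abs_add_le _ _).trans ?_
  rw [abs_mul, abs_mul, abs_mul, abs_of_pos e1, abs_of_pos hw, add_mul]
  refine add_le_add ?_ ?_
  · calc etaF q z * |a - a1 * w| ≤ (1 / z) * (K * w ^ 2) :=
        mul_le_mul (e2.trans e5) hA (abs_nonneg _) (by positivity)
      _ = K * (w / z) * w := by field_simp
      _ ≤ K * c * w := by gcongr
  · calc |a1| * w * |etaF q z - 1 / (q * z)| ≤ |a1| * w * 1 := by gcongr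
      _ = |a1| * w := mul_one _

lemma eta_C {q : ℕ} (hq : 0 < q) {d c1 K s w n : ℝ} (hn : 0 ≤ n) (hK : 0 ≤ K) (hs : 0 ≤ s) (hw : 0 < w)
    (hC : |d - c1 * (-(n * w))| ≤ K * s * (n * w)) :
    |etaF q w * d + n * c1 / q| ≤ K * s * n + |n * c1| * w := by
  have hq' : (1:ℝ) ≤ q := by exact_mod_cast hq
  have e1 := eta_pos hq hw
  have e2 := eta_le hq hw
  have e3 := eta_ge hq hw
  have e4 : |etaF q w - 1 / (q * w)| ≤ 1 := by rw [abs_le]; constructor <;> linarith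
  have e5 : 1 / (q * w) ≤ 1 / w := by
    apply one_div_le_one_div_of_le hw; nlinarith
  have dec : etaF q w * d + n * c1 / q =
      etaF q w * (d - c1 * (-(n * w))) - (n * c1) * w * (etaF q w - 1 / (q * w)) := by
    field_simp; ring
  rw [dec]
  refine (abs_sub _ _).trans ?_
  rw [abs_mul, abs_mul, abs_mul, abs_of_pos e1, abs_of_pos hw]
  refine add_le_add ?_ ?_
  · calc etaF q w * |d - c1 * (-(n * w))| ≤ (1 / w) * (K * s * (n * w)) :=
        mul_le_mul (e2.trans e5) hC (abs_nonneg _) (by positivity)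
      _ = K * s * n := by field_simp
  · calc |n * c1| * w * |etaF q w - 1 / (q * w)| ≤ |n * c1| * w * 1 := by gcongr
      _ = |n * c1| * w := mul_one _

set_option maxHeartbeats 1000000 in
lemma F_small {n q : ℕ} (hq : 0 < q) {g g' : ℕ → ℕ → ℝ}
    (hg : ∑ a ∈ Finset.range q, ∑ b ∈ Finset.range q, g a b = 0)
    (hgg : ∀ a, ∑ b ∈ Finset.range q, g a b = ∑ b ∈ Finset.range q, g' a b)
    (hA : Acal q g 0 = 0) (hA' : Acal q g' 0 = 0)
    (hAA : deriv (Acal q g) 0 = deriv (Acal q g') 0) :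
    ∃ K, ∀ x y : ℝ, 0 < y → y < x → x ≤ 1 →
      |EF q g (x * (epsU n)⁻¹ + epsU n * y) (x - y) -
        EF q g' (epsU n * x + y * (epsU n)⁻¹) (x - y) -
        (Lcal q g (0,0) - Lcal q g' (0,0) + n * deriv (Acal q g) 0 / q
          - n * deriv (Ccal q g) 0 / q)| ≤ K * (x + y / x) := by
  have he := epsU_pos n
  set ε := epsU n with hε
  have hei : 0 < ε⁻¹ := inv_pos.2 he
  have hinv := epsU_inv n
  rw [← hε] at hinv
  have hmul : ε * ε⁻¹ = 1 := mul_inv_cancel₀ he.ne'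
  have hM1 : 1 ≤ ε + ε⁻¹ := by nlinarith [sq_nonneg (ε - ε⁻¹)]
  set M := ε + ε⁻¹ with hM
  have hg' : ∑ a ∈ Finset.range q, ∑ b ∈ Finset.range q, g' a b = 0 := by
    rw [← hg]; exact Finset.sum_congr rfl fun a _ => (hgg a).symm
  have hCC : Ccal q g' = Ccal q g := by
    ext z; unfold Ccal
    refine Finset.sum_congr rfl fun a _ => ?_
    rw [← Finset.sum_mul, ← Finset.sum_mul, hgg]
  obtain ⟨K1, hK1, H1⟩ := lip2_lemma (Lcal_contDiff hq g) M
  obtain ⟨K2, hK2, H2⟩ := lip2_lemma (Lcal_contDiff hq g') M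
  obtain ⟨K3, hK3, H3⟩ := nice_lemma (Acal_contDiff hq g) M
  obtain ⟨K4, hK4, H4⟩ := nice_lemma (Acal_contDiff hq g') M
  obtain ⟨K5, hK5, H5⟩ := nice_lemma (Ccal_contDiff hq g) M
  set A1 := deriv (Acal q g) 0 with hA1
  set C1 := deriv (Ccal q g) 0 with hC1
  refine ⟨K1 * (M + 1) + K2 * (M + 1) + (K3 * ε + |A1|) + (K4 * ε⁻¹ + |A1|) + (K5 * (2 * M) * n + |n * C1|)
    + |A1| * (ε * (1 + ε ^ 2)) + |A1| * (ε⁻¹ * (1 + ε⁻¹ ^ 2)), fun x y hy hxy hx1 => ?_⟩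
  have hx : 0 < x := hy.trans hxy
  set z := x * ε⁻¹ + ε * y with hz
  set z' := ε * x + y * ε⁻¹ with hz'
  set w := x - y with hw
  have hz0 : 0 < z := by positivity
  have hz0' : 0 < z' := by positivity
  have hw0 : 0 < w := by rw [hw]; linarith
  have hwx : w ≤ x := by rw [hw]; linarith
  have hzM : z ≤ M * x := by rw [hz, hM]; nlinarith
  have hzM' : z' ≤ M * x := by rw [hz', hM]; nlinarith
  have hMx : M * x ≤ M := by nlinarith
  have hzI : z ∈ Icc 0 M := ⟨hz0.le, hzM.trans hMx⟩
  have hzI' : z' ∈ Icc 0 M := ⟨hz0'.le, hzM'.trans hMx⟩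
  have hwI : w ∈ Icc 0 M := ⟨hw0.le, hwx.trans (hx1.trans hM1)⟩
  have h0I : (0:ℝ) ∈ Icc 0 M := ⟨le_rfl, by linarith⟩
  have hzz : z - z' = -(n * w) := by rw [hz, hz', hw, hinv]; ring
  have b1 := H1 z hzI w hwI
  have b2 := H2 z' hzI' w hwI
  have c3 := H3 w hwI 0 h0I
  have c4 := H4 w hwI 0 h0I
  have c5 := H5 z hzI z' hzI'
  rw [hA] at c3
  rw [hA', ← hAA] at c4
  rw [hzz, abs_neg, abs_of_nonneg (show (0:ℝ) ≤ n * w by positivity)] at c5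
  simp only [sub_zero, add_zero, abs_of_pos hw0] at c3 c4
  have b3 := eta_A hq (c := ε) (z := z) hK3 hw0 hz0 (by
    rw [hz, hw]
    have : ε * (x * ε⁻¹ + ε * y) = x + ε^2 * y := by field_simp
    rw [this]; nlinarith [mul_pos (pow_pos he 2) hy]) (c3.trans (le_of_eq (by ring)))
  have b4 := eta_A hq (c := ε⁻¹) (z := z') hK4 hw0 hz0' (by
    rw [hz', hw]
    have : ε⁻¹ * (ε * x + y * ε⁻¹) = x + ε⁻¹^2 * y := by field_simp
    rw [this]; nlinarith [mul_pos (pow_pos hei 2) hy]) (c4.trans (le_of_eq (by ring)))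
  have b5 := eta_C hq (s := z + z') (Nat.cast_nonneg n) hK5 (by linarith) hw0 c5
  have hq' : (1:ℝ) ≤ q := by exact_mod_cast hq
  have b6 : |A1 * (w / z) / q - A1 * ε / q| ≤ |A1| * (ε * (1 + ε ^ 2)) * (y / x) := by
    have e : A1 * (w / z) / q - A1 * ε / q = A1 * (-((1 + ε ^ 2) * y / z)) / q := by
      have hzne := hz0.ne'
      have : w / z - ε = -((1 + ε ^ 2) * y / z) := by
        rw [eq_neg_iff_add_eq_zero]
        field_simp
        rw [hw, hz]
        field_simp
        ring
      rw [← this]; ring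
    rw [e, abs_div, abs_mul, abs_neg, abs_of_nonneg (show (0:ℝ) ≤ q by linarith),
      abs_of_nonneg (show 0 ≤ (1 + ε ^ 2) * y / z by positivity)]
    have h1 : (1 + ε ^ 2) * y / z ≤ ε * (1 + ε ^ 2) * (y / x) := by
      rw [div_le_iff₀ hz0, hz]
      have : ε * (1 + ε ^ 2) * (y / x) * (x * ε⁻¹ + ε * y) =
        (1 + ε ^ 2) * y + ε * (1 + ε ^ 2) * (y / x) * (ε * y) := by field_simp
      rw [this]
      have : 0 ≤ ε * (1 + ε ^ 2) * (y / x) * (ε * y) := by positivity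
      linarith
    calc |A1| * ((1 + ε ^ 2) * y / z) / q ≤ |A1| * ((1 + ε ^ 2) * y / z) :=
          div_le_self (by positivity) hq'
      _ ≤ |A1| * (ε * (1 + ε ^ 2) * (y / x)) := by gcongr
      _ = _ := by ring
  have b7 : |A1 * (w / z') / q - A1 * ε⁻¹ / q| ≤ |A1| * (ε⁻¹ * (1 + ε⁻¹ ^ 2)) * (y / x) := by
    have e : A1 * (w / z') / q - A1 * ε⁻¹ / q = A1 * (-((1 + ε⁻¹ ^ 2) * y / z')) / q := by
      have hzne := hz0'.ne'
      have : w / z' - ε⁻¹ = -((1 + ε⁻¹ ^ 2) * y / z') := by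
        have h3 : w - ε⁻¹ * z' = -((1 + ε⁻¹ ^ 2) * y) := by
          rw [hw, hz']; field_simp; ring
        rw [← neg_div, ← h3, sub_div w, mul_div_assoc, div_self hzne, mul_one]
      rw [← this]; ring
    rw [e, abs_div, abs_mul, abs_neg, abs_of_nonneg (show (0:ℝ) ≤ q by linarith),
      abs_of_nonneg (show 0 ≤ (1 + ε⁻¹ ^ 2) * y / z' by positivity)]
    have h1 : (1 + ε⁻¹ ^ 2) * y / z' ≤ ε⁻¹ * (1 + ε⁻¹ ^ 2) * (y / x) := by
      rw [div_le_iff₀ hz0', hz']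
      have : ε⁻¹ * (1 + ε⁻¹ ^ 2) * (y / x) * (ε * x + y * ε⁻¹) =
        (1 + ε⁻¹ ^ 2) * y + ε⁻¹ * (1 + ε⁻¹ ^ 2) * (y / x) * (y * ε⁻¹) := by field_simp
      rw [this]
      have : 0 ≤ ε⁻¹ * (1 + ε⁻¹ ^ 2) * (y / x) * (y * ε⁻¹) := by positivity
      linarith
    calc |A1| * ((1 + ε⁻¹ ^ 2) * y / z') / q ≤ |A1| * ((1 + ε⁻¹ ^ 2) * y / z') :=
          div_le_self (by positivity) hq'
      _ ≤ |A1| * (ε⁻¹ * (1 + ε⁻¹ ^ 2) * (y / x)) := by gcongr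
      _ = _ := by ring
  rw [EF_decomp hg hz0 hw0, EF_decomp hg' hz0' hw0, hCC]
  have hnε : (n:ℝ) = ε - ε⁻¹ := by rw [hinv]; ring
  have hid : Lcal q g (z, w) + etaF q z * Acal q g w + etaF q w * Ccal q g z -
      (Lcal q g' (z', w) + etaF q z' * Acal q g' w + etaF q w * Ccal q g z') -
      (Lcal q g (0, 0) - Lcal q g' (0, 0) + n * A1 / q - n * C1 / q) =
      (Lcal q g (z, w) - Lcal q g (0,0)) - (Lcal q g' (z', w) - Lcal q g' (0,0))
      + (etaF q z * Acal q g w - A1 * (w / z) / q)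
      - (etaF q z' * Acal q g' w - A1 * (w / z') / q)
      + (A1 * (w / z) / q - A1 * ε / q) - (A1 * (w / z') / q - A1 * ε⁻¹ / q)
      + (etaF q w * (Ccal q g z - Ccal q g z') + n * C1 / q) := by
    have : (n:ℝ) * A1 / q = A1 * ε / q - A1 * ε⁻¹ / q := by rw [hnε]; ring
    rw [this]; ring
  rw [hid]
  have d1 : K1 * (z + w) ≤ K1 * (M + 1) * x := by
    rw [mul_assoc]; gcongr; linarith
  have d2 : K2 * (z' + w) ≤ K2 * (M + 1) * x := by
    rw [mul_assoc]; gcongr; linarith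
  have d3 : (K3 * ε + |A1|) * w ≤ (K3 * ε + |A1|) * x := by gcongr
  have d4 : (K4 * ε⁻¹ + |A1|) * w ≤ (K4 * ε⁻¹ + |A1|) * x := by gcongr
  have d5 : K5 * (z + z') * n + |n * C1| * w ≤ (K5 * (2 * M) * n + |n * C1|) * x := by
    rw [add_mul]
    refine add_le_add ?_ (by gcongr)
    calc K5 * (z + z') * n ≤ K5 * (2 * M * x) * n := by gcongr; linarith
      _ = _ := by ring
  have hyx : 0 ≤ y / x := by positivity
  have p1 : 0 ≤ K1 * (M + 1) := by positivity
  have p2 : 0 ≤ K2 * (M + 1) := by positivity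
  have p3 : 0 ≤ K3 * ε + |A1| := by positivity
  have p4 : 0 ≤ K4 * ε⁻¹ + |A1| := by positivity
  have p5 : 0 ≤ K5 * (2 * M) * n + |n * C1| := by positivity
  have p6 : 0 ≤ |A1| * (ε * (1 + ε ^ 2)) := by positivity
  have p7 : 0 ≤ |A1| * (ε⁻¹ * (1 + ε⁻¹ ^ 2)) := by positivity
  generalize K1 * (M + 1) = k1 at *
  generalize K2 * (M + 1) = k2 at *
  generalize K3 * ε + |A1| = k3 at *
  generalize K4 * ε⁻¹ + |A1| = k4 at *
  generalize K5 * (2 * M) * n + |n * C1| = k5 at *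
  generalize |A1| * (ε * (1 + ε ^ 2)) = k6 at *
  generalize |A1| * (ε⁻¹ * (1 + ε⁻¹ ^ 2)) = k7 at *
  have tot : k1 * x + k2 * x + k3 * x + k4 * x + k5 * x + k6 * (y/x) + k7 * (y/x) ≤
      (k1 + k2 + k3 + k4 + k5 + k6 + k7) * (x + y / x) := by
    have := mul_nonneg p1 hyx
    have := mul_nonneg p2 hyx
    have := mul_nonneg p3 hyx
    have := mul_nonneg p4 hyx
    have := mul_nonneg p5 hyx
    have := mul_nonneg p6 hx.le
    have := mul_nonneg p7 hx.le
    nlinarith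
  refine le_trans ?_ tot
  have b1' := b1.trans d1
  have b2' := b2.trans d2
  have b3' := b3.trans d3
  have b4' := b4.trans d4
  have b5' := b5.trans d5
  rw [abs_le] at b1' b2' b3' b4' b5' b6 b7 ⊢
  constructor
  · linarith [b1'.1, b2'.2, b3'.1, b4'.2, b5'.1, b6.1, b7.2]
  · linarith [b1'.2, b2'.1, b3'.2, b4'.1, b5'.2, b6.2, b7.1]

lemma F_large {n q : ℕ} (hq : 0 < q) {g g' : ℕ → ℕ → ℝ} (h0 : ∀ b, g 0 b = g' 0 b) :
    ∃ K, 0 ≤ K ∧ ∀ x y : ℝ, 0 < y → 1 / 2 ≤ x - y →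
      |EF q g (x * (epsU n)⁻¹ + epsU n * y) (x - y) -
        EF q g' (epsU n * x + y * (epsU n)⁻¹) (x - y)| ≤ K / x := by
  have he := epsU_pos n
  set ε := epsU n with hε
  have hei : 0 < ε⁻¹ := inv_pos.2 he
  have hq' : (1:ℝ) ≤ q := by exact_mod_cast hq
  -- bound for one side
  have side : ∀ G : ℕ → ℕ → ℝ, ∀ z w : ℝ, 0 < z → 1/2 ≤ w →
      |EF q G z w - ∑ b ∈ Finset.range q, G 0 b * kapF q b w| ≤
        (∑ a ∈ Finset.range q, ∑ b ∈ Finset.range q, |G a b| * 4) * ((q + 1) / z) := by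
    intro G z w hz hw
    have hw0 : 0 < w := by linarith
    have e : EF q G z w - ∑ b ∈ Finset.range q, G 0 b * kapF q b w =
        ∑ a ∈ Finset.range q, (∑ b ∈ Finset.range q, G a b * kapF q b w) *
          (geoF q a z - if a = 0 then 1 else 0) := by
      unfold EF
      simp_rw [mul_sub]
      rw [Finset.sum_sub_distrib]
      congr 1
      symm
      rw [Finset.sum_eq_single_of_mem 0 (Finset.mem_range.2 hq)]
      · simp
      · intro a _ ha; simp [ha]
    rw [e]
    refine (Finset.abs_sum_le_sum_abs _ _).trans ?_
    rw [Finset.sum_mul]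
    refine Finset.sum_le_sum fun a ha => ?_
    rw [abs_mul]
    refine mul_le_mul ?_ (geo_decay hq (Finset.mem_range.1 ha) hz) (abs_nonneg _)
      (Finset.sum_nonneg fun _ _ => by positivity)
    refine (Finset.abs_sum_le_sum_abs _ _).trans ?_
    refine Finset.sum_le_sum fun b hb => ?_
    rw [abs_mul]
    gcongr
    unfold kapF
    rw [geoF_eq (Finset.mem_range.1 hb) hw0]
    have e1 := eta_pos hq hw0
    have e2 := eta_le hq hw0
    have e3 : 1 / (q * w) ≤ 2 := by
      rw [div_le_iff₀ (by positivity)]; nlinarith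
    have e4 := rho_nonneg hq b w
    have e5 := rho_le_one hq b w
    rw [abs_le]
    split_ifs <;> constructor <;> linarith
  set S := ∑ a ∈ Finset.range q, ∑ b ∈ Finset.range q, |g a b| * 4 with hS
  set S' := ∑ a ∈ Finset.range q, ∑ b ∈ Finset.range q, |g' a b| * 4 with hS'
  have hS0 : 0 ≤ S := Finset.sum_nonneg fun _ _ => Finset.sum_nonneg fun _ _ => by positivity
  have hS0' : 0 ≤ S' := Finset.sum_nonneg fun _ _ => Finset.sum_nonneg fun _ _ => by positivity
  refine ⟨S * (q + 1) * ε + S' * (q + 1) * ε⁻¹, by positivity, fun x y hy hxy => ?_⟩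
  have hx : 0 < x := by linarith
  have hz0 : 0 < x * ε⁻¹ + ε * y := by positivity
  have hz0' : 0 < ε * x + y * ε⁻¹ := by positivity
  have s1 := side g _ _ hz0 hxy
  have s2 := side g' _ _ hz0' hxy
  simp_rw [← h0] at s2
  have t1 : ((q:ℝ) + 1) / (x * ε⁻¹ + ε * y) ≤ (q + 1) * ε / x := by
    rw [div_le_div_iff₀ hz0 hx]
    have : ((q:ℝ) + 1) * ε * (x * ε⁻¹ + ε * y) = (q + 1) * x + (q + 1) * ε * (ε * y) := by
      field_simp
    rw [this]
    have : 0 ≤ ((q:ℝ) + 1) * ε * (ε * y) := by positivity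
    linarith
  have t2 : ((q:ℝ) + 1) / (ε * x + y * ε⁻¹) ≤ (q + 1) * ε⁻¹ / x := by
    rw [div_le_div_iff₀ hz0' hx]
    have : ((q:ℝ) + 1) * ε⁻¹ * (ε * x + y * ε⁻¹) = (q + 1) * x + (q + 1) * ε⁻¹ * (y * ε⁻¹) := by
      field_simp
    rw [this]
    have : 0 ≤ ((q:ℝ) + 1) * ε⁻¹ * (y * ε⁻¹) := by positivity
    linarith
  have s1' := s1.trans (mul_le_mul_of_nonneg_left t1 hS0)
  have s2' := s2.trans (mul_le_mul_of_nonneg_left t2 hS0')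
  have e : (S * (q + 1) * ε + S' * (q + 1) * ε⁻¹) / x =
    S * ((q + 1) * ε / x) + S' * ((q + 1) * ε⁻¹ / x) := by ring
  rw [e]
  rw [abs_le] at s1' s2' ⊢
  constructor <;> linarith [s1'.1, s1'.2, s2'.1, s2'.2]

end

end

section

open MeasureTheory Set Filter Topology

noncomputable section

lemma sum_reflect_nat {q : ℕ} (hq : 0 < q) (F : ℕ → ℝ) :
    ∑ b ∈ Finset.range q, F b = F 0 + ∑ b ∈ Finset.Ico 1 q, F b := by
  rw [Finset.range_eq_Ico, Finset.sum_eq_sum_Ico_succ_bot hq]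

lemma sum_Ico_refl {q : ℕ} (hq : 0 < q) (F : ℕ → ℝ) :
    ∑ b ∈ Finset.Ico 1 q, F b = ∑ b ∈ Finset.Ico 1 q, F (q - b) := by
  rw [Finset.sum_Ico_reflect F 1 (show q ≤ q + 1 by omega)]
  simp

lemma sum_neg_per {q : ℕ} (hq : 0 < q) {φ : ℤ → ℝ}
    (hφ : ∀ a b : ℤ, a ≡ b [ZMOD q] → φ a = φ b) :
    ∑ a ∈ Finset.range q, φ (-(a:ℤ)) = ∑ a ∈ Finset.range q, φ a := by
  rw [sum_reflect_nat hq, sum_reflect_nat hq (fun a => φ (a:ℤ)),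
    sum_Ico_refl hq (fun a => φ (a:ℤ))]
  simp only [Nat.cast_zero, neg_zero]
  congr 1
  refine Finset.sum_congr rfl fun a ha => ?_
  rw [Finset.mem_Ico] at ha
  apply hφ
  rw [Nat.cast_sub ha.2.le]
  rw [Int.modEq_iff_dvd]
  exact ⟨1, by ring⟩

lemma sum_shift_per {q : ℕ} {φ : ℤ → ℝ}
    (hφ : ∀ a b : ℤ, a ≡ b [ZMOD q] → φ a = φ b) (m : ℕ) :
    ∑ a ∈ Finset.range q, φ (a + m) = ∑ a ∈ Finset.range q, φ a := by
  induction m with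
  | zero => simp
  | succ m ih =>
    rw [← ih]
    have h1 := Finset.sum_range_succ (fun a : ℕ => φ (a + m)) q
    have h2 := Finset.sum_range_succ' (fun a : ℕ => φ (a + m)) q
    have h3 : φ ((q:ℤ) + m) = φ (((0:ℕ):ℤ) + m) := by
      apply hφ
      rw [Int.modEq_iff_dvd]
      exact ⟨-1, by push_cast; ring⟩
    have h4 : ∑ a ∈ Finset.range q, φ (a + (m + 1 : ℕ)) = ∑ a ∈ Finset.range q, φ ((a + 1 : ℕ) + m) :=
      Finset.sum_congr rfl fun a _ => by congr 1; push_cast; ring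
    rw [h4]
    linarith

/-- The double sum of the character over both coordinates, regular part. -/
def Pcal (q r : ℕ) (c : ℕ → ℕ → ℝ) (p : ℝ × ℝ) : ℝ :=
  ∑ a ∈ Finset.range q, ∑ k ∈ Finset.range r, c a k * rhoF q a p.1 * rhoF r k p.2

lemma Pcal_contDiff {q r : ℕ} (hq : 0 < q) (hr : 0 < r) (c) : ContDiff ℝ 1 (Pcal q r c) := by
  unfold Pcal
  refine ContDiff.sum fun a _ => ContDiff.sum fun b _ => ?_
  exact (contDiff_const.mul ((rho_contDiff hq a).comp contDiff_fst)).mul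
    ((rho_contDiff hr b).comp contDiff_snd)

lemma Pcal_geo {q r : ℕ} {c : ℕ → ℕ → ℝ}
    (h1 : ∀ k, ∑ a ∈ Finset.range q, c a k = 0) (h2 : ∀ a, ∑ k ∈ Finset.range r, c a k = 0)
    {x y : ℝ} (hx : 0 < x) (hy : 0 < y) :
    ∑ a ∈ Finset.range q, ∑ b ∈ Finset.range r, c a b * geoF q a x * geoF r b y =
      Pcal q r c (x, y) := by
  have e1 : ∑ a ∈ Finset.range q, ∑ k ∈ Finset.range r, c a k * (rhoF q a x * etaF r y) = 0 := by
    refine Finset.sum_eq_zero fun a _ => ?_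
    rw [← Finset.sum_mul, h2, zero_mul]
  have e2 : ∑ a ∈ Finset.range q, ∑ k ∈ Finset.range r, c a k * (etaF q x * rhoF r k y) = 0 := by
    rw [Finset.sum_comm]
    refine Finset.sum_eq_zero fun a _ => ?_
    rw [← Finset.sum_mul, h1, zero_mul]
  have e3 : ∑ a ∈ Finset.range q, ∑ k ∈ Finset.range r, c a k * (etaF q x * etaF r y) = 0 := by
    refine Finset.sum_eq_zero fun a _ => ?_
    rw [← Finset.sum_mul, h2, zero_mul]
  rw [← add_zero (Pcal _ _ _ _)]
  nth_rewrite 1 [← e1]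
  rw [← add_zero (_ + _), ← e2, ← add_zero (_ + _), ← e3]
  unfold Pcal
  simp_rw [← Finset.sum_add_distrib]
  refine Finset.sum_congr rfl fun a ha => Finset.sum_congr rfl fun b hb => ?_
  rw [geoF_eq (Finset.mem_range.1 ha) hx, geoF_eq (Finset.mem_range.1 hb) hy]
  ring

lemma Pcal_decay {q r : ℕ} (hq : 0 < q) (hr : 0 < r) {c : ℕ → ℕ → ℝ}
    (h1 : ∀ k, c 0 k = 0) (h2 : ∀ a, c a 0 = 0) :
    ∃ K, 0 ≤ K ∧ ∀ x y : ℝ, 0 < x → 0 < y →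
      |Pcal q r c (x, y)| ≤ K / x ∧ |Pcal q r c (x, y)| ≤ K / y := by
  refine ⟨(∑ a ∈ Finset.range q, ∑ k ∈ Finset.range r, |c a k|) * (q + r), by positivity,
    fun x y hx hy => ⟨?_, ?_⟩⟩
  · unfold Pcal
    rw [mul_div_assoc, Finset.sum_mul]
    refine (Finset.abs_sum_le_sum_abs _ _).trans (Finset.sum_le_sum fun a _ => ?_)
    rw [Finset.sum_mul]
    refine (Finset.abs_sum_le_sum_abs _ _).trans (Finset.sum_le_sum fun k _ => ?_)
    rw [mul_assoc, abs_mul]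
    rcases Nat.eq_zero_or_pos a with rfl | ha
    · simp [h1]
    refine mul_le_mul_of_nonneg_left ?_ (abs_nonneg _)
    have r1 := rho_nonneg hq a x
    have r2 := rho_nonneg hr k y
    have r3 := rho_le_one hr k y
    have r4 := rho_decay hq ha hx
    rw [abs_of_nonneg (mul_nonneg r1 r2)]
    calc rhoF q a x * rhoF r k y ≤ (q / x) * 1 := mul_le_mul r4 r3 r2 (by positivity)
      _ = q / x := mul_one _
      _ ≤ (q + r) / x := by gcongr; simp
  · unfold Pcal
    rw [mul_div_assoc, Finset.sum_mul]
    refine (Finset.abs_sum_le_sum_abs _ _).trans (Finset.sum_le_sum fun a _ => ?_)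
    rw [Finset.sum_mul]
    refine (Finset.abs_sum_le_sum_abs _ _).trans (Finset.sum_le_sum fun k _ => ?_)
    rw [mul_assoc, abs_mul]
    rcases Nat.eq_zero_or_pos k with rfl | ha
    · simp [h2]
    refine mul_le_mul_of_nonneg_left ?_ (abs_nonneg _)
    have r1 := rho_nonneg hq a x
    have r2 := rho_nonneg hr k y
    have r3 := rho_le_one hq a x
    have r4 := rho_decay hr ha hy
    rw [abs_of_nonneg (mul_nonneg r1 r2)]
    calc rhoF q a x * rhoF r k y ≤ 1 * (r / y) := mul_le_mul r3 r4 r2 (by positivity)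
      _ = r / y := one_mul _
      _ ≤ (q + r) / y := by gcongr; simp

/-- symmetrised integral -/
lemma integral_sym {H : ℝ → ℝ} (hH : Integrable H) :
    IntegrableOn (fun v => H v + H (-v)) (Ioi 0) ∧
      ∫ v in Ioi 0, (H v + H (-v)) = ∫ v, H v := by
  have h1 : IntegrableOn H (Ioi 0) := hH.integrableOn
  have h2 : IntegrableOn (fun v => H (-v)) (Ioi 0) := hH.comp_neg.integrableOn
  refine ⟨h1.add h2, ?_⟩
  rw [integral_add h1 h2, integral_comp_neg_Ioi, neg_zero, add_comm]
  exact intervalIntegral.integral_Iic_add_Ioi hH.integrableOn hH.integrableOn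
end

end

section

open MeasureTheory Set Filter Topology

noncomputable section

lemma limit_eq {n q D : ℕ} (hn : 0 < n) (hq : 0 < q) (hD : 0 < D) {f : ℤ → ℝ} {χ : ℕ → ℝ} {H : ℝ}
    (hf : ∀ z, |f z| ≤ H) (hχ : ∀ k, |χ k| ≤ 1)
    (hper : ∀ a b : ℤ, a ≡ b [ZMOD q] → f a = f b) (hodd : ∀ a, f (-a) = - f a)
    (hχp : ∀ k, χ (k + q * D) = χ k) (hχe : ∀ k, k ≤ q * D → χ (q * D - k) = χ k)
    (hcount : ∀ N : ℕ, 1 ≤ N →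
      (Nat.card {p : ℕ × ℕ // p.2 < n * p.1 ∧ Qf n p.1 p.2 = N} : ℝ) = ∑ d ∈ N.divisors, χ d)
    {g g' : ℕ → ℕ → ℝ}
    (hg0 : g = fun a b : ℕ => f (Qf n a b)) (hg0' : g' = fun a b : ℕ => f (Qf n a (-b)))
    (hg : ∑ a ∈ Finset.range q, ∑ b ∈ Finset.range q, g a b = 0)
    (hgg : ∀ a, ∑ b ∈ Finset.range q, g a b = ∑ b ∈ Finset.range q, g' a b)
    (hA : Acal q g 0 = 0) (hAA : Acal q g' = Acal q g) (hgg0 : ∀ b, g 0 b = g' 0 b) :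
    Pcal q (q * D) (fun a k => f (a * k) * χ k) (0, 0) =
      (Lcal q g (0,0) - Lcal q g' (0,0) + n * deriv (Acal q g) 0 / q
          - n * deriv (Ccal q g) 0 / q) := by
  have hf0 : f 0 = 0 := by have := hodd 0; simp at this; linarith
  have hr : 0 < q * D := by positivity
  set c : ℕ → ℕ → ℝ := fun a k => f (a * k) * χ k with hc
  have hH0 : 0 ≤ H := (abs_nonneg _).trans (hf 0)
  have cH : ∀ a k, |c a k| ≤ H := fun a k => by
    rw [hc]; simp only; rw [abs_mul]
    calc _ ≤ H * 1 := mul_le_mul (hf _) (hχ _) (abs_nonneg _) hH0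
      _ = H := mul_one _
  have c1 : ∀ a k, c (a + q) k = c a k := fun a k => by
    simp only [hc]; congr 1; apply hper
    rw [Int.modEq_iff_dvd]; exact ⟨-k, by push_cast; ring⟩
  have c2 : ∀ a k, c a (k + q * D) = c a k := fun a k => by
    simp only [hc]; rw [hχp]; congr 1; apply hper
    rw [Int.modEq_iff_dvd]; exact ⟨-(a * D), by push_cast; ring⟩
  have s1 : ∀ k, ∑ a ∈ Finset.range q, c a k = 0 := fun k => by
    simp only [hc]
    rw [← Finset.sum_mul]
    have := sum_neg_per hq (φ := fun a => f (a * k)) (fun a b hab => hper _ _ (hab.mul_right _))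
    simp only [neg_mul, hodd, Finset.sum_neg_distrib] at this
    have h0 : ∑ a ∈ Finset.range q, f (a * k) = 0 := by linarith
    rw [h0, zero_mul]
  have s2 : ∀ a, ∑ k ∈ Finset.range (q * D), c a k = 0 := fun a => by
    have e1 := sum_Ico_refl hr (c a)
    have e2 : ∑ k ∈ Finset.Ico 1 (q * D), c a (q * D - k) = - ∑ k ∈ Finset.Ico 1 (q * D), c a k := by
      rw [← Finset.sum_neg_distrib]
      refine Finset.sum_congr rfl fun k hk => ?_
      rw [Finset.mem_Ico] at hk
      simp only [hc]
      rw [hχe k hk.2.le, ← neg_mul, ← hodd]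
      congr 1
      apply hper
      rw [Nat.cast_sub hk.2.le, Int.modEq_iff_dvd]
      exact ⟨-(a * D), by push_cast; ring⟩
    rw [sum_reflect_nat hr]
    have : c a 0 = 0 := by simp [hc, hf0]
    linarith
  have hG : ∀ x y : ℝ, 0 < x → 0 < y → Gfun f χ x y = Pcal q (q * D) c (x, y) := by
    intro x y hx hy
    rw [← Pcal_geo s1 s2 hx hy, ← G_closed hq hr cH c1 c2 hx hy]
    rfl
  set RC := (Lcal q g (0,0) - Lcal q g' (0,0) + n * deriv (Acal q g) 0 / q
          - n * deriv (Ccal q g) 0 / q) with hRC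
  obtain ⟨K1, hK1, H1⟩ := lip2_lemma (Pcal_contDiff hq hr c) 1
  obtain ⟨K2, hK2, H2⟩ := Pcal_decay hq hr (c := c) (by simp [hc, hf0]) (by simp [hc, hf0])
  obtain ⟨K3, H3⟩ := F_small (n := n) hq hg hgg hA (by rw [hAA, hA]) (by rw [hAA])
  obtain ⟨K4, hK4, H4⟩ := F_large (n := n) hq hgg0
  rw [← sub_eq_zero]
  set hh : ℝ → ℝ → ℝ := fun t v => (1/2) * (Gfun f χ (t * Real.exp v) (t * Real.exp (-v))
    - Ffun n f (t * Real.exp v) (t * Real.exp (-v))) with hhh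
  have h_integ : ∀ t, 0 < t → Integrable (hh t) ∧ ∫ v, hh t v = 0 := by
    intro t ht
    obtain ⟨i1, i2, i3⟩ := integral_FG hf hχ hf0 hcount ht
    refine ⟨(i1.sub i2).const_mul _, ?_⟩
    simp only [hhh]
    rw [integral_const_mul, integral_sub i1 i2, i3]; simp
  have form : ∀ t v, 0 < t → 0 < v → hh t v + hh t (-v) =
      (1/2) * (Pcal q (q * D) c (t * Real.exp v, t * Real.exp (-v)) +
        Pcal q (q * D) c (t * Real.exp (-v), t * Real.exp v)) -
      (EF q g (t * Real.exp v * (epsU n)⁻¹ + epsU n * (t * Real.exp (-v))) (t * Real.exp v - t * Real.exp (-v)) -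
        EF q g' (epsU n * (t * Real.exp v) + t * Real.exp (-v) * (epsU n)⁻¹) (t * Real.exp v - t * Real.exp (-v))) := by
    intro t v ht hv
    have hx : 0 < t * Real.exp v := by positivity
    have hy : 0 < t * Real.exp (-v) := by positivity
    have hxy : t * Real.exp (-v) < t * Real.exp v := by
      gcongr; linarith
    have := F_closed hn hq hf hper hxy hy
    simp only [hhh, neg_neg]
    rw [← hG _ _ hx hy, ← hG _ _ hy hx, hg0, hg0']
    linarith
  refine log_lemma (Φ := fun t v => hh t v + hh t (-v)) (K := K1 + K2 + |K3| + K4)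
    (fun t ht _ => (integral_sym (h_integ t ht).1).1)
    (fun t ht _ => by rw [(integral_sym (h_integ t ht).1).2, (h_integ t ht).2]) ?_ ?_
  · intro t ht ht2 v hv hv1
    rw [form t v ht hv]
    have hx : 0 < t * Real.exp v := by positivity
    have hy : 0 < t * Real.exp (-v) := by positivity
    have hxy : t * Real.exp (-v) < t * Real.exp v := by
      gcongr; linarith
    have hev : 0 < Real.exp (-v) := Real.exp_pos _
    have hyx : t * Real.exp (-v) / (t * Real.exp v) ≤ Real.exp (-v) := by
      rw [div_le_iff₀ hx]
      have : 1 ≤ Real.exp v := Real.one_le_exp hv.le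
      nlinarith [mul_pos ht hev]
    have hyy : t * Real.exp (-v) ≤ Real.exp (-v) := by nlinarith
    generalize t * Real.exp v = x at *
    generalize t * Real.exp (-v) = y at *
    generalize Real.exp (-v) = u at *
    have b1 := H1 x ⟨hx.le, hv1⟩ y ⟨hy.le, hxy.le.trans hv1⟩
    have b2 := H1 y ⟨hy.le, hxy.le.trans hv1⟩ x ⟨hx.le, hv1⟩
    have b3 := H3 x y hy hxy hv1
    have b3' : K3 * (x + y / x) ≤ |K3| * (x + u) := by
      calc _ ≤ |K3| * (x + y / x) := by
            apply mul_le_mul_of_nonneg_right (le_abs_self _); positivity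
        _ ≤ _ := by gcongr
    have b1' : K1 * (x + y) ≤ K1 * (x + u) := by gcongr
    have p2 : 0 ≤ K2 * (x + u) := by positivity
    have p4 : 0 ≤ K4 * (x + u) := by positivity
    rw [add_comm y x] at b2
    rw [abs_le] at b1 b2 b3 ⊢
    constructor
    · nlinarith [b1.1, b2.1, b3.2]
    · nlinarith [b1.2, b2.2, b3.1]
  · intro t ht ht2 v hv hv1
    rw [form t v ht hv]
    have hx : 0 < t * Real.exp v := by positivity
    have hy : 0 < t * Real.exp (-v) := by positivity
    have hxy : 1 / 2 ≤ t * Real.exp v - t * Real.exp (-v) := by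
      have : Real.exp (-v) ≤ 1 := Real.exp_le_one_iff.2 (by linarith)
      nlinarith
    generalize t * Real.exp v = x at *
    generalize t * Real.exp (-v) = y at *
    have b1 := (H2 x y hx hy).1
    have b2 := (H2 y x hy hx).2
    have b3 := H4 x y hy hxy
    have e : (K1 + K2 + |K3| + K4) / x = K1 / x + K2 / x + |K3| / x + K4 / x := by ring
    rw [e]
    have p1 : 0 ≤ K1 / x := by positivity
    have p3 : 0 ≤ |K3| / x := by positivity
    rw [abs_le] at b1 b2 b3 ⊢
    constructor
    · linarith [b1.1, b2.1, b3.2]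
    · linarith [b1.2, b2.2, b3.1]
end

end

section

open MeasureTheory Set Filter Topology

noncomputable section

theorem partIII {n q D : ℕ} (hn : 0 < n) (hq : 0 < q) (hD : 0 < D) {f : ℤ → ℝ} {χ : ℕ → ℝ} {H : ℝ}
    (hf : ∀ z, |f z| ≤ H) (hχ : ∀ k, |χ k| ≤ 1)
    (hper : ∀ a b : ℤ, a ≡ b [ZMOD q] → f a = f b) (hodd : ∀ a, f (-a) = - f a)
    (hχp : ∀ k, χ (k + q * D) = χ k) (hχe : ∀ k, k ≤ q * D → χ (q * D - k) = χ k)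
    (hcount : ∀ N : ℕ, 1 ≤ N →
      (Nat.card {p : ℕ × ℕ // p.2 < n * p.1 ∧ Qf n p.1 p.2 = N} : ℝ) = ∑ d ∈ N.divisors, χ d) :
    2 * ∑ a ∈ Finset.range q, ∑ k ∈ Finset.range (q * D),
        f (a * k) * χ k * ((q - a) * (q * D - k)) =
      D * (∑ a ∈ Finset.range q, ∑ b ∈ Finset.Ico 1 q,
          2 * (f (Qf n a b) * ((q - 2 * b) * (q - a))) +
        n * ∑ a ∈ Finset.range q, ∑ b ∈ Finset.range q,
          f (Qf n a b) * ((b:ℝ) ^ 2 - q * b - a ^ 2 + q * a)) := by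
  have hQ : ∀ a b a' b' : ℤ, a ≡ a' [ZMOD q] → b ≡ b' [ZMOD q] → f (Qf n a b) = f (Qf n a' b') := by
    intro a b a' b' h1 h2
    apply hper
    unfold Qf
    exact ((h1.pow 2).add (((Int.ModEq.refl _).mul h1).mul h2)).sub (h2.pow 2)
  have hneg : ∀ a b : ℤ, Qf n (-a) (-b) = Qf n a b := fun a b => by unfold Qf; ring
  have hqr : (q:ℝ) ≠ 0 := by positivity
  -- vanishing of the total sum
  have hg : ∑ a ∈ Finset.range q, ∑ b ∈ Finset.range q, f (Qf n a b) = 0 := by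
    have e1 : ∑ b ∈ Finset.range q, ∑ a ∈ Finset.range q, f (Qf n b (a + (n * b : ℕ))) =
        ∑ b ∈ Finset.range q, ∑ a ∈ Finset.range q, f (Qf n b a) :=
      Finset.sum_congr rfl fun b _ => sum_shift_per (φ := fun a => f (Qf n b a))
        (fun x y h => hQ _ _ _ _ (Int.ModEq.refl _) h) _
    have e2 : ∑ b ∈ Finset.range q, ∑ a ∈ Finset.range q, f (Qf n b (a + (n * b : ℕ))) =
        - ∑ b ∈ Finset.range q, ∑ a ∈ Finset.range q, f (Qf n a b) := by
      simp_rw [← Finset.sum_neg_distrib, ← hodd]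
      refine Finset.sum_congr rfl fun b _ => Finset.sum_congr rfl fun a _ => ?_
      congr 1; unfold Qf; push_cast; ring
    rw [Finset.sum_comm] at e2
    rw [Finset.sum_comm] at e1
    rw [Finset.sum_comm (f := fun b a : ℕ => f (Qf n a b))] at e2
    linarith
  have hcol : ∀ b : ℤ, ∑ a ∈ Finset.range q, f (Qf n a (-b)) = ∑ a ∈ Finset.range q, f (Qf n a b) := by
    intro b
    rw [← sum_neg_per hq (φ := fun a => f (Qf n a b))
      (fun x y h => hQ _ _ _ _ h (Int.ModEq.refl _))]
    refine Finset.sum_congr rfl fun a _ => ?_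
    rw [← hneg (-a) b, neg_neg]
  set g : ℕ → ℕ → ℝ := fun a b : ℕ => f (Qf n a b) with hgd
  set g' : ℕ → ℕ → ℝ := fun a b : ℕ => f (Qf n a (-b)) with hgd'
  have hgg : ∀ a, ∑ b ∈ Finset.range q, g a b = ∑ b ∈ Finset.range q, g' a b := by
    intro a
    exact (sum_neg_per hq (φ := fun b => f (Qf n a b))
      (fun x y h => hQ _ _ _ _ (Int.ModEq.refl _) h)).symm
  have hAA : Acal q g' = Acal q g := by
    ext w
    unfold Acal
    rw [Finset.sum_comm, Finset.sum_comm (f := fun a b => g a b * _)]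
    refine Finset.sum_congr rfl fun b _ => ?_
    rw [← Finset.sum_mul, ← Finset.sum_mul]
    congr 1
    exact hcol b
  have hA : Acal q g 0 = 0 := by
    unfold Acal
    rw [Finset.sum_comm]
    simp_rw [← Finset.sum_mul]
    set φ : ℕ → ℝ := fun b => ∑ a ∈ Finset.range q, g a b with hφ
    have hφ0 : ∑ b ∈ Finset.range q, φ b = 0 := by
      rw [hφ, Finset.sum_comm]; exact hg
    have hφr : ∀ b, b ≤ q → φ (q - b) = φ b := by
      intro b hb
      simp only [hφ]
      have := hcol b
      simp only [hgd]
      rw [← this]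
      refine Finset.sum_congr rfl fun a _ => ?_
      apply hQ _ _ _ _ (Int.ModEq.refl _)
      rw [Nat.cast_sub hb, Int.modEq_iff_dvd]
      exact ⟨-1, by ring⟩
    have e0 : ∑ b ∈ Finset.range q, φ b * rkF q b 0 =
        φ 0 / 2 + ∑ b ∈ Finset.Ico 1 q, φ b * (((q:ℝ) - b) / q) := by
      rw [sum_reflect_nat hq]
      congr 1
      · unfold rkF; rw [rho_zero (Nat.zero_le _)]; simp; field_simp; norm_num
      · refine Finset.sum_congr rfl fun b hb => ?_
        rw [Finset.mem_Ico] at hb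
        unfold rkF; rw [rho_zero hb.2.le, if_neg (by omega), sub_zero]
    have e1 := sum_Ico_refl hq (fun b => φ b * (((q:ℝ) - b) / q))
    have e2 : ∑ b ∈ Finset.Ico 1 q, φ (q - b) * (((q:ℝ) - (q - b : ℕ)) / q) =
        ∑ b ∈ Finset.Ico 1 q, (φ b - φ b * (((q:ℝ) - b) / q)) := by
      refine Finset.sum_congr rfl fun b hb => ?_
      rw [Finset.mem_Ico] at hb
      rw [hφr b hb.2.le, Nat.cast_sub hb.2.le]
      field_simp
    rw [Finset.sum_sub_distrib] at e2
    rw [sum_reflect_nat hq] at hφ0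
    rw [e0]
    linarith
  have hgg0 : ∀ b, g 0 b = g' 0 b := fun b => by
    simp only [hgd, hgd', Qf]; congr 1; push_cast; ring
  have key := limit_eq hn hq hD hf hχ hper hodd hχp hχe hcount hgd hgd' hg hgg hA hAA hgg0
  rw [Acal_deriv hq, Ccal_deriv hq] at key
  have hDr : (D:ℝ) ≠ 0 := by positivity
  have hP : (q:ℝ) * (q * D) * Pcal q (q * D) (fun a k => f (a * k) * χ k) (0, 0) =
      ∑ a ∈ Finset.range q, ∑ k ∈ Finset.range (q * D),
        f (a * k) * χ k * ((q - a) * (q * D - k)) := by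
    unfold Pcal
    simp_rw [Finset.mul_sum]
    refine Finset.sum_congr rfl fun a ha => Finset.sum_congr rfl fun k hk => ?_
    rw [rho_zero (Finset.mem_range.1 ha).le, rho_zero (Finset.mem_range.1 hk).le]
    push_cast
    field_simp
  have hL : (q:ℝ) ^ 2 * (Lcal q g (0,0) - Lcal q g' (0,0)) = ∑ a ∈ Finset.range q,
      ∑ b ∈ Finset.Ico 1 q, f (Qf n a b) * ((q - 2 * b) * (q - a)) := by
    unfold Lcal
    rw [← Finset.sum_sub_distrib, Finset.mul_sum]
    refine Finset.sum_congr rfl fun a ha => ?_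
    rw [sum_reflect_nat hq, sum_reflect_nat hq, sum_Ico_refl hq (fun b => g' a b * _ * _)]
    have h0 : g a 0 = g' a 0 := by simp [hgd, hgd']
    rw [h0, add_sub_add_left_eq_sub, ← Finset.sum_sub_distrib, Finset.mul_sum]
    refine Finset.sum_congr rfl fun b hb => ?_
    rw [Finset.mem_Ico] at hb
    have h1 : g' a (q - b) = g a b := by
      simp only [hgd, hgd']
      apply hQ _ _ _ _ (Int.ModEq.refl _)
      rw [Nat.cast_sub hb.2.le, Int.modEq_iff_dvd]
      exact ⟨1, by ring⟩
    rw [h1]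
    unfold rkF
    simp only
    rw [if_neg (by omega), if_neg (by omega), rho_zero hb.2.le, rho_zero (Nat.sub_le _ _),
      rho_zero (Finset.mem_range.1 ha).le, Nat.cast_sub hb.2.le]
    simp only [hgd]
    field_simp
    ring
  have hAC : 2 * (q:ℝ) * ((∑ a ∈ Finset.range q, ∑ b ∈ Finset.range q, g a b * (((b:ℝ) ^ 2 - q * b) / (2 * q)))
      - ∑ a ∈ Finset.range q, ∑ b ∈ Finset.range q, g a b * (((a:ℝ) ^ 2 - q * a) / (2 * q))) =
      ∑ a ∈ Finset.range q, ∑ b ∈ Finset.range q,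
          f (Qf n a b) * ((b:ℝ) ^ 2 - q * b - a ^ 2 + q * a) := by
    simp_rw [← Finset.sum_sub_distrib, Finset.mul_sum]
    refine Finset.sum_congr rfl fun a ha => Finset.sum_congr rfl fun k hk => ?_
    simp only [hgd]
    field_simp
    ring
  rw [← hP, key, ← hAC]
  simp_rw [← Finset.mul_sum]
  rw [← hL]
  field_simp
  ring
end

end

section

open MeasureTheory Set Filter Topology

noncomputable section

/-- iterated sum on naturals, by primitive recursion (kernel friendly) -/
def sumTo (n : ℕ) (F : ℕ → ℕ) : ℕ := Nat.rec 0 (fun k s => s + F k) n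

lemma sumTo_eq (n : ℕ) (F : ℕ → ℕ) : sumTo n F = ∑ i ∈ Finset.range n, F i := by
  induction n with
  | zero => rfl
  | succ n ih =>
    rw [Finset.sum_range_succ, ← ih]; rfl

/-- table lookup -/
def lk (T sh x : ℕ) : ℕ := (T >>> (sh * x)) % 2 ^ sh

/-- test on all naturals below a bound -/
def allTo (n : ℕ) (F : ℕ → Bool) : Bool := Nat.rec true (fun k s => and (F k) s) n

lemma allTo_iff (n : ℕ) (F : ℕ → Bool) : allTo n F = true ↔ ∀ i < n, F i = true := by
  induction n with
  | zero => simp [allTo]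
  | succ n ih =>
    have : allTo (n+1) F = and (F n) (allTo n F) := rfl
    rw [this, Bool.and_eq_true, ih]
    constructor
    · rintro ⟨h1, h2⟩ i hi
      rcases Nat.lt_succ_iff_lt_or_eq.1 hi with h | h
      · exact h2 i h
      · rw [h]; exact h1
    · intro h
      exact ⟨h n (by omega), fun i hi => h i (by omega)⟩

/-- index of the norm form modulo `q` -/
def qIdx (q m a b : ℕ) : ℕ := (a * a + m * a * b + (q - 1) * (b * b)) % q

/-- first sum mod r -/
def Usum (q r T sh m : ℕ) : ℕ :=
  sumTo q fun a => sumTo (q - 1) fun b =>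
    lk T sh (qIdx q m a (b+1)) * (2 * (q + (r - 2) * (b+1)) * (q - a))

/-- second sum mod r -/
def Vsum (q r T sh m : ℕ) : ℕ :=
  sumTo q fun a => sumTo q fun b =>
    lk T sh (qIdx q m a b) * (b * b + (r - 1) * (q * b) + (r - 1) * (a * a) + q * a)

/-- the checks to be made on the table -/
def tabOK (q r T sh : ℕ) : Bool :=
  allTo q fun x => and (decide (lk T sh x < r)) (and (decide (lk T sh ((q - x) % q) = (r - lk T sh x) % r))
    (decide (sumTo q (fun a => lk T sh (a * x % q) * (q - a)) % r = 0)))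

/-- centred lift -/
def fInt (q r T sh : ℕ) (z : ℤ) : ℤ :=
  if r < 2 * lk T sh (z % q).toNat then (lk T sh (z % q).toNat : ℤ) - r else lk T sh (z % q).toNat

lemma fInt_cast (q r T sh : ℕ) (z : ℤ) :
    ((fInt q r T sh z : ℤ) : ZMod r) = (lk T sh (z % q).toNat : ℕ) := by
  unfold fInt
  split_ifs <;> simp

lemma fInt_nat (q r T sh : ℕ) (z : ℤ) (m : ℕ) (h : z ≡ m [ZMOD q]) :
    ((fInt q r T sh z : ℤ) : ZMod r) = (lk T sh (m % q) : ℕ) := by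
  rw [fInt_cast]
  congr 2
  have : z % q = ((m % q : ℕ) : ℤ) := by rw [h]; push_cast; rfl
  rw [this]; exact Int.toNat_natCast _

theorem partIV {n q r T sh : ℕ} (hn : Odd n) (hq : 0 < q) (hr : r.Prime) (hr2 : Odd r)
    (htab : tabOK q r T sh = true) (hrD : ¬ r ∣ n ^ 2 + 4)
    (hcount : ∀ N : ℕ, 1 ≤ N →
      (Nat.card {p : ℕ × ℕ // p.2 < n * p.1 ∧ Qf n p.1 p.2 = N} : ℤ) =
        ∑ d ∈ N.divisors, jacobiSym d (n ^ 2 + 4)) :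
    (Usum q r T sh (n % q) + n * Vsum q r T sh (n % q)) % r = 0 := by
  set D := n ^ 2 + 4 with hDdef
  have hD : 0 < D := by positivity
  have hDodd : Odd D := by rw [hDdef]; exact (hn.pow).add_even (by decide)
  have hD4 : D % 4 = 1 := by
    rw [hDdef]
    obtain ⟨k, rfl⟩ := hn
    have : (2 * k + 1) ^ 2 + 4 = 4 * (k ^ 2 + k + 1) + 1 := by ring
    omega
  have tab := fun x hx => by
    have := (allTo_iff _ _).1 htab x hx
    simp only [Bool.and_eq_true, decide_eq_true_eq] at this
    exact this
  set f := fInt q r T sh with hf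
  have hper : ∀ a b : ℤ, a ≡ b [ZMOD q] → f a = f b := by
    intro a b hab
    rw [hf]; unfold fInt
    rw [hab]
  have hlt : ∀ z : ℤ, (z % q).toNat < q := by
    intro z
    have h1 := Int.emod_nonneg z (show (q:ℤ) ≠ 0 by positivity)
    have h2 := Int.emod_lt_of_pos z (show (0:ℤ) < q by positivity)
    omega
  have hodd : ∀ a, f (-a) = - f a := by
    intro a
    have h1 := Int.emod_nonneg a (show (q:ℤ) ≠ 0 by positivity)
    have hi : ((-a) % q).toNat = (q - (a % q).toNat) % q := by
      have : (-a) % (q:ℤ) = (((q - (a % q).toNat) % q : ℕ) : ℤ) := by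
        push_cast [Nat.cast_sub (hlt a).le]
        rw [Int.toNat_of_nonneg h1]
        have e : -a ≡ (q:ℤ) - a % q [ZMOD q] := by
          rw [Int.modEq_iff_dvd]
          have := Int.emod_add_mul_ediv a q
          exact ⟨1 + a / q, by linarith⟩
        exact e
      rw [this]; exact Int.toNat_natCast _
    obtain ⟨t1, t2, _⟩ := tab _ (hlt a)
    rw [hf]; unfold fInt
    rw [hi, t2]
    generalize lk T sh (a % q).toNat = v at *
    obtain ⟨k, rfl⟩ := hr2
    rcases Nat.eq_zero_or_pos v with rfl | hv
    · simp
    · rw [Nat.mod_eq_of_lt (by omega)]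
      split_ifs <;> omega
  have hbound : ∀ z, |((f z : ℤ) : ℝ)| ≤ r := by
    intro z
    obtain ⟨t1, _⟩ := tab _ (hlt z)
    rw [← Int.cast_abs]
    have : |f z| ≤ r := by
      rw [hf]; unfold fInt
      rw [abs_le]
      split_ifs <;> constructor <;> omega
    exact_mod_cast this
  have key := partIII (n := n) (q := q) (D := D) (f := fun z => (f z : ℝ))
    (χ := fun k => ((jacobiSym k D : ℤ) : ℝ)) (H := r) hn.pos hq hD hbound
    (by
      intro k
      rcases jacobiSym.trichotomy k D with h | h | h <;> simp [h])
    (fun a b hab => by rw [hper a b hab])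
    (fun a => by rw [hodd a]; push_cast; rfl)
    (fun k => by
      congr 1
      apply jacobiSym.mod_left'
      push_cast
      simp)
    (fun k hk => by
      congr 1
      rw [Nat.cast_sub hk]
      have h1 : jacobiSym ((q * D : ℕ) - k : ℤ) D = jacobiSym (-1 * k) D := by
        apply jacobiSym.mod_left'
        have e : ((q * D : ℕ) - k : ℤ) ≡ -1 * k [ZMOD D] := by
          rw [Int.modEq_iff_dvd]; exact ⟨-q, by push_cast; ring⟩
        exact e
      rw [h1, jacobiSym.mul_left, jacobiSym.at_neg_one hDodd, ZMod.χ₄_nat_one_mod_four hD4, one_mul])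
    (fun N hN => by exact_mod_cast hcount N hN)
  have keyZ : 2 * ∑ a ∈ Finset.range q, ∑ k ∈ Finset.range (q * D),
        f (a * k) * jacobiSym k D * (((q:ℤ) - a) * (q * D - k)) =
      D * (∑ a ∈ Finset.range q, ∑ b ∈ Finset.Ico 1 q,
          2 * (f (Qf n a b) * (((q:ℤ) - 2 * b) * (q - a))) +
        n * ∑ a ∈ Finset.range q, ∑ b ∈ Finset.range q,
          f (Qf n a b) * ((b:ℤ) ^ 2 - q * b - a ^ 2 + q * a)) := by
    exact_mod_cast key
  have hFr : Fact r.Prime := ⟨hr⟩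
  have keyM := congrArg (Int.cast : ℤ → ZMod r) keyZ
  have hLz : ((2 * ∑ a ∈ Finset.range q, ∑ k ∈ Finset.range (q * D),
        f (a * k) * jacobiSym k D * (((q:ℤ) - a) * (q * D - k)) : ℤ) : ZMod r) = 0 := by
    rw [Finset.sum_comm]
    push_cast
    have : ∀ k ∈ Finset.range (q * D), ∑ a ∈ Finset.range q, ((f (a * k) : ℤ) : ZMod r) * jacobiSym k D *
        (((q:ZMod r) - a) * (q * D - k)) = 0 := by
      intro k _
      have e : ∀ a ∈ Finset.range q, ((f (a * k) : ℤ) : ZMod r) * jacobiSym k D *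
        (((q:ZMod r) - a) * (q * D - k)) =
        ((lk T sh (a * (k % q) % q) * (q - a) : ℕ) : ZMod r) * (jacobiSym k D * (q * D - k)) := by
        intro a ha
        rw [hf, fInt_nat q r T sh _ (a * (k % q)) (by
          push_cast
          exact (Int.ModEq.refl _).mul (Int.mod_modEq _ _).symm)]
        rw [Nat.cast_mul, Nat.cast_sub (Finset.mem_range.1 ha).le]
        ring
      rw [Finset.sum_congr rfl e, ← Finset.sum_mul, ← Nat.cast_sum]
      obtain ⟨_, _, t3⟩ := tab (k % q) (Nat.mod_lt _ hq)
      rw [sumTo_eq] at t3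
      rw [(ZMod.natCast_eq_zero_iff _ _).2 (Nat.dvd_of_mod_eq_zero t3), zero_mul]
    rw [Finset.sum_eq_zero this, mul_zero]
  rw [hLz] at keyM
  have hDne : ((D:ℤ) : ZMod r) ≠ 0 := by
    rw [Int.cast_natCast, Ne, ZMod.natCast_eq_zero_iff]; exact hrD
  rw [Int.cast_mul] at keyM
  have keyM' := (mul_eq_zero.1 keyM.symm).resolve_left hDne
  apply Nat.mod_eq_zero_of_dvd
  rw [← ZMod.natCast_eq_zero_iff]
  rw [← keyM']
  have hQi : ∀ a b : ℕ, ((f (Qf n a b) : ℤ) : ZMod r) = (lk T sh (qIdx q (n % q) a b) : ℕ) := by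
    intro a b
    rw [hf, fInt_nat q r T sh _ (a * a + (n % q) * a * b + (q - 1) * (b * b)) ?_]
    · rfl
    · push_cast [Nat.cast_sub (show 1 ≤ q from hq)]
      unfold Qf
      have h1 : (n:ℤ) * a * b ≡ (n:ℤ) % q * a * b [ZMOD q] :=
        (((Int.mod_modEq _ _).symm).mul_right _).mul_right _
      have h2 : -((b:ℤ)^2) ≡ (q - 1) * (b * b) [ZMOD q] := by
        rw [Int.modEq_iff_dvd]; exact ⟨b * b, by ring⟩
      have h3 := ((Int.ModEq.refl ((a:ℤ) * a)).add h1).add h2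
      refine Int.ModEq.trans (show _ ≡ _ [ZMOD q] from ?_) h3
      have : (a:ℤ) ^ 2 + n * a * b - (b:ℤ) ^ 2 = a * a + n * a * b + -(b:ℤ) ^ 2 := by ring
      rw [this]
  have h2r : 2 ≤ r := hr.two_le
  have cr1 : ((r - 1 : ℕ) : ZMod r) = -1 := by rw [Nat.cast_sub (by omega)]; simp
  have cr2 : ((r - 2 : ℕ) : ZMod r) = -2 := by rw [Nat.cast_sub (by omega)]; simp
  unfold Usum Vsum
  simp_rw [sumTo_eq]
  push_cast
  simp_rw [hQi]
  congr 1
  · refine Finset.sum_congr rfl fun a ha => ?_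
    rw [Finset.sum_Ico_eq_sum_range]
    refine Finset.sum_congr rfl fun b _ => ?_
    rw [add_comm 1 b, cr2, Nat.cast_sub (Finset.mem_range.1 ha).le]
    push_cast
    ring
  · congr 1
    refine Finset.sum_congr rfl fun a ha => ?_
    refine Finset.sum_congr rfl fun b _ => ?_
    rw [cr1]
    ring
end

end

section

noncomputable section

/-- inertness test -/
def inertB (p n : ℕ) : Bool := allTo p fun x => decide ((x * x + n * x + (p - 1)) % p ≠ 0)

/-- first table -/
def T1 : ℕ := 2052289576152222997250115932534878565657125871016480390351802441452177481817527320916394173053962923587914621960972217652349712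

/-- second table -/
def T2 : ℕ := 130388023422140901707628006922963218112010876865783971799109713432573820231831360647108138603944784301651305440482370136474373748167709457659834644382966397488427072

/-- values of the two sums for the admissible classes -/
def L1 : List (ℕ × ℕ × ℕ) :=
  [(8,11,10), (13,0,10), (17,4,12), (22,11,10), (32,5,12), (38,11,12), (43,7,10), (52,8,12), (53,5,12), (62,6,10), (67,2,12), (73,8,12), (83,2,10), (88,9,12), (92,0,10), (97,2,10)]

/-- values of the two sums for the remaining classes -/
def L2 : List (ℕ × ℕ × ℕ) := [(17,14,34), (24,14,33), (41,26,7), (50,11,7), (67,23,33), (74,23,34)]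

lemma tab1 : tabOK 105 13 T1 4 = true := by decide +kernel
lemma tab2 : tabOK 91 37 T2 6 = true := by decide +kernel

lemma L1_ok : ∀ p ∈ L1, Usum 105 13 T1 4 p.1 % 13 = p.2.1 ∧ Vsum 105 13 T1 4 p.1 % 13 = p.2.2 := by
  decide +kernel

lemma L2_ok : ∀ p ∈ L2, Usum 91 37 T2 6 p.1 % 37 = p.2.1 ∧ Vsum 91 37 T2 6 p.1 % 37 = p.2.2 := by
  decide +kernel

/-- residues surviving the first step -/
def survL : List ℕ := [17 % 7 + 400, 38 % 7 + 1100, 43 % 7 + 1100, 62 % 7 + 200, 67 % 7 + 200, 88 % 7 + 900]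

lemma step1a : ∀ m < 105, inertB 3 m = true ∧ inertB 5 m = true ∧ inertB 7 m = true →
    m ∈ L1.map Prod.fst := by
  decide +kernel

lemma step1b : ∀ p ∈ L1, ∀ s < 13, inertB 13 s = true → (p.2.1 + s * p.2.2) % 13 = 0 →
      p.1 % 7 + 100 * s ∈ survL := by
  decide +kernel

lemma step2a : ∀ m < 91, m % 7 + 100 * (m % 13) ∈ survL → m ∈ L2.map Prod.fst := by
  decide +kernel

lemma step2b : ∀ p ∈ L2, ∀ s < 37, inertB 37 s = true → (p.2.1 + s * p.2.2) % 37 ≠ 0 := by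
  decide +kernel

lemma disc13 : ∀ s < 13, inertB 13 s = true → (s ^ 2 + 4) % 13 ≠ 0 := by decide +kernel
lemma disc37 : ∀ s < 37, inertB 37 s = true → (s ^ 2 + 4) % 37 ≠ 0 := by decide +kernel

lemma small_n : ∀ n < 38, n % 2 = 1 → n ∉ [1, 3, 5, 7, 13, 17] →
    ∃ p ∈ [3, 5, 7, 11, 13, 17, 19, 23, 29, 31], p < n ∧ inertB p n = false := by decide +kernel

lemma inertB_congr {p m n : ℕ} (h : m ≡ n [MOD p]) : inertB p m = inertB p n := by
  unfold inertB
  congr 1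
  ext x
  have : (x * x + m * x + (p - 1)) % p = (x * x + n * x + (p - 1)) % p :=
    ((Nat.ModEq.refl _).add (h.mul_right x)).add_right _
  rw [this]

theorem no_large {n : ℕ} (hn : Odd n) (h37 : 37 < n)
    (hin : ∀ p : ℕ, p.Prime → p < n → inertB p n = true)
    (hcount : ∀ N : ℕ, 1 ≤ N →
      (Nat.card {p : ℕ × ℕ // p.2 < n * p.1 ∧ Qf n p.1 p.2 = N} : ℤ) =
        ∑ d ∈ N.divisors, jacobiSym d (n ^ 2 + 4)) : False := by
  have i3 := hin 3 (by norm_num) (by omega)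
  have i5 := hin 5 (by norm_num) (by omega)
  have i7 := hin 7 (by norm_num) (by omega)
  have i13 := hin 13 (by norm_num) (by omega)
  have i37 := hin 37 (by norm_num) (by omega)
  rw [← inertB_congr ((Nat.mod_modEq n 105).of_dvd (by norm_num))] at i3 i5 i7
  rw [← inertB_congr (Nat.mod_modEq n _)] at i13 i37
  have d13 : ¬ 13 ∣ n ^ 2 + 4 := by
    have := disc13 (n % 13) (Nat.mod_lt _ (by norm_num)) i13
    rw [Nat.dvd_iff_mod_eq_zero]
    rwa [(((Nat.mod_modEq n 13).pow 2).add_right 4 : _ % 13 = _ % 13)] at this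
  have d37 : ¬ 37 ∣ n ^ 2 + 4 := by
    have := disc37 (n % 37) (Nat.mod_lt _ (by norm_num)) i37
    rw [Nat.dvd_iff_mod_eq_zero]
    rwa [(((Nat.mod_modEq n 37).pow 2).add_right 4 : _ % 37 = _ % 37)] at this
  have k1 := partIV hn (by norm_num) (by norm_num) (by decide) tab1 d13 hcount
  have k2 := partIV hn (by norm_num) (by norm_num) (by decide) tab2 d37 hcount
  have m1 := step1a (n % 105) (Nat.mod_lt _ (by norm_num)) ⟨i3, i5, i7⟩
  rw [List.mem_map] at m1
  obtain ⟨p, hp, hpm⟩ := m1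
  obtain ⟨u1, v1⟩ := L1_ok p hp
  have s1 := step1b p hp (n % 13) (Nat.mod_lt _ (by norm_num)) i13 (by
    rw [← hpm] at k1
    rw [← u1, ← v1, ← k1]
    exact (Nat.mod_modEq _ 13).add ((Nat.mod_modEq n 13).mul (Nat.mod_modEq _ 13)))
  have m2 := step2a (n % 91) (Nat.mod_lt _ (by norm_num)) (by
    have e1 : n % 91 % 7 = p.1 % 7 := by rw [hpm]; omega
    have e2 : n % 91 % 13 = n % 13 := by omega
    rw [e1, e2]; exact s1)
  rw [List.mem_map] at m2
  obtain ⟨p', hp', hpm'⟩ := m2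
  obtain ⟨u2, v2⟩ := L2_ok p' hp'
  refine step2b p' hp' (n % 37) (Nat.mod_lt _ (by norm_num)) i37 ?_
  rw [← hpm'] at k2
  rw [← u2, ← v2, ← k2]
  exact (Nat.mod_modEq _ 37).add ((Nat.mod_modEq n 37).mul (Nat.mod_modEq _ 37))
end

end

section

noncomputable section

/-- The ring `ℤ[ω]`, `ω² = 1 + nω`. -/
abbrev RR (n : ℕ) := QuadraticAlgebra ℤ 1 (n : ℤ)

lemma RR_norm (n : ℕ) (z : RR n) : QuadraticAlgebra.norm z = Qf n z.re z.im := by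
  rw [QuadraticAlgebra.norm_def]; unfold Qf; ring

lemma RR_unit_of_mul {n : ℕ} {α : RR n} (h : (QuadraticAlgebra.norm α).natAbs = 1) : IsUnit α := by
  rw [QuadraticAlgebra.isUnit_iff_norm_isUnit, Int.isUnit_iff_natAbs_eq]; exact h

lemma RR_unit_iff {n : ℕ} {α : RR n} : IsUnit α ↔ (QuadraticAlgebra.norm α).natAbs = 1 := by
  rw [QuadraticAlgebra.isUnit_iff_norm_isUnit, Int.isUnit_iff_natAbs_eq]

lemma Qf_ne_zero {n : ℕ} (hn : 0 < n) {x y : ℤ} (h : Qf n x y = 0) : x = 0 ∧ y = 0 := by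
  by_cases hy : y = 0
  · subst hy; unfold Qf at h; simp at h; exact ⟨h, rfl⟩
  exfalso
  have h1 : (2 * x + n * y) ^ 2 = (n ^ 2 + 4 : ℤ) * y ^ 2 := by unfold Qf at h; linear_combination 4 * h
  have h2 : y ^ 2 ∣ (2 * x + n * y) ^ 2 := ⟨(n:ℤ) ^ 2 + 4, by rw [h1]; ring⟩
  rw [Int.pow_dvd_pow_iff (by norm_num)] at h2
  obtain ⟨k, hk⟩ := h2
  rw [hk] at h1
  have h3 : k ^ 2 = (n:ℤ) ^ 2 + 4 := by
    have : y ^ 2 ≠ 0 := pow_ne_zero _ hy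
    apply mul_left_cancel₀ this
    linear_combination h1
  have h4 : |k| ^ 2 = (n:ℤ) ^ 2 + 4 := by rw [sq_abs]; exact h3
  have hk0 := abs_nonneg k
  generalize |k| = m at *
  have hn' : (1:ℤ) ≤ n := by exact_mod_cast hn
  have a1 : (n:ℤ) < m := by nlinarith
  have a2 : m < (n:ℤ) + 2 := by nlinarith
  have a3 : m = n + 1 := by omega
  rw [a3] at h4
  have : 2 * (n:ℤ) = 3 := by linarith
  omega

lemma RR_norm_ne {n : ℕ} (hn : 0 < n) {α : RR n} (h : α ≠ 0) : QuadraticAlgebra.norm α ≠ 0 := by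
  intro h0
  rw [RR_norm] at h0
  obtain ⟨h1, h2⟩ := Qf_ne_zero hn h0
  exact h (QuadraticAlgebra.ext h1 h2)

lemma RR_isDomain {n : ℕ} (hn : 0 < n) : IsDomain (RR n) := by
  have : NoZeroDivisors (RR n) := ⟨by
    intro a b hab
    by_contra! h
    have := mul_ne_zero (RR_norm_ne hn h.1) (RR_norm_ne hn h.2)
    rw [← map_mul, hab] at this
    simp at this⟩
  exact NoZeroDivisors.to_isDomain _

lemma assoc_mul_unit {n : ℕ} {α u : RR n} (h : (QuadraticAlgebra.norm u).natAbs = 1) :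
    Associated α (u * α) := by
  rw [mul_comm]
  exact (associated_mul_unit_left α u (RR_unit_of_mul h)).symm

/-- a fundamental domain for the unit group -/
def domP (n : ℕ) (x y : ℤ) : Prop := 0 ≤ y ∧ y < n * x

lemma dom_pos {n : ℕ} {x y : ℤ} (h : domP n x y) : 0 < x := by
  obtain ⟨h1, h2⟩ := h
  by_contra h3
  push Not at h3
  nlinarith [Int.natCast_nonneg n]

lemma descend1 {n : ℕ} (hn : 0 < n) : ∀ k : ℕ, ∀ x y : ℤ, y.toNat = k → 0 < x → 0 ≤ y → 0 < Qf n x y →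
    ∃ z w, domP n z w ∧ Associated (⟨x, y⟩ : RR n) ⟨z, w⟩ := by
  intro k
  have hn' : (1:ℤ) ≤ n := by exact_mod_cast hn
  induction k using Nat.strong_induction_on with
  | _ k ih =>
    intro x y hk hx hy hQ
    by_cases hd : y < n * x
    · exact ⟨x, y, ⟨hy, hd⟩, Associated.refl _⟩
    push Not at hd
    have hx' : 0 < ((n:ℤ)^2+1) * x - n * y := by
      by_contra hcon
      push Not at hcon
      unfold Qf at hQ
      have h1 : n * y * (n * y - n ^ 2 * x) ≥ (n^2+1) * x * x := by
        apply mul_le_mul <;> nlinarith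
      nlinarith [sq_nonneg (n * y), mul_pos hx hx]
    have hy1 : 0 < y := by nlinarith
    obtain ⟨z, w, hzw, has⟩ := ih (y - n * x).toNat (by
      have : 0 < n * x := by positivity
      omega) _ _ rfl hx' (by linarith) (by
      have : Qf n (((n:ℤ)^2+1) * x - n * y) (y - n * x) = Qf n x y := by unfold Qf; ring
      rw [this]; exact hQ)
    refine ⟨z, w, hzw, Associated.trans ?_ has⟩
    have : (⟨((n:ℤ)^2+1) * x - n * y, y - n * x⟩ : RR n) = ⟨(n:ℤ)^2+1, -n⟩ * ⟨x, y⟩ := by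
      ext <;> simp <;> ring
    rw [this]
    apply assoc_mul_unit
    rw [RR_norm]; unfold Qf; simp only
    have : ((n:ℤ)^2+1)^2 + n * (n^2+1) * (-n) - (-(n:ℤ))^2 = 1 := by ring
    rw [this]; rfl

lemma descend2 {n : ℕ} (hn : 0 < n) : ∀ k : ℕ, ∀ x y : ℤ, x.toNat = k → 0 < x → 0 < Qf n x y →
    ∃ z w, domP n z w ∧ Associated (⟨x, y⟩ : RR n) ⟨z, w⟩ := by
  intro k
  have hn' : (1:ℤ) ≤ n := by exact_mod_cast hn
  induction k using Nat.strong_induction_on with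
  | _ k ih =>
    intro x y hk hx hQ
    by_cases hy : 0 ≤ y
    · exact descend1 hn _ x y rfl hx hy hQ
    push Not at hy
    have hx' : 0 < x + n * y := by
      by_contra hcon
      push Not at hcon
      unfold Qf at hQ
      nlinarith [mul_nonneg hx.le (show 0 ≤ -(x + n * y) by linarith), sq_nonneg y]
    obtain ⟨z, w, hzw, has⟩ := ih (x + n * y).toNat (by
      have : n * y < 0 := by nlinarith
      omega) (x + n * y) (n * x + (n^2+1) * y) rfl hx' (by
      have : Qf n (x + n * y) (n * x + (n^2+1) * y) = Qf n x y := by unfold Qf; ring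
      rw [this]; exact hQ)
    refine ⟨z, w, hzw, Associated.trans ?_ has⟩
    have : (⟨x + n * y, n * x + (n^2+1) * y⟩ : RR n) = ⟨1, n⟩ * ⟨x, y⟩ := by
      ext <;> simp <;> ring
    rw [this]
    apply assoc_mul_unit
    rw [RR_norm]; unfold Qf; simp only
    have : (1:ℤ)^2 + n * 1 * n - (n:ℤ)^2 = 1 := by ring
    rw [this]; rfl

lemma exists_dom {n : ℕ} (hn : 0 < n) {α : RR n} (hα : α ≠ 0) :
    ∃ z w, domP n z w ∧ Associated α ⟨z, w⟩ := by
  -- positive norm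
  have step : ∀ β : RR n, 0 < Qf n β.re β.im → ∃ z w, domP n z w ∧ Associated β ⟨z, w⟩ := by
    intro β hβ
    rcases lt_trichotomy β.re 0 with h | h | h
    · obtain ⟨z, w, hzw, has⟩ := descend2 hn _ (-β.re) (-β.im) rfl (by linarith) (by
        have : Qf n (-β.re) (-β.im) = Qf n β.re β.im := by unfold Qf; ring
        rw [this]; exact hβ)
      refine ⟨z, w, hzw, Associated.trans ?_ has⟩
      have : (⟨-β.re, -β.im⟩ : RR n) = -β := by ext <;> simp
      rw [this]; exact Associated.neg_right (Associated.refl _)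
    · rw [h] at hβ; unfold Qf at hβ; nlinarith [sq_nonneg β.im]
    · exact descend2 hn _ β.re β.im rfl h hβ
  rcases lt_or_gt_of_ne (RR_norm_ne hn hα) with h | h
  · obtain ⟨z, w, hzw, has⟩ := step ((⟨0, 1⟩ : RR n) * α) (by
      rw [← RR_norm, map_mul]
      have : QuadraticAlgebra.norm (⟨0, 1⟩ : RR n) = -1 := by rw [RR_norm]; unfold Qf; simp
      rw [this]; linarith)
    refine ⟨z, w, hzw, Associated.trans (assoc_mul_unit ?_) has⟩
    rw [RR_norm]; unfold Qf; simp
  · rw [RR_norm] at h; exact step α h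

lemma dom_Qpos {n : ℕ} {x y : ℤ} (h : domP n x y) : x ^ 2 ≤ Qf n x y := by
  have := mul_nonneg h.1 (show 0 ≤ n * x - y by linarith [h.2])
  unfold Qf; nlinarith

lemma dom_aux {n : ℕ} {x y z w r s : ℤ} (h1 : domP n x y) (h2 : domP n z w)
    (hz : z = r * x + s * y) (hw : w = s * x + r * y + n * s * y)
    (hN : Qf n r s = 1) (hr : 0 < r) : s ≤ 0 := by
  by_contra hs
  push Not at hs
  have hx := dom_pos h1
  have a1 : s * x + r * y < n * r * x := by
    have := h2.2; rw [hz, hw] at this; linarith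
  have a2 : s < n * r := by
    have : 0 ≤ r * y := mul_nonneg hr.le h1.1
    by_contra hc; push Not at hc
    nlinarith
  unfold Qf at hN
  nlinarith [mul_pos hs (show 0 < n * r - s by linarith), mul_pos hr hr]

lemma dom_unique {n : ℕ} {x y z w : ℤ} (h1 : domP n x y) (h2 : domP n z w)
    (h : Associated (⟨x, y⟩ : RR n) ⟨z, w⟩) : x = z ∧ y = w := by
  obtain ⟨u, hu⟩ := h
  set r := (u : RR n).re with hr
  set s := (u : RR n).im with hs
  have hNu : (QuadraticAlgebra.norm (u : RR n)).natAbs = 1 := RR_unit_iff.1 u.isUnit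
  have hx := dom_pos h1
  have hz := dom_pos h2
  have hQ1 := dom_Qpos h1
  have hQ2 := dom_Qpos h2
  have e1 : z = r * x + s * y := by
    have := congrArg QuadraticAlgebra.re hu
    simp at this; rw [← this]; ring
  have e2 : w = s * x + r * y + n * s * y := by
    have := congrArg QuadraticAlgebra.im hu
    simp at this; rw [← this]; ring
  have hN : Qf n r s = 1 := by
    have hm : Qf n z w = Qf n r s * Qf n x y := by rw [e1, e2]; unfold Qf; ring
    rw [RR_norm] at hNu
    rcases Int.natAbs_eq_iff.1 hNu with h | h
    · simpa using h
    · exfalso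
      change Qf n r s = _ at h
      rw [h] at hm
      push_cast at hm
      nlinarith
  have hNr : Qf n x y * r = z * x + y * (n * z - w) := by rw [e1, e2]; unfold Qf; ring
  have hr0 : 0 < r := by
    have h3 : 0 ≤ y * (n * z - w) := mul_nonneg h1.1 (by linarith [h2.2])
    have h4 : 0 < z * x := mul_pos hz hx
    by_contra hc; push Not at hc
    nlinarith
  have hNr' : Qf n x y * (r + n * s) = x * z + w * (n * x - y) := by rw [e1, e2]; unfold Qf; ring
  have hr1 : 0 < r + n * s := by
    have h3 : 0 ≤ w * (n * x - y) := mul_nonneg h2.1 (by linarith [h1.2])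
    have h4 : 0 < z * x := mul_pos hz hx
    by_contra hc; push Not at hc
    nlinarith
  have s1 := dom_aux h1 h2 e1 e2 hN hr0
  have s2 := dom_aux (r := r + n * s) (s := -s) h2 h1 (by
      have : x * Qf n r s = (r + n * s) * z + -s * w := by rw [e1, e2]; unfold Qf; ring
      rw [← this, hN, mul_one]) (by
      have : y * Qf n r s = -s * z + (r + n * s) * w + n * (-s) * w := by rw [e1, e2]; unfold Qf; ring
      rw [← this, hN, mul_one]) (by rw [← hN]; unfold Qf; ring) hr1
  have s0 : s = 0 := by linarith
  rw [s0] at hN e1 e2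
  have : r = 1 := by unfold Qf at hN; simp at hN; rcases hN with h | h <;> linarith
  rw [this] at e1 e2
  constructor <;> [rw [e1]; rw [e2]] <;> ring
end

end

section

noncomputable section
open QuadraticAlgebra (norm)

lemma RR_int_dvd {n : ℕ} {p : ℤ} {α : RR n} : (p : RR n) ∣ α ↔ p ∣ α.re ∧ p ∣ α.im := by
  have h : ((p : ℤ) : RR n) = algebraMap ℤ (RR n) p := by simp
  rw [h, QuadraticAlgebra.algebraMap_dvd_iff]

lemma RR_norm_mul_star {n : ℕ} (α : RR n) : ((norm α : ℤ) : RR n) = α * star α := by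
  rw [← QuadraticAlgebra.algebraMap_norm_eq_mul_star]; simp

/-- inert: -/
def inertP (n p : ℕ) : Prop := ∀ x y : ℤ, (p:ℤ) ∣ Qf n x y → (p:ℤ) ∣ x ∧ (p:ℤ) ∣ y

lemma exists_norm_prime {n : ℕ} (hn : 0 < n) [IsDomain (RR n)] [IsPrincipalIdealRing (RR n)] {p : ℕ} (hp : p.Prime)
    (h : ¬ inertP n p) : ∃ π : RR n, (norm π).natAbs = p := by
  unfold inertP at h
  push Not at h
  obtain ⟨x, y, hQ, hxy⟩ := h
  set α : RR n := ⟨x, y⟩ with hα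
  have hdvd : ((p:ℤ) : RR n) ∣ α * star α := by
    rw [← RR_norm_mul_star, RR_norm]
    exact Int.cast_dvd_cast _ _ hQ
  have hpα : ¬ ((p:ℤ) : RR n) ∣ α := by
    rw [RR_int_dvd]; intro h; exact hxy h.1 h.2
  have hNp : (norm (((p:ℤ)) : RR n)).natAbs = p ^ 2 := by
    rw [QuadraticAlgebra.norm_intCast]; simp [Int.natAbs_pow]
  have hnp : ¬ Irreducible ((p:ℤ) : RR n) := by
    intro hirr
    rcases hirr.prime.dvd_or_dvd hdvd with h | h
    · exact hpα h
    · apply hpα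
      rw [RR_int_dvd] at h ⊢
      simp [hα] at h ⊢
      obtain ⟨h1, h2⟩ := h
      refine ⟨?_, h2⟩
      exact (Int.dvd_add_left (h2.mul_left _)).1 h1
  have hpu : ¬ IsUnit ((p:ℤ) : RR n) := by
    rw [RR_unit_iff, hNp]
    have := hp.two_le
    nlinarith
  rw [irreducible_iff] at hnp
  push Not at hnp
  obtain ⟨a, b, hab, ha, hb⟩ := hnp hpu
  refine ⟨a, ?_⟩
  have hm : (norm a).natAbs * (norm b).natAbs = p ^ 2 := by
    rw [← Int.natAbs_mul, ← map_mul, ← hab, hNp]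
  rw [RR_unit_iff] at ha hb
  have hd : (norm a).natAbs ∣ p ^ 2 := ⟨_, hm.symm⟩
  rw [Nat.dvd_prime_pow hp] at hd
  obtain ⟨k, hk, hk'⟩ := hd
  interval_cases k
  · simp at hk'; exact absurd (by simpa using hk') ha
  · simpa using hk'
  · rw [hk'] at hm
    have : (norm b).natAbs = 1 := by
      have hp2 : 0 < p ^ 2 := pow_pos hp.pos 2
      exact Nat.eq_of_mul_eq_mul_left hp2 (by rw [hm, mul_one])
    exact absurd this hb

lemma small_inert {n : ℕ} (hn : 0 < n) [IsDomain (RR n)] [IsPrincipalIdealRing (RR n)] {p : ℕ} (hp : p.Prime)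
    (hpn : p < n) : inertP n p := by
  by_contra h
  obtain ⟨π, hπ⟩ := exists_norm_prime hn hp h
  have h0 : π ≠ 0 := by rintro rfl; simp at hπ; exact hp.ne_zero hπ.symm
  obtain ⟨z, w, hd, ha⟩ := exists_dom hn h0
  obtain ⟨u, rfl⟩ := ha.symm
  rw [map_mul, Int.natAbs_mul, RR_unit_iff.1 u.isUnit, mul_one, RR_norm] at hπ
  simp only at hπ
  have h1 := dom_Qpos hd
  have hz := dom_pos hd
  have hQ : Qf n z w = p := by
    have : 0 ≤ Qf n z w := by nlinarith
    omega
  obtain ⟨hw0, hw1⟩ := hd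
  rcases eq_or_lt_of_le hw0 with h | h
  · rw [← h] at hQ
    unfold Qf at hQ
    simp at hQ
    have : (p:ℕ) = z.natAbs ^ 2 := by
      zify; rw [← hQ, sq_abs]
    rw [this] at hp
    exact Nat.Prime.not_prime_pow (le_refl 2) hp
  · have : n * z - 1 ≤ w * (n * z - w) := by nlinarith
    have : (n:ℤ) ≤ Qf n z w := by
      unfold Qf
      have hn' : (1:ℤ) ≤ n := by exact_mod_cast hn
      nlinarith
    rw [hQ] at this
    omega

lemma prime_of_norm {n : ℕ} [IsDomain (RR n)] [IsPrincipalIdealRing (RR n)] {p : ℕ} (hp : p.Prime)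
    {π : RR n} (h : (norm π).natAbs = p) : Prime π := by
  apply Irreducible.prime
  rw [irreducible_iff]
  constructor
  · rw [RR_unit_iff, h]; exact hp.ne_one
  · intro a b hab
    rw [RR_unit_iff, RR_unit_iff]
    have : (norm a).natAbs * (norm b).natAbs = p := by
      rw [← Int.natAbs_mul, ← map_mul, ← hab, h]
    rcases (Nat.dvd_prime hp).1 ⟨_, this.symm⟩ with h1 | h1
    · exact Or.inl h1
    · right; rw [h1] at this
      exact Nat.eq_of_mul_eq_mul_left hp.pos (by rw [this, mul_one])

/-- norm on associate classes -/
def anrm (n : ℕ) : Associates (RR n) →* ℕ where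
  toFun := Quotient.lift (fun α : RR n => (norm α).natAbs) (by
    intro a b hab
    obtain ⟨u, hu⟩ := hab
    rw [← hu, map_mul, Int.natAbs_mul, RR_unit_iff.1 u.isUnit, mul_one])
  map_one' := by
    change (norm (1 : RR n)).natAbs = 1
    simp
  map_mul' := by
    intro a b
    induction a using Quotient.inductionOn with | _ a => ?_
    induction b using Quotient.inductionOn with | _ b => ?_
    change (norm (a * b)).natAbs = (norm a).natAbs * (norm b).natAbs
    rw [map_mul, Int.natAbs_mul]

lemma anrm_mk {n : ℕ} (α : RR n) : anrm n (Associates.mk α) = (norm α).natAbs := rfl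
end

end

section

noncomputable section
open QuadraticAlgebra (norm)

/-- divisor sum of the character -/
def sdiv (D N : ℕ) : ℤ := ∑ d ∈ N.divisors, jacobiSym d D

lemma sdiv_rec (D : ℕ) {p M : ℕ} (hp : p.Prime) (hM : 1 ≤ M) :
    sdiv D (p * M) + (if p ∣ M then jacobiSym p D * sdiv D (M / p) else 0) =
      (1 + jacobiSym p D) * sdiv D M := by
  have hinj : Function.Injective (fun d : ℕ => p * d) := fun a b h => Nat.eq_of_mul_eq_mul_left hp.pos h
  have hsum : ∀ K : ℕ, ∑ d ∈ K.divisors.image (fun d => p * d), jacobiSym d D = jacobiSym p D * sdiv D K := by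
    intro K
    rw [Finset.sum_image (fun a _ b _ h => hinj h), sdiv, Finset.mul_sum]
    refine Finset.sum_congr rfl fun d _ => ?_
    push_cast
    rw [jacobiSym.mul_left]
  have hpM : p * M ≠ 0 := mul_ne_zero hp.ne_zero (by omega)
  have hu : (p * M).divisors = M.divisors ∪ M.divisors.image (fun d => p * d) := by
    ext d
    simp only [Finset.mem_union, Nat.mem_divisors, Finset.mem_image]
    constructor
    · rintro ⟨h, -⟩
      by_cases hd : p ∣ d
      · obtain ⟨e, rfl⟩ := hd
        exact Or.inr ⟨e, ⟨Nat.dvd_of_mul_dvd_mul_left hp.pos h, by omega⟩, rfl⟩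
      · left
        exact ⟨Nat.Coprime.dvd_of_dvd_mul_left ((Nat.Prime.coprime_iff_not_dvd hp).2 hd).symm h, by omega⟩
    · rintro (⟨h, -⟩ | ⟨e, ⟨h, -⟩, rfl⟩)
      · exact ⟨h.mul_left p, hpM⟩
      · exact ⟨Nat.mul_dvd_mul_left p h, hpM⟩
  have hi : ∑ d ∈ M.divisors ∩ M.divisors.image (fun d => p * d), jacobiSym d D =
      if p ∣ M then jacobiSym p D * sdiv D (M / p) else 0 := by
    split_ifs with h
    · obtain ⟨K, rfl⟩ := h
      rw [Nat.mul_div_cancel_left _ hp.pos, ← hsum]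
      congr 1
      ext d
      simp only [Finset.mem_inter, Nat.mem_divisors, Finset.mem_image]
      constructor
      · rintro ⟨⟨h, h0⟩, e, -, rfl⟩
        exact ⟨e, ⟨Nat.dvd_of_mul_dvd_mul_left hp.pos h, by rintro rfl; simp at h0⟩, rfl⟩
      · rintro ⟨e, ⟨h, h0⟩, rfl⟩
        exact ⟨⟨Nat.mul_dvd_mul_left p h, by omega⟩, e, ⟨h.mul_left p, by omega⟩, rfl⟩
    · apply Finset.sum_eq_zero
      intro d hd
      exfalso
      simp only [Finset.mem_inter, Nat.mem_divisors, Finset.mem_image] at hd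
      obtain ⟨⟨h1, -⟩, e, -, rfl⟩ := hd
      exact h ((Dvd.intro _ rfl).trans h1)
  rw [← hi, sdiv, hu, Finset.sum_union_inter, hsum]
  rw [sdiv]; ring

/-- classes of norm `N` -/
def AA (n N : ℕ) : Set (Associates (RR n)) := {c | anrm n c = N}

/-- the parametrization by the fundamental domain -/
def pmap (n : ℕ) (q : ℕ × ℕ) : Associates (RR n) := Associates.mk (⟨(q.1:ℤ), (q.2:ℤ)⟩ : RR n)

/-- points in the fundamental domain -/
def PP (n N : ℕ) : Set (ℕ × ℕ) := {q | q.2 < n * q.1 ∧ Qf n q.1 q.2 = N}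

lemma PP_finite (n N : ℕ) : (PP n N).Finite := by
  apply ((Set.finite_Iic N).prod (Set.finite_Iic (n * N))).subset
  rintro ⟨x, y⟩ ⟨h1, h2⟩
  simp only at h1 h2
  have hd : domP n x y := ⟨by positivity, by exact_mod_cast h1⟩
  have := dom_Qpos hd
  rw [h2] at this
  have hx : x ≤ N := by
    have : x ^ 2 ≤ N := by exact_mod_cast this
    nlinarith
  exact ⟨hx, (h1.le).trans (Nat.mul_le_mul_left _ hx)⟩

lemma pmap_inj (n N : ℕ) : Set.InjOn (pmap n) (PP n N) := by
  rintro ⟨x, y⟩ ⟨h1, -⟩ ⟨z, w⟩ ⟨h2, -⟩ h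
  simp only at h1 h2
  have := dom_unique (n := n) (x := x) (y := y) (z := z) (w := w) ⟨by positivity, by exact_mod_cast h1⟩
    ⟨by positivity, by exact_mod_cast h2⟩ (Associates.mk_eq_mk_iff_associated.1 h)
  ext <;> simp <;> omega

lemma pmap_image {n : ℕ} (hn : 0 < n) {N : ℕ} (hN : 1 ≤ N) : pmap n '' (PP n N) = AA n N := by
  ext c
  constructor
  · rintro ⟨⟨x, y⟩, ⟨h1, h2⟩, rfl⟩
    simp only at h1 h2
    simp only [AA, pmap, Set.mem_setOf_eq, anrm_mk, RR_norm, h2]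
    simp
  · intro hc
    induction c using Quotient.inductionOn with | _ α => ?_
    change (norm α).natAbs = N at hc
    have h0 : α ≠ 0 := by rintro rfl; simp at hc; omega
    obtain ⟨z, w, hd, ha⟩ := exists_dom hn h0
    have hz := dom_pos hd
    have hw := hd.1
    lift z to ℕ using hz.le
    lift w to ℕ using hw
    refine ⟨(z, w), ⟨by exact_mod_cast hd.2, ?_⟩, (Associates.mk_eq_mk_iff_associated.2 ha).symm⟩
    simp only
    have h1 := dom_Qpos hd
    have : (Qf n z w).natAbs = N := by
      obtain ⟨u, rfl⟩ := ha.symm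
      rwa [map_mul, Int.natAbs_mul, RR_unit_iff.1 u.isUnit, mul_one, RR_norm] at hc
    have h3 : 0 ≤ Qf n z w := le_trans (by positivity) h1
    omega

lemma AA_finite {n : ℕ} (hn : 0 < n) {N : ℕ} (hN : 1 ≤ N) : (AA n N).Finite := by
  rw [← pmap_image hn hN]; exact (PP_finite n N).image _

lemma PP_card {n : ℕ} (hn : 0 < n) {N : ℕ} (hN : 1 ≤ N) : (PP n N).ncard = (AA n N).ncard := by
  rw [← pmap_image hn hN, Set.ncard_image_of_injOn (pmap_inj n N)]

lemma AA_one (n : ℕ) : AA n 1 = {1} := by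
  ext c
  induction c using Quotient.inductionOn with | _ α => ?_
  change (norm α).natAbs = 1 ↔ Associates.mk α = 1
  rw [← RR_unit_iff, Associates.mk_eq_one]
end

end

section

noncomputable section
open QuadraticAlgebra (norm)

lemma inert_of_two {n : ℕ} (hn : Odd n) : inertP n 2 := by
  intro x y h
  obtain ⟨k, rfl⟩ := hn
  unfold Qf at h
  push_cast at h ⊢
  have hx := Int.emod_emod_of_dvd x (dvd_refl 2)
  rcases Int.even_or_odd x with ⟨a, ha⟩ | ⟨a, ha⟩ <;> rcases Int.even_or_odd y with ⟨b, hb⟩ | ⟨b, hb⟩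
  · exact ⟨⟨a, by omega⟩, ⟨b, by omega⟩⟩
  · exfalso
    subst ha hb
    obtain ⟨c, hc⟩ := h
    ring_nf at hc; omega
  · exfalso
    subst ha hb
    obtain ⟨c, hc⟩ := h
    ring_nf at hc; omega
  · exfalso
    subst ha hb
    obtain ⟨c, hc⟩ := h
    ring_nf at hc; omega

lemma jac_two {n : ℕ} (hn : Odd n) : jacobiSym (2:ℕ) (n^2+4) = -1 := by
  obtain ⟨k, rfl⟩ := hn
  have h5 : ((2 * k + 1) ^ 2 + 4) % 8 = 5 := by
    have : (2 * k + 1) ^ 2 + 4 = 4 * (k * (k + 1)) + 5 := by ring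
    obtain ⟨m, hm⟩ := Nat.even_mul_succ_self k
    rw [this, hm]; omega
  rw [Nat.cast_ofNat, jacobiSym.at_two (by rw [Nat.odd_iff]; omega), ZMod.χ₈_nat_mod_eight, h5]
  rfl

lemma jac_leg {n : ℕ} (hn : Odd n) {p : ℕ} [Fact p.Prime] (h2 : p ≠ 2) :
    jacobiSym p (n^2+4) = legendreSym p ((n:ℤ)^2+4) := by
  have hp : Odd p := (Fact.out : p.Prime).odd_of_ne_two h2
  obtain ⟨k, rfl⟩ := hn
  rw [jacobiSym.legendreSym.to_jacobiSym]
  have := jacobiSym.quadratic_reciprocity_one_mod_four (a := (2*k+1)^2+4) (b := p) (by ring_nf; omega) hp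
  rw [← this]; push_cast; rfl

lemma four_Qf (n : ℕ) (x y : ℤ) : 4 * Qf n x y = (2 * x + n * y) ^ 2 - ((n:ℤ)^2 + 4) * y ^ 2 := by
  unfold Qf; ring

lemma odd_dvd {p : ℕ} (hp : p.Prime) (h2 : p ≠ 2) {x : ℤ} (h : (p:ℤ) ∣ 2 * x) : (p:ℤ) ∣ x := by
  rcases (Nat.prime_iff_prime_int.1 hp).dvd_or_dvd h with h | h
  · exfalso
    have : p ∣ 2 := by exact_mod_cast h
    exact h2 ((Nat.prime_dvd_prime_iff_eq hp Nat.prime_two).1 this)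
  · exact h

lemma inert_of_jac {n : ℕ} (hn : Odd n) {p : ℕ} (hp : p.Prime) (h : jacobiSym p (n^2+4) = -1) :
    inertP n p := by
  by_cases h2 : p = 2
  · subst h2; exact inert_of_two hn
  have := Fact.mk hp
  rw [jac_leg hn h2] at h
  intro x y hxy
  have h4 : (p:ℤ) ∣ (2 * x + n * y) ^ 2 - ((n:ℤ)^2 + 4) * y ^ 2 := by
    rw [← four_Qf]; exact hxy.mul_left 4
  obtain ⟨h5, h6⟩ := legendreSym.prime_dvd_of_eq_neg_one h h4
  refine ⟨odd_dvd hp h2 ?_, h6⟩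
  exact (Int.dvd_add_left (h6.mul_left _)).1 h5

lemma jac_of_inert {n : ℕ} (hn : Odd n) {p : ℕ} (hp : p.Prime) (h : inertP n p) :
    jacobiSym p (n^2+4) = -1 := by
  by_cases h2 : p = 2
  · subst h2; exact jac_two hn
  have := Fact.mk hp
  rw [jac_leg hn h2, legendreSym.eq_neg_one_iff]
  rintro ⟨t, ht⟩
  have h20 : (2 : ZMod p) ≠ 0 := by
    intro h0
    have : ((2:ℕ) : ZMod p) = 0 := by exact_mod_cast h0
    rw [ZMod.natCast_eq_zero_iff] at this
    exact h2 ((Nat.prime_dvd_prime_iff_eq hp Nat.prime_two).1 this)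
  obtain ⟨x, hx⟩ := ZMod.intCast_surjective ((t - n) / 2 : ZMod p)
  have hQ : (p:ℤ) ∣ Qf n x 1 := by
    rw [← ZMod.intCast_zmod_eq_zero_iff_dvd]
    unfold Qf
    push_cast at ht ⊢
    rw [hx]
    field_simp
    linear_combination -ht
  have := (h x 1 hQ).2
  have : p ∣ 1 := by exact_mod_cast this
  exact hp.one_lt.ne' (Nat.dvd_one.1 this)

lemma Qf_star {n : ℕ} (α : RR n) : norm (star α) = norm α := by simp

lemma add_star_eq {n : ℕ} (α : RR n) : α + star α = ((2 * α.re + n * α.im : ℤ) : RR n) := by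
  generalize hm : (2 * α.re + n * α.im : ℤ) = m
  ext
  · simp; rw [← hm]; ring
  · simp

lemma jac_ram {n : ℕ} (hn : Odd n) [IsDomain (RR n)] [IsPrincipalIdealRing (RR n)]
    {p : ℕ} (hp : p.Prime) {π : RR n} (hπ : (norm π).natAbs = p) :
    (Associated π (star π) ∧ jacobiSym p (n^2+4) = 0) ∨
    (¬ Associated π (star π) ∧ jacobiSym p (n^2+4) = 1) := by
  have hni : ¬ inertP n p := by
    intro h
    obtain ⟨h1, h2⟩ := h π.re π.im (by rw [← RR_norm, ← hπ]; simp)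
    have h3 : (p:ℤ) ^ 2 ∣ Qf n π.re π.im := by
      obtain ⟨a, ha⟩ := h1
      obtain ⟨b, hb⟩ := h2
      rw [ha, hb]; exact ⟨Qf n a b, by unfold Qf; ring⟩
    rw [← RR_norm, ← Int.dvd_natAbs, hπ] at h3
    have : p ^ 2 ∣ p := by exact_mod_cast h3
    have := Nat.le_of_dvd hp.pos this
    nlinarith [hp.two_le]
  have h2 : p ≠ 2 := by rintro rfl; exact hni (inert_of_two hn)
  have := Fact.mk hp
  have hpp := Nat.prime_iff_prime_int.1 hp
  have hpN : (p:ℤ) ∣ norm π := by rw [← hπ]; simp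
  have hN4 : (p:ℤ) ∣ (2 * π.re + n * π.im) ^ 2 - ((n:ℤ)^2 + 4) * π.im ^ 2 := by
    rw [← four_Qf, ← RR_norm]; exact hpN.mul_left 4
  have hπd : ∀ m : ℤ, π ∣ (m : RR n) → (p:ℤ) ∣ m := by
    rintro m ⟨b, hb⟩
    have : norm (m : RR n) = norm π * norm b := by rw [hb, map_mul]
    rw [QuadraticAlgebra.norm_intCast, Int.cast_id] at this
    apply hpp.dvd_of_dvd_pow (n := 2)
    rw [this]; exact hpN.mul_right _
  have hπp : π ∣ ((p:ℤ) : RR n) := by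
    have : π ∣ ((norm π : ℤ) : RR n) := by rw [RR_norm_mul_star]; exact Dvd.intro _ rfl
    refine this.trans (Int.cast_dvd_cast _ _ ?_)
    rw [← hπ]; simp
  have key : Associated π (star π) ↔ (p:ℤ) ∣ (n:ℤ)^2+4 := by
    constructor
    · intro h
      have h1 : π ∣ π + star π := dvd_add (dvd_refl _) h.dvd
      rw [add_star_eq] at h1
      have h1 := hπd _ h1
      have h3 : (p:ℤ) ∣ ((n:ℤ)^2 + 4) * π.im ^ 2 := by
        have := dvd_sub (dvd_pow h1 two_ne_zero) hN4
        simpa using this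
      rcases hpp.dvd_or_dvd h3 with h | h
      · exact h
      · exfalso
        have h := hpp.dvd_of_dvd_pow h
        have h5 := odd_dvd hp h2 ((Int.dvd_add_left (h.mul_left _)).1 h1)
        obtain ⟨a, ha⟩ := h5
        obtain ⟨b, hb⟩ := h
        have h3 : (p:ℤ) ^ 2 ∣ Qf n π.re π.im := by
          rw [ha, hb]; exact ⟨Qf n a b, by unfold Qf; ring⟩
        rw [← RR_norm, ← Int.dvd_natAbs, hπ] at h3
        have : p ^ 2 ∣ p := by exact_mod_cast h3
        have := Nat.le_of_dvd hp.pos this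
        nlinarith [hp.two_le]
    · intro h
      have h1 : (p:ℤ) ∣ (2 * π.re + n * π.im) ^ 2 := by
        have := dvd_add hN4 (h.mul_right (π.im ^ 2))
        simpa using this
      have h1 := hpp.dvd_of_dvd_pow h1
      have h3 : π ∣ π + star π := by
        rw [add_star_eq]; exact hπp.trans (Int.cast_dvd_cast _ _ h1)
      have h4 : π ∣ star π := by
        have := dvd_sub h3 (dvd_refl π)
        simpa using this
      exact ((prime_of_norm hp hπ).irreducible.dvd_irreducible_iff_associated
        (prime_of_norm hp (by rw [Qf_star, hπ])).irreducible).1 h4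
  have hm1 : jacobiSym p (n^2+4) ≠ -1 := fun h => hni (inert_of_jac hn hp h)
  rw [key]
  rw [jac_leg hn h2] at hm1 ⊢
  have h0 : legendreSym p ((n:ℤ)^2+4) = 0 ↔ (p:ℤ) ∣ (n:ℤ)^2+4 := by
    rw [legendreSym.eq_zero_iff, ZMod.intCast_zmod_eq_zero_iff_dvd]
  rw [← h0]
  by_cases hz : legendreSym p ((n:ℤ)^2+4) = 0
  · exact Or.inl ⟨hz, hz⟩
  · right
    refine ⟨hz, ?_⟩
    rcases legendreSym.eq_one_or_neg_one p (a := (n:ℤ)^2+4) (by rwa [ne_eq, ← legendreSym.eq_zero_iff]) with h | h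
    · exact h
    · exact absurd h hm1
end

end

section

noncomputable section
open QuadraticAlgebra (norm)

lemma amul_inj {n : ℕ} [IsDomain (RR n)] {q : RR n} (hq : q ≠ 0) :
    Function.Injective (fun c : Associates (RR n) => Associates.mk q * c) := by
  intro a b h
  exact mul_left_cancel₀ (Associates.mk_ne_zero.2 hq) h

lemma ne_zero_of_norm {n : ℕ} {p : ℕ} (hp : p.Prime) {π : RR n} (h : (norm π).natAbs = p) : π ≠ 0 := by
  rintro rfl; simp at h; exact hp.ne_zero h.symm

lemma norm_p {n p : ℕ} : (norm ((p:ℤ) : RR n)).natAbs = p ^ 2 := by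
  rw [QuadraticAlgebra.norm_intCast]; simp [Int.natAbs_pow]

lemma p_mul_AA {n p M : ℕ} (hp : p.Prime) (c : Associates (RR n))
    (h : anrm n (Associates.mk ((p:ℤ) : RR n) * c) = p * M) : p ∣ M ∧ c ∈ AA n (M / p) := by
  rw [map_mul, anrm_mk, norm_p] at h
  have h2 : p * anrm n c = M := Nat.eq_of_mul_eq_mul_left hp.pos (by rw [← h]; ring)
  refine ⟨⟨_, h2.symm⟩, ?_⟩
  change anrm n c = M / p
  rw [← h2, Nat.mul_div_cancel_left _ hp.pos]

lemma p_mul_AA' {n p M : ℕ} (hp : p.Prime) (c : Associates (RR n)) (hpM : p ∣ M)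
    (h : c ∈ AA n (M / p)) : anrm n (Associates.mk ((p:ℤ) : RR n) * c) = p * M := by
  obtain ⟨K, rfl⟩ := hpM
  rw [Nat.mul_div_cancel_left _ hp.pos] at h
  change anrm n c = K at h
  rw [map_mul, anrm_mk, norm_p, h]; ring

lemma AA_rec {n : ℕ} (hn : Odd n) [IsDomain (RR n)] [IsPrincipalIdealRing (RR n)]
    {p M : ℕ} (hp : p.Prime) (hM : 1 ≤ M) :
    ((AA n (p * M)).ncard : ℤ) +
      (if p ∣ M then jacobiSym p (n^2+4) * ((AA n (M / p)).ncard : ℤ) else 0) =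
      (1 + jacobiSym p (n^2+4)) * ((AA n M).ncard : ℤ) := by
  have hn0 : 0 < n := hn.pos
  have hp0 : ((p:ℤ) : RR n) ≠ 0 := by
    intro h
    have := norm_p (n := n) (p := p)
    rw [h] at this
    simp at this
    exact hp.ne_zero (pow_eq_zero_iff two_ne_zero |>.1 this.symm)
  have hpM : 1 ≤ p * M := Nat.mul_pos hp.pos hM
  by_cases hin : inertP n p
  · rw [jac_of_inert hn hp hin]
    have himg : ∀ c ∈ AA n (p * M), ∃ d, Associates.mk ((p:ℤ) : RR n) * d = c := by
      intro c hc
      induction c using Quotient.inductionOn with | _ α => ?_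
      change (norm α).natAbs = p * M at hc
      have hd : (p:ℤ) ∣ Qf n α.re α.im := by
        rw [← RR_norm, ← Int.dvd_natAbs, hc]; push_cast; exact Dvd.intro _ rfl
      obtain ⟨β, rfl⟩ := RR_int_dvd.2 (hin _ _ hd)
      exact ⟨Associates.mk β, rfl⟩
    split_ifs with hd
    · have : AA n (p * M) = (fun c => Associates.mk ((p:ℤ) : RR n) * c) '' AA n (M / p) := by
        ext c
        constructor
        · intro hc
          obtain ⟨d, rfl⟩ := himg c hc
          exact ⟨d, (p_mul_AA hp d hc).2, rfl⟩
        · rintro ⟨d, h, rfl⟩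
          exact p_mul_AA' hp d hd h
      rw [this, Set.ncard_image_of_injective _ (amul_inj hp0)]
      ring
    · have : AA n (p * M) = ∅ := by
        rw [Set.eq_empty_iff_forall_notMem]
        intro c hc
        obtain ⟨d, rfl⟩ := himg c hc
        exact hd (p_mul_AA hp d hc).1
      rw [this]; simp
  · obtain ⟨π, hπ⟩ := exists_norm_prime hn0 hp hin
    have hπ' : (norm (star π)).natAbs = p := by rw [Qf_star, hπ]
    have pπ := prime_of_norm hp hπ
    have pπ' := prime_of_norm hp hπ'
    have hsub : ∀ ρ : RR n, (norm ρ).natAbs = p → ∀ c ∈ AA n M, Associates.mk ρ * c ∈ AA n (p * M) := by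
      intro ρ hρ c hc
      change anrm n c = M at hc
      change anrm n _ = p * M
      rw [map_mul, anrm_mk, hρ, hc]
    have hsub' : ∀ ρ : RR n, (norm ρ).natAbs = p → ∀ c, Associates.mk ρ * c ∈ AA n (p * M) → c ∈ AA n M := by
      intro ρ hρ c hc
      change anrm n _ = p * M at hc
      rw [map_mul, anrm_mk, hρ] at hc
      exact Nat.eq_of_mul_eq_mul_left hp.pos hc
    have hAss : Associated (π * star π) ((p:ℤ) : RR n) := by
      rw [← RR_norm_mul_star]
      rcases Int.natAbs_eq (norm π) with h | h
      · rw [h, hπ]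
      · rw [h, hπ, Int.cast_neg]; exact (Associated.refl _).neg_left
    have hmk : Associates.mk π * Associates.mk (star π) = Associates.mk ((p:ℤ) : RR n) := by
      rw [Associates.mk_mul_mk]; exact Associates.mk_eq_mk_iff_associated.2 hAss
    have hun : AA n (p * M) = (fun c => Associates.mk π * c) '' AA n M ∪
        (fun c => Associates.mk (star π) * c) '' AA n M := by
      ext c
      constructor
      · intro hc
        induction c using Quotient.inductionOn with | _ α => ?_
        have hc' : (norm α).natAbs = p * M := hc
        have h1 : π ∣ α * star α := by
          have h2 : π ∣ ((norm α : ℤ) : RR n) := by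
            have h3 : π ∣ ((p:ℤ) : RR n) := (Dvd.intro _ rfl).trans hAss.dvd
            refine h3.trans (Int.cast_dvd_cast _ _ ?_)
            rw [← Int.dvd_natAbs, hc']; push_cast; exact Dvd.intro _ rfl
          rwa [RR_norm_mul_star] at h2
        rcases pπ.dvd_or_dvd h1 with ⟨β, rfl⟩ | ⟨β, hβ⟩
        · exact Or.inl ⟨Associates.mk β, hsub' π hπ _ hc, rfl⟩
        · have : α = star π * star β := by
            rw [← star_star α, hβ, star_mul, mul_comm]
          subst this
          exact Or.inr ⟨Associates.mk (star β), hsub' _ hπ' _ hc, rfl⟩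
      · rintro (⟨d, hd, rfl⟩ | ⟨d, hd, rfl⟩)
        · exact hsub π hπ d hd
        · exact hsub _ hπ' d hd
    rcases jac_ram hn hp hπ with ⟨ha, hj⟩ | ⟨ha, hj⟩
    · have : Associates.mk (star π) = Associates.mk π := (Associates.mk_eq_mk_iff_associated.2 ha).symm
      rw [this, Set.union_self] at hun
      rw [hun, Set.ncard_image_of_injective _ (amul_inj (ne_zero_of_norm hp hπ)), hj]
      simp
    · have hcard := Set.ncard_union_add_ncard_inter ((fun c => Associates.mk π * c) '' AA n M)
        ((fun c => Associates.mk (star π) * c) '' AA n M) ((AA_finite hn0 hM).image _) ((AA_finite hn0 hM).image _)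
      rw [← hun, Set.ncard_image_of_injective _ (amul_inj (ne_zero_of_norm hp hπ)),
        Set.ncard_image_of_injective _ (amul_inj (ne_zero_of_norm hp hπ'))] at hcard
      have h_integ : ∀ c ∈ ((fun c => Associates.mk π * c) '' AA n M) ∩
          ((fun c => Associates.mk (star π) * c) '' AA n M), ∃ d, Associates.mk ((p:ℤ) : RR n) * d = c := by
        rintro c ⟨⟨a, ha1, rfl⟩, ⟨b, hb1, hb2⟩⟩
        simp only at hb2 ⊢
        have hdv : Associates.mk π ∣ Associates.mk (star π) * b := ⟨a, hb2⟩
        induction b using Quotient.inductionOn with | _ β => ?_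
        change Associates.mk π ∣ Associates.mk (star π * β) at hdv
        rw [Associates.mk_dvd_mk] at hdv
        rcases pπ.dvd_or_dvd hdv with h | ⟨γ, rfl⟩
        · exact absurd ((pπ.irreducible.dvd_irreducible_iff_associated pπ'.irreducible).1 h) ha
        · refine ⟨Associates.mk γ, ?_⟩
          rw [← hmk, ← hb2]
          change _ = Associates.mk (star π) * Associates.mk (π * γ)
          rw [← Associates.mk_mul_mk]
          simp only [mul_comm, mul_left_comm, mul_assoc]
      rw [hj]
      have hi : (((((fun c => Associates.mk π * c) '' AA n M) ∩
          ((fun c => Associates.mk (star π) * c) '' AA n M)).ncard : ℕ) : ℤ) =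
          if p ∣ M then 1 * ((AA n (M / p)).ncard : ℤ) else 0 := by
        split_ifs with hd
        · rw [one_mul, ← Set.ncard_image_of_injective (AA n (M / p)) (amul_inj hp0)]
          congr 2
          ext c
          constructor
          · intro hc
            obtain ⟨d, rfl⟩ := h_integ c hc
            have : Associates.mk ((p:ℤ) : RR n) * d ∈ AA n (p * M) := by rw [hun]; exact Or.inl hc.1
            exact ⟨d, (p_mul_AA hp d this).2, rfl⟩
          · rintro ⟨d, h, rfl⟩
            have h2 : Associates.mk ((p:ℤ) : RR n) * d ∈ AA n (p * M) := p_mul_AA' hp d hd h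
            have e1 : Associates.mk ((p:ℤ) : RR n) * d = Associates.mk π * (Associates.mk (star π) * d) := by
              rw [← hmk, mul_assoc]
            have e2 : Associates.mk ((p:ℤ) : RR n) * d = Associates.mk (star π) * (Associates.mk π * d) := by
              rw [← hmk]; simp only [mul_comm, mul_left_comm, mul_assoc]
            constructor
            · exact ⟨_, hsub' π hπ _ (by rw [← e1]; exact h2), e1.symm⟩
            · exact ⟨_, hsub' _ hπ' _ (by rw [← e2]; exact h2), e2.symm⟩
        · have : ((fun c => Associates.mk π * c) '' AA n M) ∩
              ((fun c => Associates.mk (star π) * c) '' AA n M) = ∅ := by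
            rw [Set.eq_empty_iff_forall_notMem]
            intro c hc
            obtain ⟨d, rfl⟩ := h_integ c hc
            have : Associates.mk ((p:ℤ) : RR n) * d ∈ AA n (p * M) := by rw [hun]; exact Or.inl hc.1
            exact hd (p_mul_AA hp d this).1
          rw [this]; simp
      rw [← hi]
      have := congrArg (Nat.cast : ℕ → ℤ) hcard
      push_cast at this
      linarith

lemma AA_card {n : ℕ} (hn : Odd n) [IsDomain (RR n)] [IsPrincipalIdealRing (RR n)] :
    ∀ N : ℕ, 1 ≤ N → ((AA n N).ncard : ℤ) = sdiv (n^2+4) N := by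
  intro N
  induction N using Nat.strong_induction_on with
  | _ N ih =>
    intro hN
    by_cases h1 : N = 1
    · subst h1; rw [AA_one]; simp [sdiv]
    obtain ⟨p, hp, M, rfl⟩ := Nat.exists_prime_and_dvd h1
    have hM : 1 ≤ M := by
      rcases Nat.eq_zero_or_pos M with h | h
      · simp [h] at hN
      · exact h
    have hlt : M < p * M := by nlinarith [hp.two_le]
    have r1 := AA_rec hn hp hM
    have r2 := sdiv_rec (n^2+4) hp hM
    rw [ih M hlt hM] at r1
    split_ifs at r1 r2 with hd
    · rw [ih (M / p) ((Nat.div_le_self _ _).trans_lt hlt) (Nat.div_pos (Nat.le_of_dvd hM hd) hp.pos)] at r1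
      linarith
    · linarith

lemma count_main {n : ℕ} (hn : Odd n) [IsDomain (RR n)] [IsPrincipalIdealRing (RR n)] (N : ℕ) (hN : 1 ≤ N) :
    (Nat.card {p : ℕ × ℕ // p.2 < n * p.1 ∧ Qf n p.1 p.2 = N} : ℤ) =
      ∑ d ∈ N.divisors, jacobiSym d (n^2+4) := by
  have := AA_card hn N hN
  rw [← PP_card hn.pos hN] at this
  exact this
end

end

section

noncomputable section

lemma inertB_of_inertP {n p : ℕ} (hp : p.Prime) (h : inertP n p) : inertB p n = true := by
  unfold inertB
  rw [allTo_iff]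
  intro x _
  rw [decide_eq_true_iff]
  intro h0
  have h1 : p ∣ x*x+n*x+(p-1) := Nat.dvd_of_mod_eq_zero h0
  have h2 : (p:ℤ) ∣ Qf n x 1 := by
    have : ((p:ℤ)) ∣ ((x*x+n*x+(p-1) : ℕ) : ℤ) := by exact_mod_cast h1
    push_cast [hp.one_le] at this
    have h3 := dvd_sub this (dvd_refl (p:ℤ))
    have e : Qf n x 1 = (x:ℤ) * x + n * x + (p - 1) - p := by unfold Qf; ring
    rw [e]; exact h3
  have h3 := (h x 1 h2).2
  have : p ∣ 1 := by exact_mod_cast h3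
  exact hp.one_lt.ne' (Nat.dvd_one.1 this)

lemma forward {n : ℕ} (hn : 0 < n) [IsDomain (RR n)] [IsPrincipalIdealRing (RR n)] :
    n ∈ [1, 2, 3, 5, 7, 13, 17] := by
  rcases Nat.even_or_odd n with he | ho
  · by_contra hc
    have h2 : 2 < n := by
      by_contra h
      have : n = 2 := by obtain ⟨k, rfl⟩ := he; omega
      subst this; simp at hc
    have := small_inert hn Nat.prime_two h2 1 1 (by
      obtain ⟨k, rfl⟩ := he; unfold Qf; exact ⟨k, by push_cast; ring⟩)
    omega
  · have hin : ∀ p:ℕ, p.Prime → p < n → inertB p n = true := fun p hp hpn =>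
      inertB_of_inertP hp (small_inert hn hp hpn)
    by_cases h : 37 < n
    · exact (no_large ho h hin (fun N hN => count_main ho N hN)).elim
    · by_contra hc
      obtain ⟨p, hp, hpn, hb⟩ := small_n n (by omega) (Nat.odd_iff.1 ho) (by
        intro h; apply hc
        simp at h ⊢; omega)
      have hpp : p.Prime := by
        simp at hp
        rcases hp with rfl | rfl | rfl | rfl | rfl | rfl | rfl | rfl | rfl | rfl <;> norm_num
      rw [hin p hpp hpn] at hb
      exact absurd hb (by simp)
end

end

section

noncomputable section
open QuadraticAlgebra (norm)

/-- the fundamental unit -/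
def epsC (n : ℕ) : ℂ := (((n : ℝ) + Real.sqrt ((n:ℝ)^2+4)) / 2 : ℝ)

lemma epsC_sq (n : ℕ) : epsC n * epsC n = (1:ℤ) • 1 + (n:ℤ) • epsC n := by
  have h : Real.sqrt ((n:ℝ)^2+4) ^ 2 = (n:ℝ)^2+4 := Real.sq_sqrt (by positivity)
  have h1 : ((n : ℝ) + Real.sqrt ((n:ℝ)^2+4)) / 2 * (((n : ℝ) + Real.sqrt ((n:ℝ)^2+4)) / 2) =
      1 + n * (((n : ℝ) + Real.sqrt ((n:ℝ)^2+4)) / 2) := by nlinarith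
  unfold epsC
  rw [← Complex.ofReal_mul, h1]
  simp

/-- embedding of the ring into the complex numbers -/
def phiR (n : ℕ) : RR n →ₐ[ℤ] ℂ := QuadraticAlgebra.lift ⟨epsC n, epsC_sq n⟩

lemma phiR_apply (n : ℕ) (z : RR n) : phiR n z = z.re + z.im * epsC n := by
  simp [phiR]

lemma phiR_inj {n : ℕ} (hn : 0 < n) : Function.Injective (phiR n) := by
  rw [injective_iff_map_eq_zero]
  intro z hz
  by_contra h0
  have h1 := RR_norm_ne hn h0
  have h2 : phiR n ((norm z : ℤ) : RR n) = 0 := by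
    rw [RR_norm_mul_star, map_mul, hz, zero_mul]
  rw [map_intCast] at h2
  exact h1 (by exact_mod_cast h2)

lemma omegaD_eq {n : ℕ} : omegaD ((n:ℤ)^2+4) = epsC n + (((n:ℤ)^2+4-n)/2 : ℤ) := by
  have he : (((((n:ℤ)^2+4-n)/2 : ℤ)) : ℂ) = ((n:ℂ)^2+4-n)/2 := by
    have h2 : (2:ℤ) ∣ (n:ℤ)^2+4-n := by
      have : Even ((n:ℤ) * (n - 1)) := Int.even_mul_pred_self n
      obtain ⟨k, hk⟩ := this
      exact ⟨k + 2, by linarith⟩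
    rw [Int.cast_div h2 (by norm_num)]
    push_cast; rfl
  rw [he]
  unfold omegaD sqrtD epsC
  rw [if_pos (by positivity)]
  push_cast
  ring

lemma phiR_range {n : ℕ} : (phiR n).toRingHom.range = QOrder ((n:ℤ)^2+4) := by
  set k : ℤ := (((n:ℤ)^2+4-n)/2 : ℤ) with hk
  have ho : omegaD ((n:ℤ)^2+4) = epsC n + (k:ℂ) := omegaD_eq
  apply le_antisymm
  · rintro _ ⟨z, rfl⟩
    have hm : omegaD ((n:ℤ)^2+4) ∈ QOrder ((n:ℤ)^2+4) := Subring.subset_closure rfl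
    have he : epsC n ∈ QOrder ((n:ℤ)^2+4) := by
      have : epsC n = omegaD ((n:ℤ)^2+4) - (k:ℂ) := by rw [ho]; ring
      rw [this]
      exact Subring.sub_mem _ hm (intCast_mem _ _)
    change phiR n z ∈ _
    rw [phiR_apply]
    exact Subring.add_mem _ (intCast_mem _ _) (Subring.mul_mem _ (intCast_mem _ _) he)
  · unfold QOrder
    rw [Subring.closure_le]
    rintro _ rfl
    refine ⟨⟨k, 1⟩, ?_⟩
    change phiR n _ = _
    rw [phiR_apply, ho]; simp; ring

/-- the ring isomorphism -/
def equivQ {n : ℕ} (hn : 0 < n) : RR n ≃+* QOrder ((n:ℤ)^2+4) :=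
  (RingEquiv.ofBijective (phiR n).toRingHom.rangeRestrict
    ⟨fun a b h => phiR_inj hn (congrArg Subtype.val h), (phiR n).toRingHom.rangeRestrict_surjective⟩).trans
    (RingEquiv.subringCongr phiR_range)

lemma QOrder_dedekind {n : ℕ} (hn : 0 < n) (hmax : IsMaximalOrder ((n:ℤ)^2+4)) :
    IsDedekindDomain (QOrder ((n:ℤ)^2+4)) := by
  set O := QOrder ((n:ℤ)^2+4) with hO
  have hfin : Module.Finite ℤ O := Module.Finite.equiv (equivQ hn).toAddEquiv.toIntLinearEquiv
  have hnoeth : IsNoetherianRing O := IsNoetherianRing.of_finite ℤ O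
  have h_integ : Algebra.IsIntegral ℤ O := inferInstance
  have hdim : Ring.DimensionLEOne O := by
    refine ⟨fun {p} hp0 hp => ?_⟩
    apply Ideal.isMaximal_of_isIntegral_of_isMaximal_comap (R := ℤ)
    have : (p.comap (algebraMap ℤ O)).IsPrime := Ideal.comap_isPrime _ _
    apply this.isMaximal
    exact Ideal.IsIntegral.comap_ne_bot ℤ hp0
  have hic : IsIntegrallyClosed O := by
    rw [isIntegrallyClosed_iff (FractionRing O)]
    intro x hx
    have hinj : Function.Injective (algebraMap O ℂ) := Subtype.val_injective
    let ψ : FractionRing O →ₐ[O] ℂ := IsFractionRing.liftAlgHom (g := Algebra.ofId O ℂ) hinj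
    have h1 : IsIntegral O (ψ x) := hx.map ψ
    have h2 : IsIntegral ℤ (ψ x) := isIntegral_trans _ h1
    have hle : ∀ a : O, (a : ℂ) ∈ Subfield.closure {omegaD ((n:ℤ)^2+4)} := by
      intro a
      have : QOrder ((n:ℤ)^2+4) ≤ (Subfield.closure {omegaD ((n:ℤ)^2+4)}).toSubring := by
        unfold QOrder; rw [Subring.closure_le]; exact Subfield.subset_closure
      exact this a.2
    have h3 : ψ x ∈ Subfield.closure {omegaD ((n:ℤ)^2+4)} := by
      obtain ⟨a, b, hb, rfl⟩ := IsFractionRing.div_surjective (A := O) x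
      rw [map_div₀, AlgHom.commutes, AlgHom.commutes]
      exact Subfield.div_mem _ (hle a) (hle b)
    have h4 := hmax _ h3 h2
    refine ⟨⟨ψ x, h4⟩, ?_⟩
    apply ψ.toRingHom.injective
    change ψ (algebraMap O _ _) = ψ x
    rw [AlgHom.commutes]; rfl
  exact { toIsDomain := inferInstance, toIsDedekindRing := { } }

lemma class_iff {n : ℕ} (hn : 0 < n) (hmax : IsMaximalOrder ((n:ℤ)^2+4)) :
    classNumber ((n:ℤ)^2+4) = 1 ↔ IsPrincipalIdealRing (RR n) := by
  have := QOrder_dedekind hn hmax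
  have hP : IsPrincipalIdealRing (QOrder ((n:ℤ)^2+4)) ↔ IsPrincipalIdealRing (RR n) :=
    ⟨fun h => IsPrincipalIdealRing.of_surjective (equivQ hn).symm.toRingHom (equivQ hn).symm.surjective,
     fun h => IsPrincipalIdealRing.of_surjective (equivQ hn).toRingHom (equivQ hn).surjective⟩
  rw [← hP]
  unfold classNumber
  constructor
  · intro h
    have hf : Finite (ClassGroup (QOrder ((n:ℤ)^2+4))) := Nat.finite_of_card_ne_zero (by rw [h]; norm_num)
    have := Fintype.ofFinite (ClassGroup (QOrder ((n:ℤ)^2+4)))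
    rw [Nat.card_eq_fintype_card] at h
    exact card_classGroup_eq_one_iff.1 h
  · intro h
    rw [Nat.card_eq_fintype_card]
    exact card_classGroup_eq_one
end

end

section

noncomputable section
open QuadraticAlgebra (norm)

lemma dirichlet_step {n B : ℕ} (hn : 0 < n) (hB : 1 ≤ B) (hBn : n ^ 2 + 4 < 4 * (B + 1) ^ 2)
    (hin : ∀ p : ℕ, p.Prime → p ≤ B → inertP n p) {m : ℤ} (hm : 0 < m) {θ : RR n}
    (hθ : ¬ (m : RR n) ∣ θ) :
    ∃ κ l : RR n, κ * θ - l * (m : RR n) ≠ 0 ∧ |norm (κ * θ - l * (m : RR n))| < m ^ 2 := by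
  have hdom := RR_isDomain hn
  by_cases hA : ∃ x : ℕ, 0 < x ∧ x ≤ B ∧ (m : RR n) ∣ (x:ℤ) * θ
  · classical
    obtain ⟨hx0, hxB, hx⟩ := Nat.find_spec hA
    have hmin := fun y (hy : y < Nat.find hA) => Nat.find_min hA hy
    generalize Nat.find hA = x at *
    have hx1 : x ≠ 1 := by
      rintro rfl; simp at hx; exact hθ hx
    obtain ⟨p, hp, x', rfl⟩ := Nat.exists_prime_and_dvd hx1
    have hx'0 : 0 < x' := Nat.pos_of_mul_pos_left hx0 |> fun h => by
      rcases Nat.eq_zero_or_pos x' with h | h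
      · simp [h] at hx0
      · exact h
    have hlt : x' < p * x' := by nlinarith [hp.two_le]
    have hpB : p ≤ B := le_trans (Nat.le_mul_of_pos_right p hx'0) hxB
    have hnd : ¬ (m : RR n) ∣ (x':ℤ) * θ := fun h => hmin x' hlt ⟨hx'0, by omega, h⟩
    set θ1 : RR n := (x':ℤ) * θ with hθ1
    obtain ⟨γ, hγ⟩ := hx
    have hγ' : ((p:ℤ) : RR n) * θ1 = m * γ := by
      rw [← hγ, hθ1]; push_cast; ring
    have hp0 : ((p:ℤ) : RR n) ≠ 0 := by
      intro h
      have h1 := congrArg QuadraticAlgebra.re h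
      rw [QuadraticAlgebra.re_intCast] at h1
      simp at h1
      exact hp.ne_zero h1
    have hpN : ¬ (p:ℤ) ∣ norm γ := by
      intro h
      rw [RR_norm] at h
      obtain ⟨δ, rfl⟩ := RR_int_dvd.2 (hin p hp hpB _ _ h)
      apply hnd
      refine ⟨δ, mul_left_cancel₀ hp0 ?_⟩
      rw [hγ']; ring
    set K := norm γ with hK
    have e1 : ((p:ℤ) : RR n) * (star γ * θ1) = m * ((K:ℤ) : RR n) := by
      rw [hK, RR_norm_mul_star]; linear_combination (star γ) * hγ'
    refine ⟨star γ * (x':ℤ), ((K / p : ℤ) : RR n), ?_⟩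
    set δ : RR n := star γ * (x':ℤ) * θ - ((K / p : ℤ) : RR n) * m with hδ
    have e2 : ((p:ℤ) : RR n) * δ = ((m * (K % p) : ℤ) : RR n) := by
      have e3 : ((p:ℤ) : RR n) * δ = ((m * (K - p * (K / p)) : ℤ) : RR n) := by
        rw [hδ]
        push_cast at e1 ⊢
        rw [hθ1] at e1
        push_cast at e1
        linear_combination e1
      rw [e3]
      congr 2
      have := Int.emod_add_mul_ediv K p
      linarith
    have e4 : (p:ℤ)^2 * norm δ = (m * (K % p)) ^ 2 := by
      have := congrArg QuadraticAlgebra.norm e2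
      rw [map_mul, QuadraticAlgebra.norm_intCast, QuadraticAlgebra.norm_intCast] at this
      exact this
    have hpp : (0:ℤ) < p := by exact_mod_cast hp.pos
    have r0 : 0 < K % p := lt_of_le_of_ne (Int.emod_nonneg _ hpp.ne')
      (fun h => hpN (Int.dvd_of_emod_eq_zero h.symm))
    have r1 : K % p < p := Int.emod_lt_of_pos _ hpp
    have hpos : 0 < (m * (K % p)) ^ 2 := by positivity
    have hNpos : 0 < norm δ := by
      rw [← e4] at hpos
      exact pos_of_mul_pos_right hpos (by positivity) 
    constructor
    · intro h
      rw [h] at hNpos; simp at hNpos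
    · rw [abs_of_pos hNpos]
      have : (m * (K % p)) ^ 2 < (p:ℤ)^2 * m ^ 2 := by
        rw [mul_pow, mul_comm]
        apply mul_lt_mul_of_pos_right _ (by positivity)
        exact pow_lt_pow_left₀ r1 r0.le (by norm_num)
      rw [← e4] at this
      exact lt_of_mul_lt_mul_left this (by positivity)
  · push Not at hA
    obtain ⟨j, k, hk0, hkB, hjk⟩ := Real.exists_int_int_abs_mul_sub_le ((θ.im : ℝ) / m) (n := B) (by omega)
    lift k to ℕ using hk0.le
    have hnd := hA k (by exact_mod_cast hk0) (by exact_mod_cast hkB)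
    have hmR : (0:ℝ) < m := by exact_mod_cast hm
    set b : ℤ := k * θ.im - j * m with hb
    have hb1 : |b| * (B + 1) ≤ m := by
      have h1 : (|(b:ℝ)|) * (B + 1) ≤ m := by
        have : (b:ℝ) = ((k:ℝ) * (θ.im / m) - j) * m := by
          rw [hb]; push_cast; field_simp
        rw [this, abs_mul, abs_of_pos hmR]
        have hB1 : (0:ℝ) < B + 1 := by positivity
        rw [le_div_iff₀ hB1] at hjk
        push_cast at hjk
        nlinarith
      exact_mod_cast h1
    obtain ⟨i, hi⟩ : ∃ i : ℤ, |2 * (k * θ.re - i * m) + n * b| ≤ m := by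
      set t : ℤ := 2 * (k * θ.re) + n * b with ht
      refine ⟨(t + m) / (2 * m), ?_⟩
      have h1 := Int.emod_add_mul_ediv (t + m) (2 * m)
      have h2 := Int.emod_nonneg (t + m) (show 2 * m ≠ 0 by omega)
      have h3 := Int.emod_lt_of_pos (t + m) (show 0 < 2 * m by omega)
      rw [abs_le]
      constructor <;> linarith
    set a : ℤ := k * θ.re - i * m with ha
    refine ⟨(k:ℤ), ⟨i, j⟩, ?_⟩
    have hel : (((k:ℤ)) : RR n) * θ - ⟨i, j⟩ * (m : RR n) = ⟨a, b⟩ := by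
      have hre : (m : RR n) = ⟨m, 0⟩ := by ext <;> simp
      have hke : (((k:ℤ)) : RR n) = ⟨(k:ℤ), 0⟩ := by
        generalize (k:ℤ) = k'
        ext <;> simp
      rw [hre, hke]
      ext
      · simp [ha]
      · simp [hb]
    constructor
    · intro h
      apply hnd
      exact ⟨⟨i, j⟩, by rw [sub_eq_zero.1 h]; ring⟩
    · rw [hel, RR_norm]
      simp only
      have h4 := four_Qf n a b
      have hc : (2 * a + n * b) ^ 2 ≤ m ^ 2 := sq_le_sq' (by linarith [(abs_le.1 hi).1]) (abs_le.1 hi).2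
      have hd : ((n:ℤ)^2 + 4) * b ^ 2 < 4 * m ^ 2 := by
        have h5 : (|b| * (B + 1)) ^ 2 ≤ m ^ 2 := by
          apply pow_le_pow_left₀ (by positivity) hb1
        rw [mul_pow, sq_abs] at h5
        have h6 : ((n:ℤ)^2 + 4) < 4 * (B + 1) ^ 2 := by exact_mod_cast hBn
        by_cases hb0 : b = 0
        · rw [hb0]; simp; positivity
        · have : 0 < b ^ 2 := by positivity
          nlinarith
      rw [abs_lt]
      constructor <;> nlinarith [sq_nonneg (2 * a + n * b), mul_nonneg (show (0:ℤ) ≤ (n:ℤ)^2 + 4 by positivity) (sq_nonneg b)]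

lemma pid_of {n B : ℕ} (hn : 0 < n) (hB : 1 ≤ B) (hBn : n ^ 2 + 4 < 4 * (B + 1) ^ 2)
    (hin : ∀ p : ℕ, p.Prime → p ≤ B → inertP n p) : IsPrincipalIdealRing (RR n) := by
  have hdom := RR_isDomain hn
  refine ⟨fun I => ?_⟩
  by_cases hI : I = ⊥
  · rw [hI]; exact bot_isPrincipal
  classical
  obtain ⟨β0, hβ0, hβ0'⟩ := Submodule.exists_mem_ne_zero_of_ne_bot hI
  have hex : ∃ k : ℕ, ∃ α ∈ I, α ≠ 0 ∧ (norm α).natAbs = k := ⟨_, β0, hβ0, hβ0', rfl⟩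
  obtain ⟨α, hα, hα0, hαN⟩ := Nat.find_spec hex
  have hmin := fun y (hy : y < Nat.find hex) => Nat.find_min hex hy
  rw [← hαN] at hmin
  refine ⟨α, le_antisymm ?_ ?_⟩
  · intro β hβ
    rw [Ideal.submodule_span_eq, Ideal.mem_span_singleton]
    by_contra hnd
    have hN0 := RR_norm_ne hn hα0
    have hstar : star α ≠ 0 := fun h => hN0 (by rw [← Qf_star, h]; simp)
    set m : ℤ := |norm α| with hmdef
    have hm : 0 < m := abs_pos.2 hN0
    obtain ⟨s, hs⟩ : ∃ s : RR n, (m : RR n) = s * (α * star α) := by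
      rw [← RR_norm_mul_star]
      rcases abs_choice (norm α) with h | h
      · exact ⟨1, by rw [hmdef, h, one_mul]⟩
      · exact ⟨-1, by rw [hmdef, h]; push_cast; ring⟩
    have hθ : ¬ (m : RR n) ∣ β * star α := by
      rintro ⟨δ, hδ⟩
      apply hnd
      refine ⟨s * δ, mul_right_cancel₀ hstar ?_⟩
      rw [hδ, hs]; ring
    obtain ⟨κ, l, h1, h2⟩ := dirichlet_step hn hB hBn hin hm hθ
    have e : κ * (β * star α) - l * m = (κ * β - l * s * α) * star α := by rw [hs]; ring
    rw [e] at h1 h2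
    have hne : κ * β - l * s * α ≠ 0 := left_ne_zero_of_mul h1
    have hmem : κ * β - l * s * α ∈ I := I.sub_mem (I.mul_mem_left _ hβ) (I.mul_mem_left _ hα)
    rw [map_mul, Qf_star, abs_mul, ← hmdef, sq] at h2
    have h3 := lt_of_mul_lt_mul_right h2 hm.le
    apply hmin _ _ ⟨_, hmem, hne, rfl⟩
    rw [hmdef, Int.abs_eq_natAbs, Int.abs_eq_natAbs] at h3
    exact_mod_cast h3
  · rw [Ideal.submodule_span_eq, Ideal.span_singleton_le_iff_mem]; exact hα

lemma backward {n : ℕ} (h : n ∈ [1, 2, 3, 5, 7, 13, 17]) : IsPrincipalIdealRing (RR n) := by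
  have key : ∀ n B : ℕ, 0 < n → 1 ≤ B → n ^ 2 + 4 < 4 * (B + 1) ^ 2 →
      (∀ p : ℕ, p.Prime → p ≤ B → Odd n ∧ jacobiSym p (n^2+4) = -1) → IsPrincipalIdealRing (RR n) :=
    fun n B hn hB hBn H => pid_of hn hB hBn fun p hp hpB => inert_of_jac (H p hp hpB).1 hp (H p hp hpB).2
  simp only [List.mem_cons, List.not_mem_nil, or_false] at h
  rcases h with rfl | rfl | rfl | rfl | rfl | rfl | rfl
  · exact key 1 1 (by norm_num) (by norm_num) (by norm_num) (fun p hp h => by have := hp.two_le; omega)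
  · exact key 2 1 (by norm_num) (by norm_num) (by norm_num) (fun p hp h => by have := hp.two_le; omega)
  · exact key 3 1 (by norm_num) (by norm_num) (by norm_num) (fun p hp h => by have := hp.two_le; omega)
  · refine key 5 2 (by norm_num) (by norm_num) (by norm_num) (fun p hp h => ⟨by decide, ?_⟩)
    interval_cases p <;> first | (exfalso; revert hp; norm_num; done) | norm_num
  · refine key 7 3 (by norm_num) (by norm_num) (by norm_num) (fun p hp h => ⟨by decide, ?_⟩)
    interval_cases p <;> first | (exfalso; revert hp; norm_num; done) | norm_num
  · refine key 13 6 (by norm_num) (by norm_num) (by norm_num) (fun p hp h => ⟨by decide, ?_⟩)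
    interval_cases p <;> first | (exfalso; revert hp; norm_num; done) | norm_num
  · refine key 17 8 (by norm_num) (by norm_num) (by norm_num) (fun p hp h => ⟨by decide, ?_⟩)
    interval_cases p <;> first | (exfalso; revert hp; norm_num; done) | norm_num
end

end

/-- For `n ≥ 1` with `O_{n²+4}` a maximal order, the class number `h_{n²+4}` is `1`
iff `n ∈ {1, 2, 3, 5, 7, 13, 17}`. -/
theorem maximal_add_classNumber_one_iff (n : ℤ) (hn : 1 ≤ n)
    (hmax : IsMaximalOrder (n ^ 2 + 4)) :
    classNumber (n ^ 2 + 4) = 1 ↔ n ∈ ({1, 2, 3, 5, 7, 13, 17} : Set ℤ) := by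
  lift n to ℕ using (by omega)
  have hn0 : 0 < n := by omega
  have := RR_isDomain hn0
  rw [class_iff hn0 hmax]
  have hl : (n:ℤ) ∈ ({1, 2, 3, 5, 7, 13, 17} : Set ℤ) ↔ n ∈ [1, 2, 3, 5, 7, 13, 17] := by
    simp only [Set.mem_insert_iff, Set.mem_singleton_iff, List.mem_cons, List.not_mem_nil, or_false]
    omega
  rw [hl]
  constructor
  · intro h
    exact forward hn0
  · exact backward
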